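/- arXiv:2409.18902 — 3 statements merged into one kernel-verified Lean document; each statement's English description precedes it below -/
import Mathlib

section
/- Let D be a weakly connected directed graph and σ an acyclic, long arc positive circuit signature of D (meaning |σ(C)⁺| ≥ |σ(C)⁻| for every cycle C). Then the simplices {Q̃_T : T ∈ tree(D,σ)} form a dissection of Q̃_D: they have pairwise disjoint interiors and their union is Q̃_D. -/
open Finset Pointwise

noncomputable section

variable {V E ι : Type*}

/-- The vector `x_f ∈ ℝ^V` of an edge `f` with tail `t f` and head `h f`:
`+1` at the head, `-1` at the tail, `0` elsewhere (so `0` for a loop). -/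
def xvec [DecidableEq V] (t h : E → V) (f : E) : V → ℝ :=
  fun v => (if v = h f then 1 else 0) - (if v = t f then 1 else 0)

/-- The extended root polytope of the subgraph with edge set `S`:
`conv({0} ∪ {x_f : f ∈ S})`. -/
def rootPolyOn [DecidableEq V] (t h : E → V) (S : Set E) : Set (V → ℝ) :=
  convexHull ℝ ({0} ∪ (xvec t h '' S))

/-- The underlying (simple) undirected graph of the edges in `S`. -/
def underlyingOn (t h : E → V) (S : Set E) : SimpleGraph V :=
  SimpleGraph.fromRel (fun u v => ∃ f ∈ S, t f = u ∧ h f = v)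

/-- A spanning tree: a set of edges whose underlying graph is connected and which
has `|V| - 1` edges. -/
def IsSpanningTree [Fintype V] (t h : E → V) (T : Finset E) : Prop :=
  (underlyingOn t h ↑T).Connected ∧ T.card + 1 = Fintype.card V

/-- The number of lattice points of the `k`-th dilate of `Q`. -/
def latCount [Fintype ι] (Q : Set (ι → ℝ)) (k : ℕ) : ℕ :=
  Nat.card {p : ι → ℤ // (fun i => (p i : ℝ)) ∈ (k : ℝ) • Q}

/-- The Ehrhart series of `Q` as a formal power series. -/
def ehrSeries [Fintype ι] (Q : Set (ι → ℝ)) : PowerSeries ℤ :=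
  PowerSeries.mk fun k => (latCount Q k : ℤ)

/-- The dimension of a polytope: the rank of its vector span. -/
def pdim (Q : Set (ι → ℝ)) : ℕ := Module.finrank ℝ ↥(vectorSpan ℝ Q)

/-- `p` is the `h^*`-polynomial of `Q`: `(1-t)^{dim Q + 1} · Ehr_Q(t) = p(t)`. -/
def IsHStar [Fintype ι] (Q : Set (ι → ℝ)) (p : Polynomial ℤ) : Prop :=
  (1 - PowerSeries.X) ^ (pdim Q + 1) * ehrSeries Q = PowerSeries.mk fun i => p.coeff i

/-- The `±1` vector of a signed cycle with positive arc `Cp` and negative arc `Cm`. -/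
def chiVec [DecidableEq E] (Cp Cm : Finset E) : E → ℝ :=
  fun f => (if f ∈ Cp then 1 else 0) - (if f ∈ Cm then 1 else 0)

/-- A circulation: an assignment of reals to edges with zero net flow at each vertex. -/
def IsCirculation [Fintype E] [DecidableEq V] (t h : E → V) (φ : E → ℝ) : Prop :=
  ∑ f, φ f • xvec t h f = 0

/-- `(Cp, Cm)` is a signed cycle: the arcs are disjoint, the union is nonempty, the
`±1` vector is a circulation, and the support `Cp ∪ Cm` is minimal among supports of
nonzero circulations (i.e. it is a circuit of the graphic oriented matroid). -/
def IsSignedCycle [Fintype E] [DecidableEq E] [DecidableEq V] (t h : E → V)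
    (Cp Cm : Finset E) : Prop :=
  Disjoint Cp Cm ∧ (Cp ∪ Cm).Nonempty ∧ IsCirculation t h (chiVec Cp Cm) ∧
    ∀ φ : E → ℝ, IsCirculation t h φ → φ ≠ 0 →
      (∀ f, φ f ≠ 0 → f ∈ Cp ∪ Cm) → ∀ f ∈ Cp ∪ Cm, φ f ≠ 0

/-- A circuit signature: a choice, for each cycle, of exactly one of its two
orientations. -/
def IsCircuitSignature [Fintype E] [DecidableEq E] [DecidableEq V] (t h : E → V)
    (σ : Set (Finset E × Finset E)) : Prop :=
  (∀ q ∈ σ, IsSignedCycle t h q.1 q.2) ∧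
    ∀ Cp Cm : Finset E, IsSignedCycle t h Cp Cm → ((Cp, Cm) ∈ σ ↔ (Cm, Cp) ∉ σ)

/-- Acyclicity of a circuit signature: no nontrivial nonnegative combination of the
vectors of the chosen signed cycles vanishes. -/
def IsAcyclicSig [DecidableEq E] (σ : Set (Finset E × Finset E)) : Prop :=
  ∀ (s : Finset (Finset E × Finset E)) (a : Finset E × Finset E → ℝ),
    ↑s ⊆ σ → (∀ q, 0 ≤ a q) → (∃ q ∈ s, a q ≠ 0) →
      ∑ q ∈ s, a q • chiVec q.1 q.2 ≠ 0

/-- A weight function is generic if the two arcs of every cycle have different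
total weights. -/
def GenericWeight [Fintype E] [DecidableEq E] [DecidableEq V] (t h : E → V)
    (w : E → ℝ) : Prop :=
  ∀ Cp Cm : Finset E, IsSignedCycle t h Cp Cm → ∑ f ∈ Cp, w f ≠ ∑ f ∈ Cm, w f

/-- The circuit signature `cir^w`: orient each cycle so that the positive arc has
the larger total `w`-weight. -/
def cirw [Fintype E] [DecidableEq E] [DecidableEq V] (t h : E → V) (w : E → ℝ) :
    Set (Finset E × Finset E) :=
  {q | IsSignedCycle t h q.1 q.2 ∧ ∑ f ∈ q.2, w f < ∑ f ∈ q.1, w f}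

/-- `tree(D,σ)`: spanning trees `T` such that every non-tree edge `f` lies in the
positive arc of the (σ-oriented) fundamental cycle of `f`, i.e. of the unique cycle
contained in `T ∪ {f}`. -/
def treeSet [Fintype V] [Fintype E] [DecidableEq V] [DecidableEq E] (t h : E → V)
    (σ : Set (Finset E × Finset E)) : Set (Finset E) :=
  {T | IsSpanningTree t h T ∧
    ∀ f ∉ T, ∀ Cp Cm : Finset E, (Cp, Cm) ∈ σ → Cp ∪ Cm ⊆ insert f T → f ∈ Cp}

/-- `F` is a face of `Q`: the locus where some linear functional bounded above on `Q`
attains its maximum. -/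
def IsFaceOf (Q F : Set (ι → ℝ)) : Prop :=
  ∃ (l : (ι → ℝ) →ₗ[ℝ] ℝ) (c : ℝ), (∀ y ∈ Q, l y ≤ c) ∧ F = {y ∈ Q | l y = c}

/-- `F` is a facet of `Q`: a face of codimension one. -/
def IsFacetOf (Q F : Set (ι → ℝ)) : Prop :=
  IsFaceOf Q F ∧ pdim F + 1 = pdim Q

end


section Aux

variable {V E : Type*} [Fintype V] [Fintype E] [DecidableEq V] [DecidableEq E]

/-- Paths give `0, ±1` combinations. -/
lemma aux_path (t h : E → V) (T : Set E) {u v : V} (p : (underlyingOn t h T).Walk u v)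
    (hp : p.IsPath) :
    ∃ c : E → ℝ, (∀ e, c e = 0 ∨ c e = 1 ∨ c e = -1) ∧
      (∀ e, c e ≠ 0 → e ∈ T ∧ t e ∈ p.support ∧ h e ∈ p.support) ∧
      ∑ e, c e • xvec t h e = Pi.single v 1 - Pi.single u 1 := by
  induction p with
  | nil => exact ⟨0, by simp, by simp, by simp⟩
  | @cons u u' v hadj p ih =>
    rw [SimpleGraph.Walk.cons_isPath_iff] at hp
    obtain ⟨c, h1, h2, h3⟩ := ih hp.1
    have hu : u ∉ p.support := hp.2
    have hu' : u' ∈ p.support := p.start_mem_support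
    have key : ∀ (f : E) (s : ℝ), f ∈ T → (s = 1 ∨ s = -1) →
        (t f = u ∨ h f = u) → (t f = u ∨ t f = u') → (h f = u ∨ h f = u') →
        s • xvec t h f = Pi.single u' 1 - Pi.single u 1 →
        ∃ c : E → ℝ, (∀ e, c e = 0 ∨ c e = 1 ∨ c e = -1) ∧
          (∀ e, c e ≠ 0 → e ∈ T ∧ t e ∈ (SimpleGraph.Walk.cons hadj p).support ∧
            h e ∈ (SimpleGraph.Walk.cons hadj p).support) ∧
          ∑ e, c e • xvec t h e = Pi.single v 1 - Pi.single u 1 := by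
      intro f s hfT hs hfu ht hh hx
      have hcf : c f = 0 := by
        by_contra hne
        obtain ⟨_, a, b⟩ := h2 f hne
        rcases hfu with r | r
        · exact hu (r ▸ a)
        · exact hu (r ▸ b)
      refine ⟨c + Pi.single f s, ?_, ?_, ?_⟩
      · intro e
        by_cases hef : e = f
        · subst hef
          simp only [Pi.add_apply, Pi.single_eq_same, hcf, zero_add]
          exact Or.inr hs
        · simpa [Pi.single_eq_of_ne hef] using h1 e
      · intro e he
        by_cases hef : e = f
        · subst hef
          refine ⟨hfT, ?_, ?_⟩
          · rcases ht with r | r <;> simp [r, hu']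
          · rcases hh with r | r <;> simp [r, hu']
        · have : c e ≠ 0 := by simpa [Pi.single_eq_of_ne hef] using he
          obtain ⟨a, b, d⟩ := h2 e this
          exact ⟨a, by simp [b], by simp [d]⟩
      · simp only [Pi.add_apply, add_smul, Finset.sum_add_distrib, h3]
        rw [Finset.sum_eq_single f (fun b _ hb => by simp [Pi.single_eq_of_ne hb]) (by simp)]
        rw [Pi.single_eq_same, hx]
        abel
    have hadj' := hadj
    rw [underlyingOn, SimpleGraph.fromRel_adj] at hadj'
    obtain ⟨hne, ⟨f, hf, hft, hfh⟩ | ⟨f, hf, hft, hfh⟩⟩ := hadj'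
    · refine key f 1 hf (Or.inl rfl) (Or.inl hft) (Or.inl hft) (Or.inr hfh) ?_
      ext a
      simp [xvec, hft, hfh, Pi.single_apply]
    · refine key f (-1) hf (Or.inr rfl) (Or.inr hfh) (Or.inr hft) (Or.inl hfh) ?_
      ext a
      simp [xvec, hft, hfh, Pi.single_apply]

lemma aux_conn (t h : E → V) (T : Finset E) (hc : (underlyingOn t h (T : Set E)).Connected)
    (u v : V) :
    ∃ c : E → ℝ, (∀ e, c e = 0 ∨ c e = 1 ∨ c e = -1) ∧ (∀ e, c e ≠ 0 → e ∈ T) ∧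
      ∑ e, c e • xvec t h e = Pi.single v 1 - Pi.single u 1 := by
  obtain ⟨p, hp⟩ := hc.exists_isPath u v
  obtain ⟨c, h1, h2, h3⟩ := aux_path t h _ p hp
  exact ⟨c, h1, fun e he => by simpa using (h2 e he).1, h3⟩

lemma aux_indep (t h : E → V) (T : Finset E) (hT : IsSpanningTree t h T) :
    LinearIndependent ℝ (fun e : T => xvec t h e) := by
  obtain ⟨hc, hcard⟩ := hT
  obtain ⟨v0⟩ := hc.nonempty
  let F : Option T → (V → ℝ) := fun o => o.elim (Pi.single v0 1) (fun e => xvec t h e)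
  have hF : LinearIndependent ℝ F := by
    apply linearIndependent_of_top_le_span_of_card_eq_finrank
    · have hs : ∀ v : V, (Pi.single v 1 : V → ℝ) ∈ Submodule.span ℝ (Set.range F) := by
        intro v
        obtain ⟨c, -, h2, h3⟩ := aux_conn t h T hc v0 v
        have : (Pi.single v 1 : V → ℝ) = ∑ e, c e • xvec t h e + Pi.single v0 1 := by
          rw [h3]; abel
        rw [this]
        refine add_mem (Submodule.sum_mem _ fun e _ => ?_) (Submodule.subset_span ⟨none, rfl⟩)
        by_cases he : c e = 0
        · simp [he]
        · exact Submodule.smul_mem _ _ (Submodule.subset_span ⟨some ⟨e, h2 e he⟩, rfl⟩)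
      intro x _
      rw [pi_eq_sum_univ' x]
      refine Submodule.sum_mem _ fun v _ => Submodule.smul_mem _ _ ?_
      have := hs v
      convert this using 1
    · simp [← hcard]
  exact hF.comp (fun e : T => some e) (Option.some_injective _)

lemma aux_indep' (t h : E → V) (T : Finset E) (hT : IsSpanningTree t h T) (φ : E → ℝ)
    (hφ : IsCirculation t h φ) (hs : ∀ e, φ e ≠ 0 → e ∈ T) : φ = 0 := by
  have hi := Fintype.linearIndependent_iff.1 (aux_indep t h T hT) (fun e => φ e) (by
    have : ∑ e, φ e • xvec t h e = ∑ e ∈ T, φ e • xvec t h e := by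
      symm
      apply Finset.sum_subset (Finset.subset_univ _)
      intro e _ he
      have : φ e = 0 := by
        by_contra hne
        exact he (hs e hne)
      simp [this]
    rw [IsCirculation, this] at hφ
    rw [← hφ]
    exact Finset.sum_coe_sort T (fun e => φ e • xvec t h e))
  ext e
  by_contra hne
  exact hne (hi ⟨e, hs e hne⟩)

/-- Fundamental cycles. -/
lemma aux_fund (t h : E → V) (T : Finset E) (hT : IsSpanningTree t h T) (f : E) (hf : f ∉ T) :
    ∃ Cp Cm : Finset E, IsSignedCycle t h Cp Cm ∧ f ∈ Cp ∧ Cp ∪ Cm ⊆ insert f T := by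
  obtain ⟨c, h1, h2, h3⟩ := aux_conn t h T hT.1 (t f) (h f)
  have hcf : c f = 0 := by
    by_contra hne
    exact hf (h2 f hne)
  set χ : E → ℝ := Pi.single f 1 - c with hχ
  have hχf : χ f = 1 := by simp [hχ, hcf]
  have hχe : ∀ e, e ≠ f → χ e = - c e := by
    intro e he
    simp [hχ, Pi.single_eq_of_ne he]
  have hval : ∀ e, χ e = 0 ∨ χ e = 1 ∨ χ e = -1 := by
    intro e
    by_cases he : e = f
    · subst he; simp [hχf]
    · rw [hχe e he]
      rcases h1 e with r | r | r <;> simp [r]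
  have hsupp : ∀ e, χ e ≠ 0 → e ∈ insert f T := by
    intro e hne
    by_cases he : e = f
    · simp [he]
    · rw [hχe e he] at hne
      exact Finset.mem_insert_of_mem (h2 e (by simpa using hne))
  have hcirc : IsCirculation t h χ := by
    simp only [IsCirculation, hχ, Pi.sub_apply, sub_smul, Finset.sum_sub_distrib, h3]
    rw [Finset.sum_eq_single f (fun b _ hb => by simp [Pi.single_eq_of_ne hb]) (by simp)]
    ext a
    simp [xvec, Pi.single_apply]
  have hchi : chiVec (univ.filter fun e => χ e = 1) (univ.filter fun e => χ e = -1) = χ := by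
    ext e
    simp only [chiVec, Finset.mem_filter, Finset.mem_univ, true_and]
    rcases hval e with r | r | r <;> rw [r] <;> norm_num
  have hun : ∀ e, e ∈ (univ.filter fun e => χ e = 1) ∪ (univ.filter fun e => χ e = -1) ↔
      χ e ≠ 0 := by
    intro e
    simp only [Finset.mem_union, Finset.mem_filter, Finset.mem_univ, true_and]
    rcases hval e with r | r | r <;> rw [r] <;> norm_num
  refine ⟨univ.filter fun e => χ e = 1, univ.filter fun e => χ e = -1, ⟨?_, ?_, ?_, ?_⟩, ?_, ?_⟩
  · rw [Finset.disjoint_left]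
    intro e
    simp only [Finset.mem_filter, Finset.mem_univ, true_and]
    intro r
    rw [r]; norm_num
  · exact ⟨f, (hun f).2 (by rw [hχf]; norm_num)⟩
  · rw [hchi]; exact hcirc
  · intro φ hφ hφ0 hφs e he
    have he' := (hun e).1 he
    have hz : φ - φ f • χ = 0 := by
      apply aux_indep' t h T hT
      · simp only [IsCirculation, Pi.sub_apply, Pi.smul_apply, sub_smul, smul_eq_mul, mul_smul,
          Finset.sum_sub_distrib, ← Finset.smul_sum] at *
        rw [hφ, hcirc]; simp
      · intro g hg
        by_cases hgf : g = f
        · subst hgf; simp [hχf] at hg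
        · have : χ g ≠ 0 := by
            intro h0
            have : φ g ≠ 0 := by simpa [h0] using hg
            exact (hun g).1 (hφs g this) h0
          simpa [hgf] using hsupp g this
    have hz' : φ = φ f • χ := sub_eq_zero.1 hz
    have hf0 : φ f ≠ 0 := by
      intro h0
      rw [h0, zero_smul] at hz'
      exact hφ0 hz'
    rw [hz']
    simpa using ⟨hf0, he'⟩
  · simpa using hχf
  · intro e he
    exact hsupp e ((hun e).1 he)

lemma aux_circ_symm (t h : E → V) (Cp Cm : Finset E) (hC : IsSignedCycle t h Cp Cm) :
    IsSignedCycle t h Cm Cp := by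
  obtain ⟨a, b, c, d⟩ := hC
  refine ⟨a.symm, by rwa [Finset.union_comm], ?_, by rwa [Finset.union_comm]⟩
  have : chiVec Cm Cp = - chiVec Cp Cm := by
    ext e; simp [chiVec]
  rw [this]
  simp only [IsCirculation, Pi.neg_apply, neg_smul, Finset.sum_neg_distrib] at *
  rw [c, neg_zero]

/-- Gordan: an acyclic signature is induced by a weight. -/
lemma aux_weight (σ : Set (Finset E × Finset E)) (hac : IsAcyclicSig σ) :
    ∃ w : E → ℝ, ∀ q ∈ σ, 0 < ∑ e, w e * chiVec q.1 q.2 e := by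
  classical
  let s : Finset (Finset E × Finset E) := σ.toFinite.toFinset
  have hs : (s : Set _) = σ := by simp [s]
  let P : Finset (E → ℝ) := s.image (fun q => chiVec q.1 q.2)
  have h0 : (0 : E → ℝ) ∉ convexHull ℝ ((fun q : Finset E × Finset E => chiVec q.1 q.2) '' σ) := by
    intro hmem
    rw [← hs, ← Finset.coe_image] at hmem
    rw [Finset.coe_image] at hmem
    obtain ⟨a, ha0, ha1, ha⟩ : ∃ a : Finset E × Finset E → ℝ, (∀ q, 0 ≤ a q) ∧
        ∑ q ∈ s, a q = 1 ∧ ∑ q ∈ s, a q • chiVec q.1 q.2 = 0 := by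
      have hsub : convexHull ℝ ((fun q : Finset E × Finset E => chiVec q.1 q.2) '' (s : Set _)) ⊆
          {x | ∃ a : Finset E × Finset E → ℝ, (∀ q, 0 ≤ a q) ∧
            ∑ q ∈ s, a q = 1 ∧ ∑ q ∈ s, a q • chiVec q.1 q.2 = x} := by
        apply convexHull_min
        · rintro _ ⟨q, hq, rfl⟩
          refine ⟨Pi.single q 1, ?_, ?_, ?_⟩
          · intro r
            by_cases hr : r = q
            · subst hr; simp
            · simp [Pi.single_eq_of_ne hr]
          · rw [Finset.sum_pi_single']; simp only [Finset.mem_coe] at hq; simp [hq]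
          · rw [Finset.sum_eq_single q (fun b _ hb => by simp [Pi.single_eq_of_ne hb])
              (fun hh => absurd hq hh)]
            simp
        · rintro x ⟨a, a0, a1, rfl⟩ y ⟨b, b0, b1, rfl⟩ c d hc hd hcd
          refine ⟨c • a + d • b, ?_, ?_, ?_⟩
          · intro q
            have := a0 q
            have := b0 q
            simp only [Pi.add_apply, Pi.smul_apply, smul_eq_mul]
            positivity
          · simp [Finset.sum_add_distrib, ← Finset.mul_sum, a1, b1, hcd]
          · simp [add_smul, Finset.sum_add_distrib, mul_smul, ← Finset.smul_sum]
      exact hsub hmem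
    refine hac s a hs.le ha0 ?_ ha
    by_contra hcon
    push Not at hcon
    rw [Finset.sum_eq_zero hcon] at ha1
    exact zero_ne_one ha1
  have hcl : IsClosed (convexHull ℝ
      ((fun q : Finset E × Finset E => chiVec q.1 q.2) '' σ)) :=
    ((σ.toFinite.image _).isCompact_convexHull (𝕜 := ℝ)).isClosed
  obtain ⟨g, u, hg0, hg⟩ := geometric_hahn_banach_point_closed (convex_convexHull ℝ _) hcl h0
  refine ⟨fun e => g (Pi.single e 1), fun q hq => ?_⟩
  have h2 := hg (chiVec q.1 q.2) (subset_convexHull ℝ _ ⟨q, hq, rfl⟩)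
  have h3 : g (chiVec q.1 q.2) = ∑ e, g (Pi.single e 1) * chiVec q.1 q.2 e := by
    conv_lhs => rw [← Finset.univ_sum_single (chiVec q.1 q.2)]
    rw [map_sum]
    refine Finset.sum_congr rfl fun e _ => ?_
    have : (Pi.single e (chiVec q.1 q.2 e) : E → ℝ) =
        (chiVec q.1 q.2 e) • (Pi.single e 1 : E → ℝ) := by
      rw [← Pi.single_smul]; simp
    rw [this, map_smul, smul_eq_mul, mul_comm]
  rw [← h3]
  rw [map_zero] at hg0
  linarith

lemma aux_poly (t h : E → V) (S : Set E) (p : V → ℝ) :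
    p ∈ rootPolyOn t h S ↔ ∃ l : E → ℝ, (∀ e, 0 ≤ l e) ∧ (∀ e, l e ≠ 0 → e ∈ S) ∧
      ∑ e, l e ≤ 1 ∧ ∑ e, l e • xvec t h e = p := by
  constructor
  · have hsub : rootPolyOn t h S ⊆ {p | ∃ l : E → ℝ, (∀ e, 0 ≤ l e) ∧ (∀ e, l e ≠ 0 → e ∈ S) ∧
      ∑ e, l e ≤ 1 ∧ ∑ e, l e • xvec t h e = p} := by
      apply convexHull_min
      · rintro x (hx | ⟨f, hf, rfl⟩)
        · rw [Set.mem_singleton_iff] at hx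
          subst hx
          exact ⟨0, by simp, by simp, by simp, by simp⟩
        · refine ⟨Pi.single f 1, ?_, ?_, ?_, ?_⟩
          · intro r
            by_cases hr : r = f
            · subst hr; simp
            · simp [Pi.single_eq_of_ne hr]
          · intro e he
            by_cases hr : e = f
            · subst hr; exact hf
            · simp [Pi.single_eq_of_ne hr] at he
          · simp
          · rw [Finset.sum_eq_single f (fun b _ hb => by simp [Pi.single_eq_of_ne hb]) (by simp)]
            simp
      · rintro x ⟨a, a0, as, a1, rfl⟩ y ⟨b, b0, bs, b1, rfl⟩ c d hc hd hcd
        refine ⟨c • a + d • b, ?_, ?_, ?_, ?_⟩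
        · intro q
          have := a0 q
          have := b0 q
          simp only [Pi.add_apply, Pi.smul_apply, smul_eq_mul]
          positivity
        · intro e he
          by_contra hS
          have h1 : a e = 0 := by
            by_contra hh
            exact hS (as e hh)
          have h2 : b e = 0 := by
            by_contra hh
            exact hS (bs e hh)
          simp [h1, h2] at he
        · simp only [Pi.add_apply, Pi.smul_apply, smul_eq_mul, Finset.sum_add_distrib,
            ← Finset.mul_sum]
          nlinarith
        · simp [add_smul, Finset.sum_add_distrib, mul_smul, ← Finset.smul_sum]
    exact fun hp => hsub hp
  · rintro ⟨l, l0, ls, l1, rfl⟩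
    have hconv : Convex ℝ (rootPolyOn t h S) := convex_convexHull ℝ _
    have hz : (0 : V → ℝ) ∈ rootPolyOn t h S := subset_convexHull ℝ _ (by simp)
    have := hconv.sum_mem (t := (univ : Finset (Option E)))
      (w := fun o => o.elim (1 - ∑ e, l e) l)
      (z := fun o => o.elim 0 (fun e => if l e = 0 then 0 else xvec t h e)) ?_ ?_ ?_
    · rw [Fintype.sum_option] at this
      convert this using 1
      simp only [Option.elim_none, Option.elim_some, smul_zero, zero_add]
      refine Finset.sum_congr rfl fun e _ => ?_
      split_ifs with h0 <;> simp [h0]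
    · rintro (_ | e) _
      · simpa using l1
      · exact l0 e
    · rw [Fintype.sum_option]; simp
    · rintro (_ | e) _
      · exact hz
      · simp only [Option.elim_some]
        split_ifs with h0
        · exact hz
        · exact subset_convexHull ℝ _ (Or.inr ⟨e, ls e h0, rfl⟩)

lemma aux_interior (t h : E → V) (T : Finset E) (p : V → ℝ)
    (hp : p ∈ intrinsicInterior ℝ (rootPolyOn t h (T : Set E))) :
    ∃ l : E → ℝ, (∀ e, 0 ≤ l e) ∧ (∀ e, l e ≠ 0 ↔ e ∈ T) ∧ ∑ e, l e • xvec t h e = p := by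
  classical
  set Q := rootPolyOn t h (T : Set E) with hQ
  set n : ℝ := T.card + 1 with hn
  have hnpos : 0 < n := by positivity
  let b : E → ℝ := fun e => if e ∈ T then n⁻¹ else 0
  let c : V → ℝ := ∑ e, b e • xvec t h e
  have hb0 : ∀ e, 0 ≤ b e := by
    intro e
    simp only [b]
    split_ifs <;> positivity
  have hc : c ∈ Q := by
    rw [hQ, aux_poly]
    refine ⟨b, hb0, ?_, ?_, rfl⟩
    · intro e he
      by_contra hh
      exact he (if_neg (by simpa using hh))
    · simp only [b, Finset.sum_ite_mem, Finset.univ_inter, Finset.sum_const, nsmul_eq_mul]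
      rw [← div_eq_mul_inv, div_le_one hnpos, hn]
      linarith
  rw [mem_intrinsicInterior] at hp
  obtain ⟨y, hy, rfl⟩ := hp
  let c' : affineSpan ℝ Q := ⟨c, subset_affineSpan ℝ Q hc⟩
  let γ : ℝ → affineSpan ℝ Q := fun s => ⟨AffineMap.lineMap c (y : V → ℝ) s,
    AffineMap.lineMap_mem s c'.2 y.2⟩
  have hγ : Continuous γ := by
    apply Continuous.subtype_mk
    exact AffineMap.lineMap_continuous
  have hγ1 : γ 1 = y := by
    apply Subtype.ext
    simp [γ]
  have hnh : ∀ᶠ s in nhds (1 : ℝ), γ s ∈ interior ((↑) ⁻¹' Q : Set (affineSpan ℝ Q)) := by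
    apply hγ.continuousAt.eventually_mem
    rw [hγ1]
    exact isOpen_interior.mem_nhds hy
  obtain ⟨δ, hδ, hball⟩ := Metric.eventually_nhds_iff.1 hnh
  have hmem := interior_subset (hball (y := 1 + δ / 2) (by
    rw [Real.dist_eq, add_sub_cancel_left, abs_of_pos (by linarith)]; linarith))
  have hmem2 : AffineMap.lineMap c (y : V → ℝ) (1 + δ / 2) ∈ Q := hmem
  obtain ⟨l, l0, ls, -, hl⟩ := (aux_poly t h _ _).1 hmem2
  set s := 1 + δ / 2 with hs
  have hs1 : 1 < s := by linarith
  have hspos : 0 < s := by linarith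
  have hb' : 0 < 1 - s⁻¹ := by
    have := inv_lt_one_of_one_lt₀ hs1
    linarith
  refine ⟨s⁻¹ • l + (1 - s⁻¹) • b, ?_, ?_, ?_⟩
  · intro e
    have := l0 e
    have := hb0 e
    simp only [Pi.add_apply, Pi.smul_apply, smul_eq_mul]
    positivity
  · intro e
    constructor
    · intro he
      by_contra hh
      have h1 : l e = 0 := by
        by_contra h2
        exact hh (ls e h2)
      apply he
      simp [h1, b, hh]
    · intro he
      have h1 := l0 e
      have h2 : 0 < b e := by simp only [b, he, if_true]; positivity
      simp only [Pi.add_apply, Pi.smul_apply, smul_eq_mul]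
      positivity
  · simp only [Pi.add_apply, Pi.smul_apply, smul_eq_mul, add_smul, mul_smul,
      Finset.sum_add_distrib, ← Finset.smul_sum]
    rw [hl]
    change s⁻¹ • AffineMap.lineMap c (y : V → ℝ) s + (1 - s⁻¹) • c = y
    ext v
    simp only [AffineMap.lineMap_apply, vsub_eq_sub, vadd_eq_add, Pi.add_apply, Pi.smul_apply,
      Pi.sub_apply, smul_eq_mul]
    field_simp
    ring

lemma aux_dot (t h : E → V) (g : (V → ℝ) →ₗ[ℝ] ℝ) (l : E → ℝ) :
    ∑ e, l e * g (xvec t h e) = g (∑ e, l e • xvec t h e) := by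
  simp [map_sum]

/-- Dual potentials. -/
lemma aux_pot (t h : E → V) (σ : Set (Finset E × Finset E))
    (hσ : IsCircuitSignature t h σ) (w : E → ℝ)
    (hw : ∀ q ∈ σ, 0 < ∑ e, w e * chiVec q.1 q.2 e) (T : Finset E) (hT : T ∈ treeSet t h σ) :
    ∃ g : (V → ℝ) →ₗ[ℝ] ℝ, (∀ e ∈ T, w e = g (xvec t h e)) ∧
      ∀ f ∉ T, g (xvec t h f) < w f := by
  obtain ⟨hsp, hpos⟩ := hT
  have hli := aux_indep t h T hsp
  obtain ⟨g, hg⟩ : ∃ g : (V → ℝ) →ₗ[ℝ] ℝ, ∀ e ∈ T, g (xvec t h e) = w e := by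
    let B := Module.Basis.span hli
    obtain ⟨g, hg⟩ := LinearMap.exists_extend (B.constr ℝ (fun e : T => w e))
    refine ⟨g, fun e he => ?_⟩
    have h1 : ((B ⟨e, he⟩ : _) : V → ℝ) = xvec t h e :=
      congrArg Subtype.val (Module.Basis.span_apply hli ⟨e, he⟩)
    have h2 := LinearMap.congr_fun hg (B ⟨e, he⟩)
    rw [Module.Basis.constr_basis] at h2
    rw [← h1]
    exact h2
  refine ⟨g, fun e he => (hg e he).symm, fun f hf => ?_⟩
  obtain ⟨Cp, Cm, hC, hfC, hsub⟩ := aux_fund t h T hsp f hf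
  have hmem : (Cp, Cm) ∈ σ := by
    rw [hσ.2 Cp Cm hC]
    intro hmem
    have := hpos f hf Cm Cp hmem (by rwa [Finset.union_comm])
    exact (Finset.disjoint_left.1 hC.1 hfC) this
  have h1 := hw _ hmem
  have h2 : ∑ e, chiVec Cp Cm e * g (xvec t h e) = 0 := by
    rw [aux_dot]
    have := hC.2.2.1
    rw [IsCirculation] at this
    rw [this, map_zero]
  have h3 : ∑ e, w e * chiVec Cp Cm e - ∑ e, chiVec Cp Cm e * g (xvec t h e) =
      w f - g (xvec t h f) := by
    rw [← Finset.sum_sub_distrib]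
    rw [Finset.sum_eq_single f]
    · have : chiVec Cp Cm f = 1 := by
        simp [chiVec, hfC, Finset.disjoint_left.1 hC.1 hfC]
      rw [this]; ring
    · intro e _ he
      by_cases heT : e ∈ T
      · rw [hg e heT]; ring
      · have : e ∉ Cp ∪ Cm := fun hh => by
          have := hsub hh
          simp [he, heT] at this
        simp only [Finset.mem_union, not_or] at this
        simp [chiVec, this.1, this.2]
    · simp
  simp only at h1
  linarith

lemma aux_disj (t h : E → V) (σ : Set (Finset E × Finset E))
    (hσ : IsCircuitSignature t h σ) (w : E → ℝ)
    (hw : ∀ q ∈ σ, 0 < ∑ e, w e * chiVec q.1 q.2 e) (T : Finset E) (hT : T ∈ treeSet t h σ)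
    (l m : E → ℝ) (hl : ∀ e, l e ≠ 0 → e ∈ T) (hm0 : ∀ e, 0 ≤ m e)
    (heq : ∑ e, l e • xvec t h e = ∑ e, m e • xvec t h e) :
    ∑ e, l e * w e ≤ ∑ e, m e * w e ∧
      (∑ e, m e * w e ≤ ∑ e, l e * w e → ∀ e, m e ≠ 0 → e ∈ T) := by
  obtain ⟨g, hg1, hg2⟩ := aux_pot t h σ hσ w hw T hT
  have h1 : ∑ e, l e * w e = g (∑ e, l e • xvec t h e) := by
    rw [← aux_dot]
    refine Finset.sum_congr rfl fun e _ => ?_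
    by_cases he : l e = 0
    · simp [he]
    · rw [hg1 e (hl e he)]
  have hle : ∀ e, m e * g (xvec t h e) ≤ m e * w e := by
    intro e
    apply mul_le_mul_of_nonneg_left _ (hm0 e)
    by_cases he : e ∈ T
    · rw [hg1 e he]
    · exact (hg2 e he).le
  rw [h1, heq, ← aux_dot]
  refine ⟨Finset.sum_le_sum fun e _ => hle e, fun hh e he => ?_⟩
  by_contra heT
  have : ∑ e, m e * g (xvec t h e) < ∑ e, m e * w e := by
    apply Finset.sum_lt_sum (fun e _ => hle e)
    exact ⟨e, Finset.mem_univ _,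
      mul_lt_mul_of_pos_left (hg2 e heT) (lt_of_le_of_ne (hm0 e) (Ne.symm he))⟩
  linarith

lemma aux_tree (t h : E → V) (S : Finset E) (hS : (underlyingOn t h (S : Set E)).Connected) :
    ∃ T ⊆ S, IsSpanningTree t h T := by
  classical
  obtain ⟨G, hG, hGt⟩ := hS.exists_isTree_le
  have hex : ∀ e : Sym2 V, e ∈ G.edgeSet → ∃ f ∈ S, s(t f, h f) = e := by
    intro e
    induction e using Sym2.ind with
    | _ a b =>
      intro he
      rw [SimpleGraph.mem_edgeSet] at he
      have := hG he
      rw [underlyingOn, SimpleGraph.fromRel_adj] at this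
      obtain ⟨-, ⟨f, hf, rfl, rfl⟩ | ⟨f, hf, rfl, rfl⟩⟩ := this
      · exact ⟨f, by simpa using hf, rfl⟩
      · exact ⟨f, by simpa using hf, Sym2.eq_swap⟩
  choose F hF1 hF2 using hex
  let T : Finset E := G.edgeFinset.attach.image
    (fun e => F e.1 (SimpleGraph.mem_edgeFinset.1 e.2))
  refine ⟨T, ?_, ?_, ?_⟩
  · intro f hf
    simp only [T, Finset.mem_image, Finset.mem_attach, true_and] at hf
    obtain ⟨e, rfl⟩ := hf
    exact hF1 _ _
  · refine hGt.connected.mono ?_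
    intro a b hab
    rw [underlyingOn, SimpleGraph.fromRel_adj]
    refine ⟨hab.ne, ?_⟩
    have hmem : s(a, b) ∈ G.edgeSet := hab
    have hT : F s(a, b) hmem ∈ (T : Set E) := by
      simp only [T, Finset.coe_image, Set.mem_image]
      exact ⟨⟨s(a, b), SimpleGraph.mem_edgeFinset.2 hmem⟩, by simp, rfl⟩
    have := hF2 s(a, b) hmem
    rw [Sym2.eq_iff] at this
    rcases this with ⟨h1, h2⟩ | ⟨h1, h2⟩
    · exact Or.inl ⟨_, hT, h1, h2⟩
    · exact Or.inr ⟨_, hT, h1, h2⟩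
  · rw [← hGt.card_edgeFinset]
    simp only [T]
    rw [Finset.card_image_of_injective, Finset.card_attach]
    intro e e' hee
    apply Subtype.ext
    have h1 := hF2 e.1 (SimpleGraph.mem_edgeFinset.1 e.2)
    have h2 := hF2 e'.1 (SimpleGraph.mem_edgeFinset.1 e'.2)
    simp only at hee
    rw [hee] at h1
    exact h1.symm.trans h2

/-- The sum of coordinates over `U`, as a functional on edge weights. -/
def auxCut (t h : E → V) (U : Finset V) : (E → ℝ) →ₗ[ℝ] ℝ where
  toFun l := ∑ v ∈ U, (∑ e, l e • xvec t h e) v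
  map_add' := by intros; simp [add_mul, Finset.sum_add_distrib]
  map_smul' := by intros; simp [mul_assoc, Finset.mul_sum]

lemma auxCut_apply (t h : E → V) (U : Finset V) (l : E → ℝ) :
    auxCut t h U l = ∑ e, l e * ((if h e ∈ U then 1 else 0) - (if t e ∈ U then 1 else 0)) := by
  simp only [auxCut, LinearMap.coe_mk, AddHom.coe_mk, Finset.sum_apply, Pi.smul_apply, smul_eq_mul]
  rw [Finset.sum_comm]
  refine Finset.sum_congr rfl fun e _ => ?_
  rw [← Finset.mul_sum]
  simp [xvec, Finset.sum_sub_distrib]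

lemma auxCut_congr (t h : E → V) (U : Finset V) (l m : E → ℝ)
    (hlm : ∑ e, l e • xvec t h e = ∑ e, m e • xvec t h e) : auxCut t h U l = auxCut t h U m := by
  simp only [auxCut, LinearMap.coe_mk, AddHom.coe_mk, hlm]

/-- A set closed under adjacency in a connected graph is everything. -/
lemma aux_closed {G : SimpleGraph V} (hG : G.Connected) (U : Finset V) (hU : U.Nonempty)
    (hcl : ∀ a b, G.Adj a b → a ∈ U → b ∈ U) : U = univ := by
  obtain ⟨u, hu⟩ := hU
  ext v
  simp only [Finset.mem_univ, iff_true]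
  obtain ⟨p⟩ := hG.preconnected u v
  induction p with
  | nil => exact hu
  | cons hadj p ih => exact ih (hcl _ _ hadj hu)

lemma auxCut_ne (t h : E → V) (hconn : (underlyingOn t h Set.univ).Connected) (U : Finset V)
    (hU : U.Nonempty) (hU' : U ≠ univ) : auxCut t h U ≠ 0 := by
  intro h0
  apply hU'
  apply aux_closed hconn U hU
  have key : ∀ e, h e ∈ U ↔ t e ∈ U := by
    intro e
    have := LinearMap.congr_fun h0 (Pi.single e 1)
    rw [auxCut_apply, Finset.sum_eq_single e (fun b _ hb => by simp [Pi.single_eq_of_ne hb])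
      (by simp)] at this
    by_cases h1 : h e ∈ U <;> by_cases h2 : t e ∈ U <;> simp_all
  intro a b hab ha
  rw [underlyingOn, SimpleGraph.fromRel_adj] at hab
  obtain ⟨-, ⟨f, -, rfl, rfl⟩ | ⟨f, -, rfl, rfl⟩⟩ := hab
  · exact (key f).2 ha
  · exact (key f).1 ha

lemma aux_supp_conn (t h : E → V) (hne : Nonempty V) (l : E → ℝ)
    (hgen : ∀ U : Finset V, U.Nonempty → U ≠ univ → auxCut t h U l ≠ 0) (S : Finset E)
    (hS : ∀ e, l e ≠ 0 → e ∈ S) : (underlyingOn t h (S : Set E)).Connected := by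
  classical
  have : Nonempty V := hne
  refine ⟨fun u v => ?_⟩
  let U : Finset V := univ.filter fun x => (underlyingOn t h (S : Set E)).Reachable u x
  by_cases hU : U = univ
  · have : v ∈ U := by rw [hU]; simp
    simpa [U] using this
  · exfalso
    refine hgen U ⟨u, by simp [U]⟩ hU ?_
    rw [auxCut_apply]
    refine Finset.sum_eq_zero fun e _ => ?_
    by_cases he : l e = 0
    · simp [he]
    · have heS := hS e he
      have : h e ∈ U ↔ t e ∈ U := by
        simp only [U, Finset.mem_filter, Finset.mem_univ, true_and]
        by_cases hth : t e = h e
        · rw [hth]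
        · have hadj : (underlyingOn t h (S : Set E)).Adj (t e) (h e) := by
            rw [underlyingOn, SimpleGraph.fromRel_adj]
            exact ⟨hth, Or.inl ⟨e, by simpa using heS, rfl, rfl⟩⟩
          exact ⟨fun r => r.trans hadj.symm.reachable, fun r => r.trans hadj.reachable⟩
      simp [this]

lemma aux_min (t h : E → V) (w : E → ℝ) (l : E → ℝ) (l0 : ∀ e, 0 ≤ l e) (l1 : ∑ e, l e ≤ 1) :
    ∃ m : E → ℝ, (∀ e, 0 ≤ m e) ∧ ∑ e, m e ≤ 1 ∧
      ∑ e, m e • xvec t h e = ∑ e, l e • xvec t h e ∧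
      ∀ m' : E → ℝ, (∀ e, 0 ≤ m' e) → ∑ e, m' e ≤ 1 →
        ∑ e, m' e • xvec t h e = ∑ e, l e • xvec t h e → ∑ e, m e * w e ≤ ∑ e, m' e * w e := by
  let K : Set (E → ℝ) := {m | (∀ e, 0 ≤ m e) ∧ ∑ e, m e ≤ 1 ∧
      ∑ e, m e • xvec t h e = ∑ e, l e • xvec t h e}
  have hcl : IsClosed K := by
    apply IsClosed.inter
    · have : {m : E → ℝ | ∀ e, 0 ≤ m e} = ⋂ e, {m : E → ℝ | 0 ≤ m e} := by ext; simp
      change IsClosed {m : E → ℝ | ∀ e, 0 ≤ m e}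
      rw [this]
      exact isClosed_iInter fun e => isClosed_le continuous_const (continuous_apply e)
    · apply IsClosed.inter
      · exact isClosed_le (f := fun m : E → ℝ => ∑ e, m e) (by fun_prop) continuous_const
      · exact isClosed_eq (f := fun m : E → ℝ => ∑ e, m e • xvec t h e) (by fun_prop)
          continuous_const
  have hK : IsCompact K := by
    apply IsCompact.of_isClosed_subset (isCompact_Icc (a := (0 : E → ℝ)) (b := 1)) hcl
    rintro m ⟨m0, m1, -⟩
    refine ⟨m0, fun e => ?_⟩
    exact (Finset.single_le_sum (fun i _ => m0 i) (Finset.mem_univ e)).trans m1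
  obtain ⟨m, ⟨m0, m1, m2⟩, hmin⟩ := hK.exists_isMinOn ⟨l, l0, l1, rfl⟩
    (f := fun m : E → ℝ => ∑ e, m e * w e) (by fun_prop)
  exact ⟨m, m0, m1, m2, fun m' a b c => hmin ⟨a, b, c⟩⟩

lemma aux_sum_chi (Cp Cm : Finset E) :
    ∑ e, chiVec Cp Cm e = (Cp.card : ℝ) - Cm.card := by
  simp [chiVec, Finset.sum_sub_distrib]

/-- In an optimal solution, no positive arc lies in the support. -/
lemma aux_opt (t h : E → V) (σ : Set (Finset E × Finset E))
    (hσ : IsCircuitSignature t h σ) (hlap : ∀ q ∈ σ, q.2.card ≤ q.1.card) (w : E → ℝ)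
    (hw : ∀ q ∈ σ, 0 < ∑ e, w e * chiVec q.1 q.2 e) (m : E → ℝ)
    (m0 : ∀ e, 0 ≤ m e) (m1 : ∑ e, m e ≤ 1)
    (hmin : ∀ m' : E → ℝ, (∀ e, 0 ≤ m' e) → ∑ e, m' e ≤ 1 →
        ∑ e, m' e • xvec t h e = ∑ e, m e • xvec t h e → ∑ e, m e * w e ≤ ∑ e, m' e * w e)
    (Cp Cm : Finset E) (hq : (Cp, Cm) ∈ σ) : ∃ e ∈ Cp, m e = 0 := by
  by_contra hcon
  push Not at hcon
  obtain ⟨ε, hε, hle⟩ : ∃ ε > 0, ∀ e ∈ Cp, ε ≤ m e := by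
    by_cases hne : Cp.Nonempty
    · obtain ⟨e0, he0, hmin0⟩ := Cp.exists_min_image m hne
      exact ⟨m e0, lt_of_le_of_ne (m0 e0) (Ne.symm (hcon e0 he0)), hmin0⟩
    · rw [Finset.not_nonempty_iff_eq_empty] at hne
      exact ⟨1, one_pos, by simp [hne]⟩
  have hC := hσ.1 _ hq
  have h1 := hmin (m - ε • chiVec Cp Cm) ?_ ?_ ?_
  · have h2 := hw _ hq
    simp only at h2
    have h3 : ∑ e, (m - ε • chiVec Cp Cm) e * w e =
        ∑ e, m e * w e - ε * ∑ e, w e * chiVec Cp Cm e := by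
      rw [Finset.mul_sum, ← Finset.sum_sub_distrib]
      refine Finset.sum_congr rfl fun e _ => ?_
      simp only [Pi.sub_apply, Pi.smul_apply, smul_eq_mul]
      ring
    rw [h3] at h1
    have := mul_pos hε h2
    linarith
  · intro e
    have := m0 e
    simp only [Pi.sub_apply, Pi.smul_apply, smul_eq_mul, chiVec]
    by_cases hp : e ∈ Cp
    · have := hle e hp
      by_cases hm : e ∈ Cm <;> simp [hp, hm] <;> linarith
    · by_cases hm : e ∈ Cm <;> simp [hp, hm] <;> linarith
  · simp only [Pi.sub_apply, Pi.smul_apply, smul_eq_mul, Finset.sum_sub_distrib, ← Finset.mul_sum,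
      aux_sum_chi]
    have h4 := hlap _ hq
    simp only at h4
    have h5 : (Cm.card : ℝ) ≤ Cp.card := by exact_mod_cast h4
    nlinarith
  · have := hC.2.2.1
    simp only [IsCirculation] at this
    simp only [Pi.sub_apply, Pi.smul_apply, smul_eq_mul, sub_smul, mul_smul,
      Finset.sum_sub_distrib, ← Finset.smul_sum, this, smul_zero, sub_zero]

/-- Generic points are covered. -/
lemma aux_generic (t h : E → V) (hne : Nonempty V) (σ : Set (Finset E × Finset E))
    (hσ : IsCircuitSignature t h σ) (hac : IsAcyclicSig σ)
    (hlap : ∀ q ∈ σ, q.2.card ≤ q.1.card) (l : E → ℝ)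
    (l0 : ∀ e, 0 ≤ l e) (l1 : ∑ e, l e ≤ 1)
    (hgen : ∀ U : Finset V, U.Nonempty → U ≠ univ → auxCut t h U l ≠ 0) :
    ∃ T ∈ treeSet t h σ, ∑ e, l e • xvec t h e ∈ rootPolyOn t h (T : Set E) := by
  classical
  obtain ⟨w, hw⟩ := aux_weight σ hac
  obtain ⟨m, m0, m1, hm, hmin⟩ := aux_min t h w l l0 l1
  rw [← hm] at hmin
  have hopt := aux_opt t h σ hσ hlap w hw m m0 m1 hmin
  let S : Finset E := univ.filter fun e => m e ≠ 0
  have hS : ∀ e, e ∈ S ↔ m e ≠ 0 := by simp [S]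
  have hSc := aux_supp_conn t h hne m
    (fun U h1 h2 => by rw [auxCut_congr t h U m l hm]; exact hgen U h1 h2) S
    (fun e he => (hS e).2 he)
  obtain ⟨T, hTS, hT⟩ := aux_tree t h S hSc
  refine ⟨T, ⟨hT, ?_⟩, ?_⟩
  · intro f hf Cp Cm hq hsub
    obtain ⟨e, he, hme⟩ := hopt Cp Cm hq
    have h1 := hsub (Finset.mem_union_left _ he)
    rw [Finset.mem_insert] at h1
    rcases h1 with rfl | h1
    · exact he
    · exact absurd hme ((hS e).1 (hTS h1))
  · rw [aux_poly]
    refine ⟨m, m0, fun f hmf => ?_, m1, hm⟩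
    by_contra hf
    have hf' : f ∉ T := by simpa using hf
    obtain ⟨Cp, Cm, hC, hfC, hsub⟩ := aux_fund t h T hT f hf'
    have hsub' : Cp ∪ Cm ⊆ S := by
      intro e he
      have := hsub he
      rw [Finset.mem_insert] at this
      rcases this with rfl | h1
      · exact (hS e).2 hmf
      · exact hTS h1
    by_cases hq : (Cp, Cm) ∈ σ
    · obtain ⟨e, he, hme⟩ := hopt Cp Cm hq
      exact (hS e).1 (hsub' (Finset.mem_union_left _ he)) hme
    · have hq' : (Cm, Cp) ∈ σ := by
        rw [hσ.2 Cm Cp (aux_circ_symm t h Cp Cm hC)]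
        exact hq
      obtain ⟨e, he, hme⟩ := hopt Cm Cp hq'
      exact (hS e).1 (hsub' (Finset.mem_union_right _ he)) hme

lemma aux_dense (t h : E → V) (hconn : (underlyingOn t h Set.univ).Connected) (l : E → ℝ)
    (l0 : ∀ e, 0 ≤ l e) (l1 : ∑ e, l e ≤ 1) :
    l ∈ closure {m : E → ℝ | ((∀ e, 0 ≤ m e) ∧ ∑ e, m e ≤ 1) ∧
      ∀ U : Finset V, U.Nonempty → U ≠ univ → auxCut t h U m ≠ 0} := by
  classical
  let O : Set (E → ℝ) := {m | (∀ e, 0 < m e) ∧ ∑ e, m e < 1}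
  have hO : IsOpen O := by
    apply IsOpen.inter
    · have : {m : E → ℝ | ∀ e, 0 < m e} = ⋂ e, {m : E → ℝ | 0 < m e} := by ext; simp
      change IsOpen {m : E → ℝ | ∀ e, 0 < m e}
      rw [this]
      exact isOpen_iInter_of_finite fun e => isOpen_lt continuous_const (continuous_apply e)
    · exact isOpen_lt (f := fun m : E → ℝ => ∑ e, m e) (by fun_prop) continuous_const
  let ι := {U : Finset V // U.Nonempty ∧ U ≠ univ}
  let G : ι → Set (E → ℝ) := fun U => (↑(LinearMap.ker (auxCut t h U.1)) : Set (E → ℝ))ᶜ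
  have hGo : ∀ U, IsOpen (G U) := fun U =>
    (Submodule.closed_of_finiteDimensional _).isOpen_compl
  have hGd : ∀ U, Dense (G U) := by
    intro U
    change Dense (↑(LinearMap.ker (auxCut t h U.1)) : Set (E → ℝ))ᶜ
    rw [← interior_eq_empty_iff_dense_compl]
    by_contra hint
    have htop := Submodule.eq_top_of_nonempty_interior' _ (Set.nonempty_iff_ne_empty.2 hint)
    exact auxCut_ne t h hconn U.1 U.2.1 U.2.2 (LinearMap.ker_eq_top.1 htop)
  have hd : Dense (⋂ U, G U) := dense_iInter_of_isOpen hGo hGd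
  have h1 : O ⊆ closure (O ∩ ⋂ U, G U) := hd.open_subset_closure_inter hO
  have h2 : closure O ⊆ closure {m : E → ℝ | ((∀ e, 0 ≤ m e) ∧ ∑ e, m e ≤ 1) ∧
      ∀ U : Finset V, U.Nonempty → U ≠ univ → auxCut t h U m ≠ 0} := by
    apply closure_minimal _ isClosed_closure
    refine h1.trans (closure_mono ?_)
    rintro m ⟨⟨a, b⟩, c⟩
    refine ⟨⟨fun e => (a e).le, b.le⟩, fun U hU hU' => ?_⟩
    have := Set.mem_iInter.1 c ⟨U, hU, hU'⟩
    simpa [G] using this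
  apply h2
  set n : ℝ := Fintype.card E + 1 with hn
  have hnpos : 0 < n := by positivity
  let γ : ℝ → (E → ℝ) := fun s => (1 - s) • l + s • (fun _ => n⁻¹)
  have hγ : Continuous γ := by fun_prop
  have hγ0 : γ 0 = l := by simp [γ]
  have htend : Filter.Tendsto γ (nhdsWithin 0 (Set.Ioo 0 1)) (nhds l) := by
    rw [← hγ0]
    exact hγ.continuousAt.tendsto.mono_left nhdsWithin_le_nhds
  have : (nhdsWithin (0 : ℝ) (Set.Ioo 0 1)).NeBot := by
    rw [← mem_closure_iff_nhdsWithin_neBot, closure_Ioo (by norm_num)]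
    simp
  refine mem_closure_of_tendsto htend ?_
  filter_upwards [self_mem_nhdsWithin] with s hs
  obtain ⟨hs0, hs1⟩ := hs
  have hs1' : 0 < 1 - s := by linarith
  constructor
  · intro e
    have := l0 e
    simp only [γ, Pi.add_apply, Pi.smul_apply, smul_eq_mul]
    positivity
  · simp only [γ, Pi.add_apply, Pi.smul_apply, smul_eq_mul, Finset.sum_add_distrib,
      ← Finset.mul_sum, Finset.sum_const, Finset.card_univ, nsmul_eq_mul]
    have h5 : (Fintype.card E : ℝ) * n⁻¹ < 1 := by
      rw [← div_eq_mul_inv, div_lt_one hnpos, hn]; linarith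
    nlinarith

end Aux

/-- for a weakly connected digraph `D` and an acyclic, long arc positive
circuit signature `σ`, the simplices `Q̃_T` for `T ∈ tree(D,σ)` form a dissection of
`Q̃_D`: pairwise disjoint relative interiors, and union equal to `Q̃_D`. -/
theorem stmt8 {V E : Type*} [Fintype V] [Fintype E] [DecidableEq V] [DecidableEq E]
    (t h : E → V) (hconn : (underlyingOn t h Set.univ).Connected)
    (σ : Set (Finset E × Finset E))
    (hσ : IsCircuitSignature t h σ) (hac : IsAcyclicSig σ)
    (hlap : ∀ q ∈ σ, q.2.card ≤ q.1.card) :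
    ((treeSet t h σ).Pairwise fun T1 T2 =>
      Disjoint (intrinsicInterior ℝ (rootPolyOn t h ↑T1))
        (intrinsicInterior ℝ (rootPolyOn t h ↑T2))) ∧
    (⋃ T ∈ treeSet t h σ, rootPolyOn t h ↑T) = rootPolyOn t h Set.univ := by
  constructor
  · intro T1 h1 T2 h2 hne
    rw [Set.disjoint_left]
    intro p hp1 hp2
    apply hne
    obtain ⟨w, hw⟩ := aux_weight σ hac
    obtain ⟨l, l0, ls, hl⟩ := aux_interior t h T1 p hp1
    obtain ⟨m, m0, ms, hm⟩ := aux_interior t h T2 p hp2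
    have a1 := aux_disj t h σ hσ w hw T1 h1 l m (fun e => (ls e).1) m0 (hl.trans hm.symm)
    have a2 := aux_disj t h σ hσ w hw T2 h2 m l (fun e => (ms e).1) l0 (hm.trans hl.symm)
    apply Finset.Subset.antisymm
    · intro e he
      exact a2.2 a1.1 e ((ls e).2 he)
    · intro e he
      exact a1.2 a2.1 e ((ms e).2 he)
  · apply Set.Subset.antisymm
    · refine Set.iUnion₂_subset fun T _ => ?_
      exact convexHull_mono (Set.union_subset_union_right _ (Set.image_mono (Set.subset_univ _)))
    · intro p hp
      rw [aux_poly] at hp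
      obtain ⟨l, l0, -, l1, rfl⟩ := hp
      have hcl : IsClosed (⋃ T ∈ treeSet t h σ, rootPolyOn t h (T : Set E)) := by
        apply Set.Finite.isClosed_biUnion (Set.toFinite _)
        intro T _
        have hfin : ({0} ∪ (xvec t h '' (T : Set E))).Finite :=
          (Set.finite_singleton _).union (T.finite_toSet.image _)
        exact (hfin.isCompact_convexHull (𝕜 := ℝ)).isClosed
      have hcont : Continuous fun m : E → ℝ => ∑ e, m e • xvec t h e := by fun_prop
      have hpre := hcl.preimage hcont
      refine closure_minimal ?_ hpre (aux_dense t h hconn l l0 l1)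
      rintro m ⟨⟨m0, m1⟩, hgen⟩
      obtain ⟨T, hT, hmem⟩ := aux_generic t h hconn.nonempty σ hσ hac hlap m m0 m1 hgen
      exact Set.mem_biUnion hT hmem
end

section
/- Stanley's monotonicity theorem: if P ⊆ Q are lattice polytopes in ℝ^n, then each coefficient of the h*-polynomial of P is at most the corresponding coefficient of the h*-polynomial of Q. -/
open Finset Pointwise

namespace Stan

open Classical Filter Topology

/-- Sign condition: strict positivity on `R`, nonnegativity elsewhere. -/
def ok {E : Type*} (R : Finset E) (i : E) (t : ℝ) : Prop := if i ∈ R then 0 < t else 0 ≤ t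

lemma ok.nonneg {E : Type*} {R : Finset E} {i : E} {t : ℝ} (h : ok R i t) : 0 ≤ t := by
  unfold ok at h; split_ifs at h <;> linarith

lemma ok.mono {E : Type*} {R : Finset E} {i : E} {t s : ℝ} (h : ok R i t) (hs : t ≤ s) :
    ok R i s := by
  unfold ok at *; split_ifs at * <;> linarith

lemma ok_empty {E : Type*} {i : E} {t : ℝ} : ok (∅ : Finset E) i t ↔ 0 ≤ t := by
  simp [ok]

variable {E : Type*} [AddCommGroup E] [Module ℝ E]

/-- Half-open cone spanned by `F`, with the facets in `R` removed. -/
def K (F R : Finset E) : Set E :=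
  {x | ∃ l : E → ℝ, x = ∑ i ∈ F, l i • i ∧ ∀ i ∈ F, ok R i (l i)}

/-- Half-open dissection of the cone spanned by `A`. -/
structure HD (A : Finset E) (T : Finset (Finset E × Finset E)) : Prop where
  sub : ∀ p ∈ T, p.1 ⊆ A
  rsub : ∀ p ∈ T, p.2 ⊆ p.1
  li : ∀ p ∈ T, LinearIndepOn ℝ id (p.1 : Set E)
  card : ∀ p ∈ T, p.1.card = Module.finrank ℝ (Submodule.span ℝ (A : Set E))
  ex : ∀ x ∈ K A ∅, ∃ p ∈ T, x ∈ K p.1 p.2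
  uniq : ∀ x, ∀ p ∈ T, ∀ p' ∈ T, x ∈ K p.1 p.2 → x ∈ K p'.1 p'.2 → p = p'

lemma li_eq {F : Finset E} (hF : LinearIndepOn ℝ id (F : Set E)) {l m : E → ℝ}
    (h : ∑ i ∈ F, l i • i = ∑ i ∈ F, m i • i) : ∀ i ∈ F, l i = m i := by
  rw [linearIndepOn_finset_iff] at hF
  intro i hi
  have := hF (fun i => l i - m i) (by simp [sub_smul, h]) i hi
  linarith

lemma K_mono {F A R : Finset E} (h : F ⊆ A) : K F R ⊆ K A ∅ := by
  rintro x ⟨l, rfl, hl⟩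
  refine ⟨fun i => if i ∈ F then l i else 0, ?_, ?_⟩
  · rw [← Finset.sum_subset h]
    · exact Finset.sum_congr rfl fun i hi => by simp [hi]
    · intro i _ hi; simp [hi]
  · intro i _
    rw [ok_empty]
    dsimp only
    split_ifs with hi
    · exact (hl i hi).nonneg
    · exact le_rfl

lemma exists_coef (F : Finset E) (hF : LinearIndepOn ℝ id (F : Set E)) :
    ∃ c : E →ₗ[ℝ] (E → ℝ), ∀ l : E → ℝ, ∀ i ∈ F, c (∑ j ∈ F, l j • j) i = l i := by
  let Φ : (F → ℝ) →ₗ[ℝ] E := Fintype.linearCombination ℝ (fun i : F => (i : E))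
  have hΦ : LinearMap.ker Φ = ⊥ := by
    rw [LinearMap.ker_eq_bot]
    have : LinearIndependent ℝ (fun i : F => (i : E)) := hF
    exact this.fintypeLinearCombination_injective
  obtain ⟨g, hg⟩ := LinearMap.exists_leftInverse_of_injective Φ hΦ
  let X : (F → ℝ) →ₗ[ℝ] (E → ℝ) :=
    { toFun := fun f e => if h : e ∈ F then f ⟨e, h⟩ else 0
      map_add' := by intro f f'; ext e; by_cases h : e ∈ F <;> simp [h]
      map_smul' := by intro f f'; ext e; by_cases h : e ∈ F <;> simp [h] }
  refine ⟨X ∘ₗ g, fun l i hi => ?_⟩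
  have h1 : ∑ j ∈ F, l j • j = Φ (fun j => l j) := by
    simp only [Φ, Fintype.linearCombination_apply]
    exact (Finset.sum_coe_sort F (fun j => l j • j)).symm
  have h2 : g (Φ (fun j => l j)) = fun j : F => l j := by
    have := LinearMap.congr_fun hg (fun j : F => l j)
    simpa using this
  simp only [LinearMap.comp_apply, h1, h2, X]
  simp [hi]

/-- Coordinates with respect to a linearly independent set. -/
noncomputable def cf (F : Finset E) : E →ₗ[ℝ] (E → ℝ) :=
  if hF : LinearIndepOn ℝ id (F : Set E) then (exists_coef F hF).choose else 0

lemma cf_sum {F : Finset E} (hF : LinearIndepOn ℝ id (F : Set E)) (l : E → ℝ) {i : E}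
    (hi : i ∈ F) : cf F (∑ j ∈ F, l j • j) i = l i := by
  rw [cf, dif_pos hF]
  exact (exists_coef F hF).choose_spec l i hi

lemma mem_span_sum {F : Finset E} {x : E} (hx : x ∈ Submodule.span ℝ (F : Set E)) :
    ∃ l : E → ℝ, x = ∑ i ∈ F, l i • i := by
  obtain ⟨f, -, hf⟩ := Submodule.mem_span_finset.mp hx
  exact ⟨f, hf.symm⟩

lemma sum_mem_span {F : Finset E} (l : E → ℝ) :
    ∑ i ∈ F, l i • i ∈ Submodule.span ℝ (F : Set E) :=
  Submodule.sum_mem _ fun i hi => Submodule.smul_mem _ _ (Submodule.subset_span hi)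

lemma sum_cf {F : Finset E} (hF : LinearIndepOn ℝ id (F : Set E)) {x : E}
    (hx : x ∈ Submodule.span ℝ (F : Set E)) : ∑ i ∈ F, cf F x i • i = x := by
  obtain ⟨l, rfl⟩ := mem_span_sum hx
  exact Finset.sum_congr rfl fun i hi => by rw [cf_sum hF l hi]

lemma cf_self {F : Finset E} (hF : LinearIndepOn ℝ id (F : Set E)) {i j : E} (hi : i ∈ F)
    (hj : j ∈ F) : cf F i j = if i = j then 1 else 0 := by
  have h := cf_sum hF (fun k => if i = k then 1 else 0) hj
  simpa [hi, ite_smul] using h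

/-- functional with prescribed values `w` on `F`. -/
noncomputable def psi (F : Finset E) (w : E → ℝ) (x : E) : ℝ := ∑ i ∈ F, cf F x i * w i

lemma psi_self {F : Finset E} (hF : LinearIndepOn ℝ id (F : Set E)) (w : E → ℝ) {i : E}
    (hi : i ∈ F) : psi F w i = w i := by
  unfold psi
  rw [Finset.sum_eq_single i]
  · rw [cf_self hF hi hi]; simp
  · intro j hj hne; rw [cf_self hF hi hj]; simp [hne.symm]
  · exact fun h => absurd hi h

lemma psi_sum (F G : Finset E) (w l : E → ℝ) :
    psi F w (∑ j ∈ G, l j • j) = ∑ j ∈ G, l j * psi F w j := by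
  unfold psi
  simp only [map_sum, map_smul, Finset.sum_apply, Pi.smul_apply, smul_eq_mul, Finset.sum_mul,
    Finset.mul_sum]
  rw [Finset.sum_comm]
  exact Finset.sum_congr rfl fun _ _ => Finset.sum_congr rfl fun _ _ => by ring

lemma psi_lin (F : Finset E) (x : E) :
    ∃ φ : (E → ℝ) →ₗ[ℝ] ℝ, ∀ w, φ w = psi F w x :=
  ⟨∑ i ∈ F, cf F x i • LinearMap.proj i, fun w => by
    simp [psi, LinearMap.sum_apply]⟩

lemma ev_ne {α β : ℝ} (h : α ≠ 0) : ∀ᶠ τ : ℝ in atTop, α + τ * β ≠ 0 := by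
  by_cases hb : β = 0
  · simp [hb, h]
  · filter_upwards [eventually_gt_atTop (-α / β)] with τ hτ h0
    have : τ = -α / β := by field_simp; linarith
    linarith

lemma ev_pos {α β : ℝ} (h : 0 < α) : ∀ᶠ ε : ℝ in 𝓝[>] 0, 0 < α + ε * β := by
  have : Tendsto (fun ε : ℝ => α + ε * β) (𝓝[>] 0) (𝓝 (α + 0 * β)) := by
    apply Tendsto.mono_left _ nhdsWithin_le_nhds
    exact (by fun_prop : Continuous (fun ε : ℝ => α + ε * β)).tendsto 0
  exact this.eventually (lt_mem_nhds (by simpa using h))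

lemma ev_ne' {α β : ℝ} (h : β ≠ 0) : ∀ᶠ ε : ℝ in 𝓝[>] 0, α + ε * β ≠ 0 := by
  rcases lt_trichotomy α 0 with ha | ha | ha
  · filter_upwards [ev_pos (α := -α) (β := -β) (by linarith)] with ε hε h0
    linarith
  · subst ha
    filter_upwards [self_mem_nhdsWithin] with ε (hε : 0 < ε)
    simp [h, hε.ne']
  · filter_upwards [ev_pos (β := β) ha] with ε hε h0
    linarith

lemma gen_large {V : Type*} [AddCommGroup V] [Module ℝ V] {κ : Type*} (s : Finset κ)
    (φ : κ → V →ₗ[ℝ] ℝ) (hφ : ∀ k ∈ s, φ k ≠ 0) (v : V) :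
    ∃ u : V, ∀ᶠ τ : ℝ in atTop, ∀ k ∈ s, φ k (u + τ • v) ≠ 0 := by
  obtain ⟨u, hu⟩ : ∃ u : V, ∀ k ∈ s, φ k u ≠ 0 := by
    obtain ⟨u, hu⟩ := Module.Dual.exists_forall_ne_zero_of_forall_exists
      (fun k : s => φ k) (fun k => by
        by_contra! h
        exact hφ k k.2 (LinearMap.ext h))
    exact ⟨u, fun k hk => hu ⟨k, hk⟩⟩
  refine ⟨u, ?_⟩
  rw [Filter.eventually_all_finset]
  intro k hk
  filter_upwards [ev_ne (β := φ k v) (hu k hk)] with τ hτ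
  simpa using hτ

end Stan
namespace Stan

open Classical Filter Topology

variable {E : Type*} [AddCommGroup E] [Module ℝ E]

lemma psi_add (F : Finset E) (w w' : E → ℝ) (x : E) :
    psi F (w + w') x = psi F w x + psi F w' x := by
  simp [psi, mul_add, Finset.sum_add_distrib]

lemma psi_zero_of (F : Finset E) (w : E → ℝ) (x : E) (h : ∀ i ∈ F, w i = 0) :
    psi F w x = 0 :=
  Finset.sum_eq_zero fun i hi => by simp [h i hi]

lemma choose_w (A A' : Finset E) : ∃ w : E → ℝ,
    (∀ F ⊆ A', ∀ j ∈ A', j ∉ F → psi F w j ≠ w j) ∧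
    (∀ F ⊆ A, ∀ j ∈ A', j ∉ A → psi F w j < w j) := by
  choose φ hφ using fun (p : Finset E × E) => psi_lin p.1 p.2
  let s := (A'.powerset ×ˢ A').filter (fun p => p.2 ∉ p.1)
  let v : E → ℝ := fun e => if e ∈ A then 0 else 1
  obtain ⟨u, hu⟩ := gen_large s (fun p => φ p - LinearMap.proj p.2) (by
    rintro ⟨F, j⟩ hp h0
    have hj : j ∉ F := (Finset.mem_filter.mp hp).2
    have := LinearMap.congr_fun h0 (Pi.single j 1)
    simp only [LinearMap.sub_apply, hφ, LinearMap.zero_apply, LinearMap.proj_apply,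
      Pi.single_eq_same] at this
    rw [psi_zero_of F _ _ (by
      intro i hi
      rw [Pi.single_eq_of_ne]
      rintro rfl; exact hj hi)] at this
    norm_num at this) v
  have h2 : ∀ᶠ τ : ℝ in atTop, ∀ p ∈ A.powerset ×ˢ A', psi p.1 u p.2 < u p.2 + τ := by
    rw [Filter.eventually_all_finset]
    intro p _
    filter_upwards [eventually_gt_atTop (psi p.1 u p.2 - u p.2)] with τ hτ
    linarith
  obtain ⟨τ, hτ, hτ2⟩ := (hu.and h2).exists
  refine ⟨u + τ • v, ?_, ?_⟩
  · intro F hF j hj hjF h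
    apply hτ (F, j) (by simp [s, hF, hj, hjF])
    rw [LinearMap.sub_apply, hφ, h, LinearMap.proj_apply, sub_self]
  · intro F hF j hj hjA
    rw [psi_add, psi_zero_of F (τ • v)]
    · have := hτ2 (F, j) (by simp [hF, hj])
      simpa [v, hjA] using this
    · intro i hi; simp [v, hF hi]

/-- `F` is a basis of `W`. -/
def isB (W : Submodule ℝ E) (F : Finset E) : Prop :=
  LinearIndepOn ℝ id (F : Set E) ∧ Submodule.span ℝ (F : Set E) = W

lemma choose_z (A A' : Finset E) : ∃ z ∈ K A ∅, ∀ F ⊆ A',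
    isB (Submodule.span ℝ (A : Set E)) F → ∀ i ∈ F, cf F z i ≠ 0 := by
  let s := (A'.powerset ×ˢ A').filter
    (fun p => isB (Submodule.span ℝ (A : Set E)) p.1 ∧ p.2 ∈ p.1)
  let Ψ : (E → ℝ) →ₗ[ℝ] E := ∑ a ∈ A, (LinearMap.proj a : (E → ℝ) →ₗ[ℝ] ℝ).smulRight a
  have hΨ : ∀ u, Ψ u = ∑ a ∈ A, u a • a := fun u => by simp [Ψ, LinearMap.sum_apply]
  obtain ⟨u, hu⟩ := gen_large s
    (fun p => (LinearMap.proj p.2 : (E → ℝ) →ₗ[ℝ] ℝ) ∘ₗ cf p.1 ∘ₗ Ψ) (by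
    rintro ⟨F, j⟩ hp h0
    obtain ⟨-, hB, hj⟩ := Finset.mem_filter.mp hp
    dsimp only at hB hj h0
    have hjm : j ∈ Submodule.span ℝ (A : Set E) := hB.2 ▸ Submodule.subset_span hj
    obtain ⟨l, hl⟩ := mem_span_sum hjm
    have := LinearMap.congr_fun h0 l
    simp only [LinearMap.comp_apply, hΨ, ← hl, LinearMap.proj_apply, LinearMap.zero_apply,
      cf_self hB.1 hj hj] at this
    norm_num at this) 1
  have h2 : ∀ᶠ τ : ℝ in atTop, ∀ a ∈ A, 0 ≤ u a + τ := by
    rw [Filter.eventually_all_finset]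
    intro p _
    filter_upwards [eventually_gt_atTop (- u p)] with τ hτ
    linarith
  obtain ⟨τ, hτ, hτ2⟩ := (hu.and h2).exists
  refine ⟨Ψ (u + τ • 1), ⟨u + τ • 1, hΨ _, ?_⟩, ?_⟩
  · intro i hi
    rw [ok_empty]
    simpa using hτ2 i hi
  · intro F hF hB i hi
    exact hτ (F, i) (by simp [s, hF, hB, hi, hF hi])

lemma opt_ex (ht : E →ₗ[ℝ] ℝ) (A : Finset E) (hA : ∀ a ∈ A, ht a = 1) (w : E → ℝ) (y : E)
    (hy : y ∈ K A ∅) : ∃ l : E → ℝ, (∀ i ∈ A, 0 ≤ l i) ∧ ∑ i ∈ A, l i • i = y ∧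
      ∀ m : E → ℝ, (∀ i ∈ A, 0 ≤ m i) → ∑ i ∈ A, m i • i = y →
        ∑ i ∈ A, l i * w i ≤ ∑ i ∈ A, m i * w i := by
  let Φ : (A → ℝ) →ₗ[ℝ] E := Fintype.linearCombination ℝ (fun i : A => (i : E))
  have hΦ : ∀ l : E → ℝ, Φ (fun i => l i) = ∑ i ∈ A, l i • i := by
    intro l
    simp only [Φ, Fintype.linearCombination_apply]
    exact Finset.sum_coe_sort A (fun j => l j • j)
  obtain ⟨l0, hl0, hl0p⟩ := hy
  let C : Set (A → ℝ) := {l | 0 ≤ l ∧ Φ l = y}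
  have hne : C.Nonempty := ⟨fun i => l0 i, fun i => ok_empty.mp (hl0p i i.2), by rw [hΦ, hl0]⟩
  have hcl : IsClosed C := by
    have h1 : IsClosed {l : A → ℝ | 0 ≤ l} := isClosed_le continuous_const continuous_id
    have h2 : IsClosed {l : A → ℝ | Φ l = y} := by
      have h3 : IsClosed ((LinearMap.ker Φ : Submodule ℝ (A → ℝ)) : Set (A → ℝ)) :=
        Submodule.closed_of_finiteDimensional _
      have h4 := h3.preimage (f := fun l : A → ℝ => l - (fun i : A => l0 i)) (by fun_prop)
      convert h4 using 1
      ext l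
      simp [hΦ, ← hl0, sub_eq_zero]
    exact h1.inter h2
  have hsub : C ⊆ Set.Icc 0 (fun _ => ht y) := by
    rintro l ⟨h0, h1⟩
    refine ⟨h0, fun i => ?_⟩
    have : ht y = ∑ i, l i := by
      rw [← h1]
      simp only [Φ, Fintype.linearCombination_apply, map_sum, map_smul, smul_eq_mul]
      exact Finset.sum_congr rfl fun i _ => by rw [hA i i.2, mul_one]
    rw [this]
    exact Finset.single_le_sum (f := l) (fun j _ => h0 j) (Finset.mem_univ i)
  have hcomp : IsCompact C := isCompact_Icc.of_isClosed_subset hcl hsub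
  obtain ⟨l, hlC, hl⟩ := hcomp.exists_isMinOn hne
    (f := fun l : A → ℝ => ∑ i, l i * w i) (by fun_prop)
  have hext : ∀ i : A, (fun e : E => if h : e ∈ A then l ⟨e, h⟩ else 0) i = l i := by
    intro i; simp
  refine ⟨fun e => if h : e ∈ A then l ⟨e, h⟩ else 0, ?_, ?_, ?_⟩
  · intro i hi
    simpa [hi] using hlC.1 ⟨i, hi⟩
  · rw [← hΦ]
    simp only [hext]
    exact hlC.2
  · intro m hm hmy
    have := hl (show (fun i : A => m i) ∈ C from ⟨fun i => hm i i.2, by rw [hΦ, hmy]⟩)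
    rw [Set.mem_ofPred_eq] at this
    rw [← Finset.sum_coe_sort A, ← Finset.sum_coe_sort A (fun i => m i * w i)]
    simp only [hext]
    exact this

lemma rel_sum {A F : Finset E} (hFA : F ⊆ A) {j : E} (hj : j ∈ A) (c : E → ℝ)
    {M : Type*} [AddCommGroup M] [Module ℝ M] (f : E → M) :
    ∑ i ∈ A, ((if i = j then 1 else 0) - (if i ∈ F then c i else 0) : ℝ) • f i
      = f j - ∑ i ∈ F, c i • f i := by
  simp only [sub_smul, Finset.sum_sub_distrib, ite_smul, one_smul, zero_smul]
  congr 1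
  · simp [hj]
  · rw [← Finset.sum_filter]
    congr 1
    ext i; simp only [Finset.mem_filter]
    exact ⟨fun h => h.2, fun h => ⟨hFA h, h⟩⟩

lemma lp_ex (ht : E →ₗ[ℝ] ℝ) (A : Finset E) (hA : ∀ a ∈ A, ht a = 1) (w : E → ℝ)
    (hw : ∀ F ⊆ A, ∀ j ∈ A, j ∉ F → psi F w j ≠ w j) (y : E)
    (hy : y ∈ K A ∅)
    (hgen : ∀ F ⊆ A, isB (Submodule.span ℝ (A : Set E)) F → ∀ i ∈ F, cf F y i ≠ 0) :
    ∃ F ⊆ A, isB (Submodule.span ℝ (A : Set E)) F ∧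
      (∀ j ∈ A, j ∉ F → psi F w j < w j) ∧ ∀ i ∈ F, 0 ≤ cf F y i := by
  obtain ⟨l, hl0, hly, hmin⟩ := opt_ex ht A hA w y hy
  have pert : ∀ d : E → ℝ, ∑ i ∈ A, d i • i = 0 → (∀ i ∈ A, l i = 0 → 0 ≤ d i) →
      0 ≤ ∑ i ∈ A, d i * w i := by
    intro d hd hd0
    have : ∀ᶠ ε : ℝ in 𝓝[>] 0, ∀ i ∈ A, 0 ≤ l i + ε * d i := by
      rw [Filter.eventually_all_finset]
      intro i hi
      rcases (hl0 i hi).eq_or_lt with h | h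
      · filter_upwards [self_mem_nhdsWithin] with ε (hε : 0 < ε)
        have := hd0 i hi h.symm
        rw [← h]; positivity
      · filter_upwards [ev_pos (β := d i) h] with ε hε using hε.le
    obtain ⟨ε, hε, hε0 : 0 < ε⟩ := (this.and self_mem_nhdsWithin).exists
    have := hmin (fun i => l i + ε * d i) hε (by
      simp only [add_smul, mul_smul, Finset.sum_add_distrib, ← Finset.smul_sum, hd, hly]
      simp)
    simp only [add_mul, Finset.sum_add_distrib, mul_assoc, ← Finset.mul_sum] at this
    have h3 : 0 ≤ ε * ∑ i ∈ A, d i * w i := by linarith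
    exact nonneg_of_mul_nonneg_right h3 hε0
  have rel : ∀ F ⊆ A, LinearIndepOn ℝ id (F : Set E) → ∀ j ∈ A,
      j ∈ Submodule.span ℝ (F : Set E) →
      (∑ i ∈ A, ((if i = j then 1 else 0) - (if i ∈ F then cf F j i else 0) : ℝ) • i = 0) ∧
      (∑ i ∈ A, ((if i = j then 1 else 0) - (if i ∈ F then cf F j i else 0) : ℝ) * w i
        = w j - psi F w j) := by
    intro F hF hLI j hj hjF
    constructor
    · rw [rel_sum hF hj (cf F j) (fun i => i), sum_cf hLI hjF, sub_self]
    · exact rel_sum hF hj (cf F j) w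
  let S := A.filter (fun i => 0 < l i)
  have hSA : S ⊆ A := Finset.filter_subset _ _
  have hSl : ∀ i ∈ A, i ∉ S → l i = 0 := by
    intro i hi hiS
    by_contra h
    exact hiS (Finset.mem_filter.mpr ⟨hi, lt_of_le_of_ne (hl0 i hi) (Ne.symm h)⟩)
  have hSLI : LinearIndepOn ℝ id (S : Set E) := by
    obtain ⟨b, hbS, hbspan, hbLI⟩ := exists_linearIndependent ℝ (S : Set E)
    obtain ⟨F, rfl⟩ := (S.finite_toSet.subset hbS).exists_finset_coe
    have hFLI : LinearIndepOn ℝ id (F : Set E) := hbLI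
    have hFS : F ⊆ S := by exact_mod_cast hbS
    by_cases hSF : S ⊆ F
    · rwa [Finset.Subset.antisymm hSF hFS]
    · exfalso
      obtain ⟨j, hjS, hjF⟩ := Finset.not_subset.mp hSF
      have hjs : j ∈ Submodule.span ℝ (F : Set E) := hbspan ▸ Submodule.subset_span hjS
      obtain ⟨r1, r2⟩ := rel F (hFS.trans hSA) hFLI j (hSA hjS) hjs
      have hz : ∀ i ∈ A, l i = 0 →
          ((if i = j then 1 else 0) - (if i ∈ F then cf F j i else 0) : ℝ) = 0 := by
        intro i hi h0
        have hiS : i ∉ S := fun h => by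
          have := (Finset.mem_filter.mp h).2
          linarith
        have h1 : i ≠ j := fun h => hiS (h ▸ hjS)
        have h2 : i ∉ F := fun h => hiS (hFS h)
        simp [h1, h2]
      have q1 := pert _ r1 (fun i hi h => (hz i hi h).ge)
      have q2 := pert (fun i => -((if i = j then 1 else 0) - (if i ∈ F then cf F j i else 0) : ℝ))
        (by simp only [neg_smul, Finset.sum_neg_distrib, r1, neg_zero])
        (fun i hi h => by rw [hz i hi h]; simp)
      simp only [neg_mul, Finset.sum_neg_distrib] at q2
      rw [r2] at q1 q2
      exact hw F (hFS.trans hSA) j (hSA hjS) hjF (by linarith)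
  obtain ⟨b, hSb, hbA, hAb, hbLI⟩ : ∃ b : Set E, (S : Set E) ⊆ b ∧ b ⊆ (A : Set E) ∧
      (A : Set E) ⊆ Submodule.span ℝ b ∧ LinearIndepOn ℝ id b := by
    obtain ⟨b, h1, h2, h3, h4⟩ := exists_linearIndepOn_id_extension hSLI
      (show (S : Set E) ⊆ A from by exact_mod_cast hSA)
    exact ⟨b, h2, h1, h3, h4⟩
  obtain ⟨F, rfl⟩ := (A.finite_toSet.subset hbA).exists_finset_coe
  have hFA : F ⊆ A := by exact_mod_cast hbA
  have hSF : S ⊆ F := by exact_mod_cast hSb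
  have hB : isB (Submodule.span ℝ (A : Set E)) F :=
    ⟨hbLI, le_antisymm (Submodule.span_mono hbA) (Submodule.span_le.mpr hAb)⟩
  have hyF : y = ∑ i ∈ F, l i • i := by
    rw [← hly]
    symm
    apply Finset.sum_subset hFA
    intro i hi hiF
    rw [hSl i hi (fun h => hiF (hSF h)), zero_smul]
  have hcl : ∀ i ∈ F, cf F y i = l i := fun i hi => by rw [hyF, cf_sum hbLI l hi]
  refine ⟨F, hFA, hB, ?_, fun i hi => (hcl i hi) ▸ hl0 i (hFA hi)⟩
  intro j hj hjF
  obtain ⟨r1, r2⟩ := rel F hFA hbLI j hj (hAb hj)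
  have q1 := pert _ r1 (by
    intro i hi h0
    have hiF : i ∉ F := fun h => hgen F hFA hB i h (by rw [hcl i h, h0])
    simp only [hiF, if_false, sub_zero]
    split_ifs <;> norm_num)
  rw [r2] at q1
  exact lt_of_le_of_ne (by linarith) (hw F hFA j hj hjF)

end Stan
namespace Stan

open Classical Filter Topology

variable {E : Type*} [AddCommGroup E] [Module ℝ E]

/-- The half-open regular dissection with weights `w`, seen from `z`. -/
noncomputable def Tset (A : Finset E) (w : E → ℝ) (z : E) : Finset (Finset E × Finset E) :=
  (A.powerset.filter (fun F => isB (Submodule.span ℝ (A : Set E)) F ∧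
    ∀ j ∈ A, j ∉ F → psi F w j < w j)).image (fun F => (F, F.filter (fun i => cf F z i < 0)))

lemma mem_Tset {A : Finset E} {w : E → ℝ} {z : E} {p : Finset E × Finset E} :
    p ∈ Tset A w z ↔ p.1 ⊆ A ∧ isB (Submodule.span ℝ (A : Set E)) p.1 ∧
      (∀ j ∈ A, j ∉ p.1 → psi p.1 w j < w j) ∧ p.2 = p.1.filter (fun i => cf p.1 z i < 0) := by
  unfold Tset
  rw [Finset.mem_image]
  constructor
  · rintro ⟨F, hF, rfl⟩
    rw [Finset.mem_filter, Finset.mem_powerset] at hF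
    exact ⟨hF.1, hF.2.1, hF.2.2, rfl⟩
  · rintro ⟨h1, h2, h3, h4⟩
    refine ⟨p.1, ?_, Prod.ext rfl h4.symm⟩
    rw [Finset.mem_filter, Finset.mem_powerset]
    exact ⟨h1, h2, h3⟩

lemma K_add {A : Finset E} {x z : E} (hx : x ∈ K A ∅) (hz : z ∈ K A ∅) {ε : ℝ} (hε : 0 < ε) :
    x + ε • z ∈ K A ∅ := by
  obtain ⟨l, rfl, hl⟩ := hx
  obtain ⟨m, rfl, hm⟩ := hz
  refine ⟨fun i => l i + ε * m i, ?_, fun i hi => ?_⟩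
  · simp only [add_smul, mul_smul, Finset.sum_add_distrib, Finset.smul_sum]
  · have h1 := ok_empty.mp (hl i hi)
    have h2 := ok_empty.mp (hm i hi)
    rw [ok_empty]
    positivity

lemma K_span {F R : Finset E} {x : E} (hx : x ∈ K F R) :
    x ∈ Submodule.span ℝ (F : Set E) := by
  obtain ⟨l, rfl, -⟩ := hx
  exact sum_mem_span l

lemma Tset_key {A F G : Finset E} {w : E → ℝ} {y : E} (hG : G ⊆ A)
    (hF1 : LinearIndepOn ℝ id (F : Set E))
    (hF : ∀ j ∈ A, j ∉ F → psi F w j < w j) (hGF : ¬ G ⊆ F) 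
    (hyG : ∑ i ∈ G, cf G y i • i = y) (hpos : ∀ i ∈ G, 0 < cf G y i) :
    psi F w y < psi G w y := by
  conv_lhs => rw [← hyG, psi_sum]
  unfold psi
  obtain ⟨j, hjG, hjF⟩ := Finset.not_subset.mp hGF
  apply Finset.sum_lt_sum
  · intro i hi
    apply mul_le_mul_of_nonneg_left _ (hpos i hi).le
    by_cases hiF : i ∈ F
    · exact (psi_self hF1 w hiF).le
    · exact (hF i (hG hi) hiF).le
  · exact ⟨j, hjG, mul_lt_mul_of_pos_left (hF j (hG hjG) hjF) (hpos j hjG)⟩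

lemma HD_Tset (ht : E →ₗ[ℝ] ℝ) (A : Finset E) (hA : ∀ a ∈ A, ht a = 1) (w : E → ℝ)
    (hw : ∀ F ⊆ A, ∀ j ∈ A, j ∉ F → psi F w j ≠ w j) (z : E) (hz : z ∈ K A ∅)
    (hgen : ∀ F ⊆ A, isB (Submodule.span ℝ (A : Set E)) F → ∀ i ∈ F, cf F z i ≠ 0) :
    HD A (Tset A w z) := by
  refine ⟨fun p hp => (mem_Tset.mp hp).1, fun p hp => ?_, fun p hp => (mem_Tset.mp hp).2.1.1,
    fun p hp => ?_, ?_, ?_⟩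
  · rw [(mem_Tset.mp hp).2.2.2]; exact Finset.filter_subset _ _
  · have h := (mem_Tset.mp hp).2.1
    rw [← h.2, finrank_span_finset_eq_card h.1]
  · intro x hx
    by_contra! hno
    have hev : ∀ᶠ ε : ℝ in 𝓝[>] 0, ∀ p ∈ A.powerset ×ˢ A,
        isB (Submodule.span ℝ (A : Set E)) p.1 → p.2 ∈ p.1 →
          cf p.1 (x + ε • z) p.2 ≠ 0 := by
      rw [Filter.eventually_all_finset]
      rintro ⟨F, i⟩ hp
      rw [Finset.mem_product, Finset.mem_powerset] at hp
      by_cases hB : isB (Submodule.span ℝ (A : Set E)) F ∧ i ∈ F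
      · filter_upwards [ev_ne' (α := cf F x i) (hgen F hp.1 hB.1 i hB.2)] with ε hε _ _
        simpa using hε
      · exact Eventually.of_forall fun ε h1 h2 => absurd ⟨h1, h2⟩ hB
    have hev2 : ∀ᶠ ε : ℝ in 𝓝[>] 0, ∀ p ∈ Tset A w z,
        ¬ ∀ i ∈ p.1, 0 ≤ cf p.1 (x + ε • z) i := by
      rw [Filter.eventually_all_finset]
      rintro ⟨F, R⟩ hp
      have hnp := hno _ hp
      obtain ⟨hFA, hB, hg, hR⟩ := mem_Tset.mp hp
      dsimp only at hFA hB hg hR hnp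
      have hxF : x ∈ Submodule.span ℝ (F : Set E) := hB.2 ▸ K_span hx
      obtain ⟨i, hi, hni⟩ : ∃ i ∈ F, ¬ ok R i (cf F x i) := by
        by_contra! h
        exact hnp ⟨cf F x, (sum_cf hB.1 hxF).symm, h⟩
      have : ∀ᶠ ε : ℝ in 𝓝[>] 0, cf F x i + ε * cf F z i < 0 := by
        unfold ok at hni
        split_ifs at hni with hiR
        · rw [hR, Finset.mem_filter] at hiR
          filter_upwards [self_mem_nhdsWithin] with ε (hε : 0 < ε)
          have := mul_neg_of_pos_of_neg hε hiR.2
          linarith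
        · filter_upwards [ev_pos (α := - cf F x i) (β := - cf F z i) (by linarith)] with ε hε
          linarith
      filter_upwards [this] with ε hε hall
      have := hall i hi
      simp at this
      linarith
    obtain ⟨ε, ⟨h1, h2⟩, h3 : 0 < ε⟩ := ((hev.and hev2).and self_mem_nhdsWithin).exists
    obtain ⟨F, hFA, hB, hg, hp⟩ := lp_ex ht A hA w hw (x + ε • z) (K_add hx hz h3) (by
      intro F hF hB i hi
      exact h1 (F, i) (by simp [hF, hF hi]) hB hi)
    exact h2 (F, F.filter (fun i => cf F z i < 0)) (mem_Tset.mpr ⟨hFA, hB, hg, rfl⟩) hp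
  · intro x p hp p' hp' hx hx'
    have hevpos : ∀ p ∈ Tset A w z, x ∈ K p.1 p.2 →
        ∀ᶠ ε : ℝ in 𝓝[>] 0, ∀ i ∈ p.1, 0 < cf p.1 (x + ε • z) i := by
      rintro ⟨F, R⟩ hp hx
      obtain ⟨hFA, hB, hg, hR⟩ := mem_Tset.mp hp
      dsimp only at hFA hB hg hR hx ⊢
      rw [Filter.eventually_all_finset]
      intro i hi
      obtain ⟨l, rfl, hl⟩ := hx
      have h0 := hl i hi
      have hne := hgen F hFA hB i hi
      simp only [map_add, map_smul, Pi.add_apply, Pi.smul_apply, smul_eq_mul,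
        cf_sum hB.1 l hi]
      unfold ok at h0
      split_ifs at h0 with hiR
      · exact ev_pos h0
      · rcases h0.eq_or_lt with h | h
        · have hpos : 0 < cf F z i := by
            by_contra hc
            exact hiR (by
              rw [hR, Finset.mem_filter]
              exact ⟨hi, lt_of_le_of_ne (not_lt.mp hc) hne⟩)
          filter_upwards [self_mem_nhdsWithin] with ε (hε : 0 < ε)
          rw [← h]; positivity
        · exact ev_pos h
    obtain ⟨ε, h1, h2⟩ := ((hevpos p hp hx).and (hevpos p' hp' hx')).exists
    obtain ⟨hFA, hB, hg, hR⟩ := mem_Tset.mp hp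
    obtain ⟨hFA', hB', hg', hR'⟩ := mem_Tset.mp hp'
    have hys : x + ε • z ∈ Submodule.span ℝ (A : Set E) :=
      Submodule.add_mem _ (hB.2 ▸ K_span hx) (Submodule.smul_mem _ _ (K_span hz))
    have e1 := sum_cf hB.1 (x := x + ε • z) (hB.2.symm ▸ hys)
    have e2 := sum_cf hB'.1 (x := x + ε • z) (hB'.2.symm ▸ hys)
    have hcard : p.1.card = p'.1.card := by
      rw [← finrank_span_finset_eq_card hB.1, ← finrank_span_finset_eq_card hB'.1, hB.2, hB'.2]
    have hFF : p.1 = p'.1 := by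
      by_contra hne
      have n1 : ¬ p.1 ⊆ p'.1 := fun h => hne (Finset.eq_of_subset_of_card_le h hcard.ge)
      have n2 : ¬ p'.1 ⊆ p.1 := fun h => hne (Finset.eq_of_subset_of_card_le h hcard.le).symm
      have q1 := Tset_key hFA hB'.1 hg' n1 e1 h1
      have q2 := Tset_key hFA' hB.1 hg n2 e2 h2
      linarith
    exact Prod.ext hFF (by rw [hR, hR', hFF])

theorem exists_HD (ht : E →ₗ[ℝ] ℝ) (A A' : Finset E) (hA' : ∀ a ∈ A', ht a = 1) (hsub : A ⊆ A')
    (hspan : Submodule.span ℝ (A : Set E) = Submodule.span ℝ (A' : Set E)) :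
    ∃ T T', T ⊆ T' ∧ HD A T ∧ HD A' T' := by
  obtain ⟨w, hw1, hw2⟩ := choose_w A A'
  obtain ⟨z, hz, hgen⟩ := choose_z A A'
  refine ⟨Tset A w z, Tset A' w z, ?_, ?_, ?_⟩
  · intro p hp
    rw [mem_Tset] at hp ⊢
    refine ⟨hp.1.trans hsub, hspan ▸ hp.2.1, fun j hj hjF => ?_, hp.2.2.2⟩
    by_cases hjA : j ∈ A
    · exact hp.2.2.1 j hjA hjF
    · exact hw2 _ hp.1 j hj hjA
  · exact HD_Tset ht A (fun a ha => hA' a (hsub ha)) w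
      (fun F hF j hj => hw1 F (hF.trans hsub) j (hsub hj)) z hz
      (fun F hF => hgen F (hF.trans hsub))
  · exact HD_Tset ht A' hA' w hw1 z (K_mono hsub hz) (by rw [← hspan]; exact hgen)

lemma K_insert {F R : Finset E} {v : E} (hvF : v ∉ F) (hvR : v ∉ R) {x : E} :
    x ∈ K (insert v F) R ↔ ∃ t : ℝ, 0 ≤ t ∧ ∃ y ∈ K F R, x = t • v + y := by
  constructor
  · rintro ⟨l, rfl, hl⟩
    refine ⟨l v, (hl v (Finset.mem_insert_self _ _)).nonneg, _,
      ⟨l, rfl, fun i hi => hl i (Finset.mem_insert_of_mem hi)⟩, ?_⟩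
    rw [Finset.sum_insert hvF]
  · rintro ⟨t, h0, y, ⟨l, rfl, hl⟩, rfl⟩
    have hne : ∀ i ∈ F, i ≠ v := fun i hi h => hvF (h ▸ hi)
    refine ⟨Function.update l v t, ?_, ?_⟩
    · rw [Finset.sum_insert hvF, Function.update_self]
      congr 1
      exact Finset.sum_congr rfl fun i hi => by rw [Function.update_of_ne (hne i hi)]
    · intro i hi
      rcases Finset.mem_insert.mp hi with rfl | hi
      · rw [Function.update_self]; simpa [ok, hvR] using h0
      · rw [Function.update_of_ne (hne i hi)]; exact hl i hi

lemma split_uniq {W : Submodule ℝ E} {v : E} (hv : v ∉ W) {t t' : ℝ} {y y' : E} (hy : y ∈ W)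
    (hy' : y' ∈ W) (h : t • v + y = t' • v + y') : y = y' := by
  have h1 : (t - t') • v = y' - y := by
    rw [sub_smul, sub_eq_sub_iff_add_eq_add, h, add_comm]
  by_cases ht : t - t' = 0
  · rw [ht, zero_smul] at h1
    exact (sub_eq_zero.mp h1.symm).symm
  · exfalso
    apply hv
    have : v = (t - t')⁻¹ • (y' - y) := by rw [← h1, smul_smul, inv_mul_cancel₀ ht, one_smul]
    rw [this]
    exact W.smul_mem _ (W.sub_mem hy' hy)

theorem HD_pyr {A : Finset E} {T : Finset (Finset E × Finset E)} (h : HD A T) {v : E}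
    (hv : v ∉ Submodule.span ℝ (A : Set E)) :
    HD (insert v A) (T.image (fun p => (insert v p.1, p.2))) := by
  have hvA : v ∉ A := fun h' => hv (Submodule.subset_span h')
  have hvF : ∀ p ∈ T, v ∉ p.1 := fun p hp h' => hvA (h.sub p hp h')
  have hvR : ∀ p ∈ T, v ∉ p.2 := fun p hp h' => hvF p hp (h.rsub p hp h')
  have hvs : ∀ p ∈ T, v ∉ Submodule.span ℝ (p.1 : Set E) := fun p hp h' =>
    hv (Submodule.span_mono (by exact_mod_cast h.sub p hp) h')
  have hLI : ∀ F : Finset E, LinearIndepOn ℝ id (F : Set E) →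
      v ∉ Submodule.span ℝ (F : Set E) → LinearIndepOn ℝ id ((insert v F : Finset E) : Set E) := by
    intro F hF hvF
    rw [Finset.coe_insert]
    exact hF.id_insert hvF
  have hfr : Module.finrank ℝ (Submodule.span ℝ ((insert v A : Finset E) : Set E)) =
      Module.finrank ℝ (Submodule.span ℝ (A : Set E)) + 1 := by
    obtain ⟨b, hbS, hbspan, hbLI⟩ := exists_linearIndependent ℝ (A : Set E)
    obtain ⟨F, rfl⟩ := (A.finite_toSet.subset hbS).exists_finset_coe
    have hFLI : LinearIndepOn ℝ id (F : Set E) := hbLI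
    have h1 : Submodule.span ℝ ((insert v A : Finset E) : Set E) =
        Submodule.span ℝ ((insert v F : Finset E) : Set E) := by
      rw [Finset.coe_insert, Finset.coe_insert, Submodule.span_insert, Submodule.span_insert,
        hbspan]
    have hvF : v ∉ Submodule.span ℝ (F : Set E) := hbspan ▸ hv
    rw [h1, finrank_span_finset_eq_card (hLI F hFLI hvF), ← hbspan,
      finrank_span_finset_eq_card hFLI, Finset.card_insert_of_notMem
        (fun h' => hvF (Submodule.subset_span h'))]
  refine ⟨?_, ?_, ?_, ?_, ?_, ?_⟩
  · intro p hq
    obtain ⟨p, hp, rfl⟩ := Finset.mem_image.mp hq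
    exact Finset.insert_subset_insert _ (h.sub p hp)
  · intro p hq
    obtain ⟨p, hp, rfl⟩ := Finset.mem_image.mp hq
    exact (h.rsub p hp).trans (Finset.subset_insert _ _)
  · intro p hq
    obtain ⟨p, hp, rfl⟩ := Finset.mem_image.mp hq
    exact hLI _ (h.li p hp) (hvs p hp)
  · intro p hq
    obtain ⟨p, hp, rfl⟩ := Finset.mem_image.mp hq
    rw [hfr, Finset.card_insert_of_notMem (hvF p hp), h.card p hp]
  · intro x hx
    obtain ⟨t, h0, y, hy, rfl⟩ := (K_insert hvA (Finset.notMem_empty _)).mp hx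
    obtain ⟨p, hp, hyp⟩ := h.ex y hy
    exact ⟨_, Finset.mem_image_of_mem _ hp,
      (K_insert (hvF p hp) (hvR p hp)).mpr ⟨t, h0, y, hyp, rfl⟩⟩
  · intro x p hq p' hq' hx hx'
    obtain ⟨p, hp, rfl⟩ := Finset.mem_image.mp hq
    obtain ⟨p', hp', rfl⟩ := Finset.mem_image.mp hq'
    obtain ⟨t, h0, y, hy, rfl⟩ := (K_insert (hvF p hp) (hvR p hp)).mp hx
    obtain ⟨t', h0', y', hy', he⟩ := (K_insert (hvF p' hp') (hvR p' hp')).mp hx'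
    have := split_uniq hv (Submodule.span_mono (by exact_mod_cast h.sub p hp) (K_span hy))
      (Submodule.span_mono (by exact_mod_cast h.sub p' hp') (K_span hy')) he
    subst this
    rw [h.uniq y p hp p' hp' hy hy']

end Stan
namespace Stan

open Classical

variable {E : Type*} [AddCommGroup E] [Module ℝ E]

/-- Points of `S` at height `k`. -/
def lev (ht : E →ₗ[ℝ] ℝ) (S : Set E) (k : ℕ) : Set E := {x | x ∈ S ∧ ht x = k}

/-- Generating series of a graded set. -/
noncomputable def gen (ht : E →ₗ[ℝ] ℝ) (S : Set E) : PowerSeries ℤ :=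
  PowerSeries.mk fun k => ((lev ht S k).ncard : ℤ)

lemma gen_step (ht : E →ₗ[ℝ] ℝ) (S : Set E) (v : E) (hv : ht v = 1)
    (hS : ∀ x ∈ S, x + v ∈ S) (h0 : ∀ x ∈ S, 0 ≤ ht x) (hfin : ∀ k, (lev ht S k).Finite) :
    (1 - PowerSeries.X) * gen ht S = gen ht {x | x ∈ S ∧ x - v ∉ S} := by
  ext k
  rw [sub_mul, one_mul, map_sub]
  cases k with
  | zero =>
    rw [PowerSeries.coeff_zero_X_mul, sub_zero]
    simp only [gen, PowerSeries.coeff_mk]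
    congr 2
    ext x
    constructor
    · rintro ⟨h1, h2⟩
      refine ⟨⟨h1, fun h => ?_⟩, h2⟩
      have := h0 _ h
      rw [map_sub, hv, h2] at this
      norm_num at this
    · rintro ⟨h1, h2⟩
      exact ⟨h1.1, h2⟩
  | succ k =>
    rw [PowerSeries.coeff_succ_X_mul]
    simp only [gen, PowerSeries.coeff_mk]
    have hU : lev ht S (k + 1) =
        lev ht {x | x ∈ S ∧ x - v ∉ S} (k + 1) ∪ (fun x => x + v) '' lev ht S k := by
      ext x
      constructor
      · rintro ⟨h1, h2⟩
        by_cases h : x - v ∈ S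
        · right
          exact ⟨x - v, ⟨h, by rw [map_sub, h2, hv]; push_cast; ring⟩, by simp⟩
        · left; exact ⟨⟨h1, h⟩, h2⟩
      · rintro (⟨h1, h2⟩ | ⟨y, ⟨h1, h2⟩, rfl⟩)
        · exact ⟨h1.1, h2⟩
        · exact ⟨hS _ h1, by simp [hv, h2]⟩
    have hd : Disjoint (lev ht {x | x ∈ S ∧ x - v ∉ S} (k + 1))
        ((fun x => x + v) '' lev ht S k) := by
      rw [Set.disjoint_left]
      rintro x ⟨h1, h2⟩ ⟨y, ⟨h3, h4⟩, rfl⟩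
      exact h1.2 (by simpa using h3)
    have hf1 := (hfin (k + 1)).subset (hU ▸ Set.subset_union_left)
    rw [hU, Set.ncard_union_eq hd hf1 ((hfin k).image _),
      Set.ncard_image_of_injective _ (add_left_injective v)]
    push_cast; ring

/-- Lattice points of the half-open cone, reduced in the directions `G`. -/
def D (L : AddSubgroup E) (F R G : Finset E) : Set E :=
  {x | x ∈ L ∧ ∃ l : E → ℝ, x = ∑ i ∈ F, l i • i ∧ (∀ i ∈ F, ok R i (l i)) ∧
    ∀ i ∈ G, ¬ ok R i (l i - 1)}

lemma D_sub_K {L : AddSubgroup E} {F R G : Finset E} : D L F R G ⊆ K F R := by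
  rintro x ⟨-, l, h1, h2, -⟩
  exact ⟨l, h1, h2⟩

lemma D_empty {L : AddSubgroup E} {F R : Finset E} : D L F R ∅ = {x | x ∈ L ∧ x ∈ K F R} := by
  ext x
  constructor
  · intro h; exact ⟨h.1, D_sub_K h⟩
  · rintro ⟨h, l, h1, h2⟩; exact ⟨h, l, h1, h2, by simp⟩

lemma ht_nonneg {ht : E →ₗ[ℝ] ℝ} {F R : Finset E} (hF : ∀ a ∈ F, ht a = 1) {x : E}
    (hx : x ∈ K F R) : 0 ≤ ht x := by
  obtain ⟨l, rfl, hl⟩ := hx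
  rw [map_sum]
  apply Finset.sum_nonneg
  intro i hi
  rw [map_smul, hF i hi]
  simpa using (hl i hi).nonneg

lemma gen_box (ht : E →ₗ[ℝ] ℝ) (L : AddSubgroup E) (F R : Finset E)
    (hF : ∀ a ∈ F, ht a = 1) (hFL : ∀ a ∈ F, a ∈ L) (hLI : LinearIndepOn ℝ id (F : Set E))
    (hfin : ∀ k, (lev ht (D L F R ∅) k).Finite) (G : Finset E) (hG : G ⊆ F) :
    (1 - PowerSeries.X) ^ G.card * gen ht (D L F R ∅) = gen ht (D L F R G) := by
  induction G using Finset.induction_on with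
  | empty => simp
  | insert v G hvG ih =>
    have hv : v ∈ F := hG (Finset.mem_insert_self _ _)
    rw [Finset.card_insert_of_notMem hvG, pow_succ', mul_assoc,
      ih ((Finset.subset_insert _ _).trans hG)]
    have hsum : ∀ (l : E → ℝ) (c : ℝ), ∑ i ∈ F, (l i + if i = v then c else 0) • i =
        ∑ i ∈ F, l i • i + c • v := by
      intro l c
      simp [add_smul, Finset.sum_add_distrib, ite_smul, hv]
    have hGv : ∀ i ∈ G, i ≠ v := fun i hi h => hvG (h ▸ hi)
    rw [gen_step ht (D L F R G) v (hF v hv)]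
    · congr 1
      ext x
      constructor
      · rintro ⟨⟨hxL, l, rfl, h1, h2⟩, h3⟩
        refine ⟨hxL, l, rfl, h1, ?_⟩
        intro i hi
        rcases Finset.mem_insert.mp hi with rfl | hi
        · intro hok
          apply h3
          refine ⟨L.sub_mem hxL (hFL i hv), fun j => l j + if j = i then (-1) else 0, ?_, ?_, ?_⟩
          · rw [hsum]; simp [sub_eq_add_neg]
          · intro j hj
            by_cases hji : j = i
            · subst hji; simpa [sub_eq_add_neg] using hok
            · simpa [hji] using h1 j hj
          · intro j hj
            simpa [hGv j hj] using h2 j hj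
        · exact h2 i hi
      · rintro ⟨hxL, l, rfl, h1, h2⟩
        refine ⟨⟨hxL, l, rfl, h1, fun i hi => h2 i (Finset.mem_insert_of_mem hi)⟩, ?_⟩
        rintro ⟨-, m, hm, hm1, -⟩
        have : ∑ i ∈ F, (l i + if i = v then (-1) else 0) • i = ∑ i ∈ F, m i • i := by
          rw [hsum, ← hm]; simp [sub_eq_add_neg]
        have hh := li_eq hLI this v hv
        apply h2 v (Finset.mem_insert_self _ _)
        have := hm1 v hv
        rw [← hh] at this
        simpa [sub_eq_add_neg] using this
    · rintro x ⟨hxL, l, rfl, h1, h2⟩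
      refine ⟨L.add_mem hxL (hFL v hv), fun j => l j + if j = v then 1 else 0, ?_, ?_, ?_⟩
      · rw [hsum, one_smul]
      · intro j hj
        apply (h1 j hj).mono
        dsimp only
        split_ifs <;> linarith
      · intro j hj
        simpa [hGv j hj] using h2 j hj
    · exact fun x hx => ht_nonneg hF (D_sub_K hx)
    · intro k
      apply (hfin k).subset
      rintro x ⟨hx, hk⟩
      refine ⟨?_, hk⟩
      rw [D_empty]
      exact ⟨hx.1, D_sub_K hx⟩

/-- Lattice points of the cone over `A`. -/
def LC (L : AddSubgroup E) (A : Finset E) : Set E := {x | x ∈ L ∧ x ∈ K A ∅}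

lemma gen_sum (ht : E →ₗ[ℝ] ℝ) (L : AddSubgroup E) (A : Finset E)
    (T : Finset (Finset E × Finset E)) (h : HD A T) (hfin : ∀ k, (lev ht (LC L A) k).Finite) :
    gen ht (LC L A) = ∑ p ∈ T, gen ht (D L p.1 p.2 ∅) := by
  ext k
  rw [map_sum]
  simp only [gen, PowerSeries.coeff_mk]
  have hU : lev ht (LC L A) k = ⋃ p ∈ T, lev ht (D L p.1 p.2 ∅) k := by
    ext x
    simp only [Set.mem_iUnion, exists_prop]
    constructor
    · rintro ⟨⟨h1, h2⟩, h3⟩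
      obtain ⟨p, hp, hx⟩ := h.ex x h2
      exact ⟨p, hp, by rw [D_empty]; exact ⟨h1, hx⟩, h3⟩
    · rintro ⟨p, hp, h1, h2⟩
      exact ⟨⟨h1.1, K_mono (h.sub p hp) (D_sub_K h1)⟩, h2⟩
  have hfp : ∀ p ∈ T, (lev ht (D L p.1 p.2 ∅) k).Finite := by
    intro p hp
    apply (hfin k).subset
    rw [hU]
    exact Set.subset_biUnion_of_mem (u := fun p : Finset E × Finset E => lev ht (D L p.1 p.2 ∅) k) hp
  have hc : (lev ht (LC L A) k).ncard =
      ∑ p ∈ T, ((hfin k).toFinset.filter (fun x => x ∈ K p.1 p.2)).card := by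
    rw [Set.ncard_eq_toFinset_card _ (hfin k), ← Finset.card_biUnion]
    · congr 1
      ext x
      simp only [Set.Finite.mem_toFinset, Finset.mem_biUnion, Finset.mem_filter]
      constructor
      · intro hx
        obtain ⟨p, hp, hxp⟩ := h.ex x hx.1.2
        exact ⟨p, hp, hx, hxp⟩
      · rintro ⟨p, hp, hx, -⟩; exact hx
    · intro p hp p' hp' hne
      rw [Function.onFun, Finset.disjoint_left]
      intro x hx hx'
      exact hne (h.uniq x p hp p' hp' (Finset.mem_filter.mp hx).2 (Finset.mem_filter.mp hx').2)
  rw [hc]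
  push_cast
  refine Finset.sum_congr rfl fun p hp => ?_
  rw [← Set.ncard_coe_finset]
  congr 2
  ext x
  rw [Finset.mem_coe, Finset.mem_filter, Set.Finite.mem_toFinset]
  constructor
  · rintro ⟨h1, h2⟩
    exact ⟨by rw [D_empty]; exact ⟨h1.1.1, h2⟩, h1.2⟩
  · rintro ⟨h1, h2⟩
    exact ⟨⟨⟨h1.1, K_mono (h.sub p hp) (D_sub_K h1)⟩, h2⟩, D_sub_K h1⟩

/-- The `h^*` series. -/
noncomputable def hs (ht : E →ₗ[ℝ] ℝ) (L : AddSubgroup E) (A : Finset E) : PowerSeries ℤ :=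
  (1 - PowerSeries.X) ^ (Module.finrank ℝ (Submodule.span ℝ (A : Set E))) * gen ht (LC L A)

lemma fin_D {ht : E →ₗ[ℝ] ℝ} {L : AddSubgroup E} {A F R G : Finset E} (hFA : F ⊆ A)
    (hfin : ∀ k, (lev ht (LC L A) k).Finite) (k : ℕ) : (lev ht (D L F R G) k).Finite := by
  apply (hfin k).subset
  rintro x ⟨h1, h2⟩
  exact ⟨⟨h1.1, K_mono hFA (D_sub_K h1)⟩, h2⟩

lemma hs_eq (ht : E →ₗ[ℝ] ℝ) (L : AddSubgroup E) (A : Finset E) (hA : ∀ a ∈ A, ht a = 1)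
    (hAL : ∀ a ∈ A, a ∈ L) (T : Finset (Finset E × Finset E)) (h : HD A T)
    (hfin : ∀ k, (lev ht (LC L A) k).Finite) :
    hs ht L A = ∑ p ∈ T, gen ht (D L p.1 p.2 p.1) := by
  unfold hs
  rw [gen_sum ht L A T h hfin, Finset.mul_sum]
  refine Finset.sum_congr rfl fun p hp => ?_
  rw [← h.card p hp]
  exact gen_box ht L p.1 p.2 (fun a ha => hA a (h.sub p hp ha))
    (fun a ha => hAL a (h.sub p hp ha)) (h.li p hp) (fin_D (h.sub p hp) hfin) p.1 subset_rfl

lemma hs_step (ht : E →ₗ[ℝ] ℝ) (L : AddSubgroup E) (A : Finset E) (v : E)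
    (hA : ∀ a ∈ insert v A, ht a = 1)
    (hAL : ∀ a ∈ insert v A, a ∈ L) (hfin : ∀ k, (lev ht (LC L (insert v A)) k).Finite) (i : ℕ) :
    PowerSeries.coeff i (hs ht L A) ≤ PowerSeries.coeff i (hs ht L (insert v A)) := by
  have hsub : A ⊆ insert v A := Finset.subset_insert _ _
  have hA1 : ∀ a ∈ A, ht a = 1 := fun a ha => hA a (hsub ha)
  have hAL1 : ∀ a ∈ A, a ∈ L := fun a ha => hAL a (hsub ha)
  have hfin1 : ∀ k, (lev ht (LC L A) k).Finite := by
    intro k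
    apply (hfin k).subset
    rintro x ⟨⟨h1, h2⟩, h3⟩
    exact ⟨⟨h1, K_mono hsub h2⟩, h3⟩
  by_cases hv : v ∈ Submodule.span ℝ (A : Set E)
  · obtain ⟨T, T', hTT, h, h'⟩ := exists_HD ht A (insert v A) hA hsub (by
      rw [Finset.coe_insert, Submodule.span_insert_eq_span hv])
    rw [hs_eq ht L A hA1 hAL1 T h hfin1, hs_eq ht L _ hA hAL T' h' hfin, map_sum, map_sum]
    apply Finset.sum_le_sum_of_subset_of_nonneg hTT
    intro p _ _
    simp [gen]
  · obtain ⟨T, -, -, h, -⟩ := exists_HD ht A A hA1 subset_rfl rfl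
    have h' := HD_pyr h hv
    have hvA : v ∉ A := fun h' => hv (Submodule.subset_span h')
    rw [hs_eq ht L A hA1 hAL1 T h hfin1, hs_eq ht L _ hA hAL _ h' hfin, map_sum, map_sum,
      Finset.sum_image]
    · apply Finset.sum_le_sum
      intro p hp
      simp only [gen, PowerSeries.coeff_mk]
      norm_cast
      apply Set.ncard_le_ncard _ (fin_D (Finset.insert_subset_insert _ (h.sub p hp)) hfin i)
      rintro x ⟨⟨hxL, l, rfl, h1, h2⟩, h3⟩
      have hvF : v ∉ p.1 := fun h' => hvA (h.sub p hp h')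
      have hvR : v ∉ p.2 := fun h' => hvF (h.rsub p hp h')
      have hne : ∀ i ∈ p.1, i ≠ v := fun i hi h => hvF (h ▸ hi)
      refine ⟨⟨hxL, Function.update l v 0, ?_, ?_, ?_⟩, h3⟩
      · rw [Finset.sum_insert hvF, Function.update_self, zero_smul, zero_add]
        exact Finset.sum_congr rfl fun i hi => by rw [Function.update_of_ne (hne i hi)]
      · intro i hi
        rcases Finset.mem_insert.mp hi with rfl | hi
        · simp [ok, hvR]
        · rw [Function.update_of_ne (hne i hi)]; exact h1 i hi
      · intro i hi
        rcases Finset.mem_insert.mp hi with rfl | hi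
        · simp [ok, hvR]
        · rw [Function.update_of_ne (hne i hi)]; exact h2 i hi
    · intro p hp p' hp' he
      have hvF : v ∉ p.1 := fun h' => hvA (h.sub p hp h')
      have hvF' : v ∉ p'.1 := fun h' => hvA (h.sub p' hp' h')
      rw [Prod.mk.injEq] at he
      refine Prod.ext ?_ he.2
      rw [← Finset.erase_insert hvF, ← Finset.erase_insert hvF', he.1]

lemma hs_mono (ht : E →ₗ[ℝ] ℝ) (L : AddSubgroup E) (A B : Finset E)
    (hA : ∀ a ∈ A ∪ B, ht a = 1)
    (hAL : ∀ a ∈ A ∪ B, a ∈ L)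
    (hfin : ∀ k, (lev ht (LC L (A ∪ B)) k).Finite) (i : ℕ) :
    PowerSeries.coeff i (hs ht L A) ≤ PowerSeries.coeff i (hs ht L (A ∪ B)) := by
  induction B using Finset.induction_on with
  | empty => simp
  | insert v B hvB ih =>
    rw [Finset.union_insert] at hA hAL hfin ⊢
    refine le_trans (ih (fun a ha => hA a (Finset.mem_insert_of_mem ha))
      (fun a ha => hAL a (Finset.mem_insert_of_mem ha)) ?_) (hs_step ht L _ v hA hAL hfin i)
    intro k
    apply (hfin k).subset
    rintro x ⟨⟨h1, h2⟩, h3⟩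
    exact ⟨⟨h1, K_mono (Finset.subset_insert _ _) h2⟩, h3⟩

end Stan
namespace Stan

open Classical

variable {ι : Type*} [Fintype ι]

/-- Coordinatewise cast. -/
def cst (z : ι → ℤ) : ι → ℝ := fun i => (z i : ℝ)

lemma cst_inj : Function.Injective (cst : (ι → ℤ) → ι → ℝ) := by
  intro a b h
  ext i
  have := congrFun h i
  simpa [cst] using this

/-- Height. -/
def hgt : ((ι → ℝ) × ℝ) →ₗ[ℝ] ℝ := LinearMap.snd ℝ (ι → ℝ) ℝ

/-- The integer lattice. -/
def Lat : AddSubgroup ((ι → ℝ) × ℝ) where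
  carrier := {x | ∃ (p : ι → ℤ) (m : ℤ), x = (cst p, (m : ℝ))}
  zero_mem' := ⟨0, 0, by ext <;> simp [cst]⟩
  add_mem' := by
    rintro _ _ ⟨p, m, rfl⟩ ⟨p', m', rfl⟩
    exact ⟨p + p', m + m', by ext <;> simp [cst]⟩
  neg_mem' := by
    rintro _ ⟨p, m, rfl⟩
    exact ⟨-p, -m, by ext <;> simp [cst]⟩

/-- Homogenization. -/
noncomputable def homog (S : Finset (ι → ℝ)) : Finset ((ι → ℝ) × ℝ) :=
  S.image (fun y => (y, (1 : ℝ)))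

lemma mem_K_homog (S : Finset (ι → ℝ)) (x : ι → ℝ) (t : ℝ) : (x, t) ∈ K (homog S) ∅ ↔
    ∃ m : (ι → ℝ) → ℝ, (∀ y ∈ S, 0 ≤ m y) ∧ ∑ y ∈ S, m y = t ∧ ∑ y ∈ S, m y • y = x := by
  have hinj : Set.InjOn (fun y : ι → ℝ => (y, (1 : ℝ))) S := by
    intro a _ b _ h
    exact (Prod.mk.inj h).1
  have hsum : ∀ l : ((ι → ℝ) × ℝ) → ℝ, ∑ e ∈ homog S, l e • e =
      (∑ y ∈ S, l (y, 1) • y, ∑ y ∈ S, l (y, 1)) := by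
    intro l
    rw [homog, Finset.sum_image hinj]
    ext1
    · simp [Prod.fst_sum]
    · simp [Prod.snd_sum]
  constructor
  · rintro ⟨l, h1, h2⟩
    rw [hsum] at h1
    refine ⟨fun y => l (y, 1), fun y hy => ?_, (congrArg Prod.snd h1).symm,
      (congrArg Prod.fst h1).symm⟩
    exact (h2 (y, 1) (Finset.mem_image_of_mem _ hy)).nonneg
  · rintro ⟨m, h1, h2, h3⟩
    refine ⟨fun e => m e.1, ?_, ?_⟩
    · rw [hsum, ← h2, ← h3]
    · intro e he
      obtain ⟨y, hy, rfl⟩ := Finset.mem_image.mp he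
      exact ok_empty.mpr (h1 y hy)

lemma mem_dilate (S : Finset (ι → ℝ)) (hS : S.Nonempty) (x : ι → ℝ) (k : ℕ) :
    x ∈ (k : ℝ) • convexHull ℝ (S : Set (ι → ℝ)) ↔ (x, (k : ℝ)) ∈ K (homog S) ∅ := by
  rw [mem_K_homog, Set.mem_smul_set]
  constructor
  · rintro ⟨y, hy, rfl⟩
    obtain ⟨w, h1, h2, h3⟩ := Finset.mem_convexHull'.mp hy
    refine ⟨fun y => k * w y, fun y hy => mul_nonneg (Nat.cast_nonneg _) (h1 y hy), ?_, ?_⟩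
    · rw [← Finset.mul_sum, h2, mul_one]
    · simp only [mul_smul, ← Finset.smul_sum, h3]
  · rintro ⟨m, h1, h2, h3⟩
    rcases Nat.eq_zero_or_pos k with rfl | hk
    · obtain ⟨y, hy⟩ := hS
      refine ⟨y, subset_convexHull ℝ _ hy, ?_⟩
      rw [Nat.cast_zero] at h2
      have := (Finset.sum_eq_zero_iff_of_nonneg h1).mp h2
      rw [← h3, Finset.sum_eq_zero fun y hy => by rw [this y hy, zero_smul]]
      simp
    · have hk' : (k : ℝ) ≠ 0 := by positivity
      refine ⟨(k : ℝ)⁻¹ • x, ?_, by rw [smul_smul, mul_inv_cancel₀ hk', one_smul]⟩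
      refine Finset.mem_convexHull'.mpr ⟨fun y => (k : ℝ)⁻¹ * m y, fun y hy =>
        mul_nonneg (by positivity) (h1 y hy), ?_, ?_⟩
      · rw [← Finset.mul_sum, h2, inv_mul_cancel₀ hk']
      · simp only [mul_smul, ← Finset.smul_sum, h3]

lemma lev_eq (S : Finset (ι → ℝ)) (hS : S.Nonempty) (k : ℕ) :
    lev hgt (LC Lat (homog S)) k =
      (fun p : ι → ℤ => (cst p, (k : ℝ))) ''
        {p | cst p ∈ (k : ℝ) • convexHull ℝ (S : Set (ι → ℝ))} := by
  ext x
  constructor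
  · rintro ⟨⟨⟨p, m, rfl⟩, h2⟩, h3⟩
    have h3' : (m : ℝ) = k := h3
    rw [h3'] at h2 ⊢
    exact ⟨p, (mem_dilate S hS _ k).mpr h2, rfl⟩
  · rintro ⟨p, hp, rfl⟩
    exact ⟨⟨⟨p, k, by simp⟩, (mem_dilate S hS _ k).mp hp⟩, rfl⟩

lemma fin_pts (S : Finset (ι → ℝ)) (k : ℕ) :
    {p : ι → ℤ | cst p ∈ (k : ℝ) • convexHull ℝ (S : Set (ι → ℝ))}.Finite := by
  have hb : Bornology.IsBounded ((k : ℝ) • convexHull ℝ (S : Set (ι → ℝ))) :=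
    (isBounded_convexHull.mpr S.finite_toSet.isBounded).smul₀ _
  obtain ⟨r, hr⟩ := hb.subset_closedBall 0
  apply (Set.finite_Icc (fun _ : ι => -⌈r⌉) (fun _ : ι => ⌈r⌉)).subset
  intro p hp
  have h1 := hr hp
  rw [mem_closedBall_zero_iff] at h1
  have h2 : ∀ i, |(p i : ℝ)| ≤ ⌈r⌉ := fun i =>
    ((norm_le_pi_norm (cst p) i).trans h1).trans (Int.le_ceil r)
  constructor
  · intro i
    have := (abs_le.mp (h2 i)).1
    exact_mod_cast this
  · intro i
    have := (abs_le.mp (h2 i)).2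
    exact_mod_cast this

lemma fin_lev (S : Finset (ι → ℝ)) (hS : S.Nonempty) (k : ℕ) :
    (lev hgt (LC Lat (homog S)) k).Finite := by
  rw [lev_eq S hS]
  exact (fin_pts S k).image _

lemma gen_ehr (S : Finset (ι → ℝ)) (hS : S.Nonempty) :
    gen hgt (LC Lat (homog S)) = ehrSeries (convexHull ℝ (S : Set (ι → ℝ))) := by
  ext k
  simp only [gen, ehrSeries, PowerSeries.coeff_mk, latCount]
  rw [lev_eq S hS, Set.ncard_image_of_injective]
  · rfl
  · intro a b h
    exact cst_inj (Prod.mk.inj h).1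

lemma finrank_homog (S : Finset (ι → ℝ)) (hS : S.Nonempty) :
    Module.finrank ℝ (Submodule.span ℝ (homog S : Set ((ι → ℝ) × ℝ))) =
      pdim (convexHull ℝ (S : Set (ι → ℝ))) + 1 := by
  obtain ⟨s, hs⟩ := hS
  have h1 : vectorSpan ℝ (convexHull ℝ (S : Set (ι → ℝ))) =
      vectorSpan ℝ (S : Set (ι → ℝ)) := by
    rw [← direction_affineSpan, affineSpan_convexHull, direction_affineSpan]
  let W := (vectorSpan ℝ (S : Set (ι → ℝ))).map (LinearMap.inl ℝ (ι → ℝ) ℝ)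
  have hW : Module.finrank ℝ W = pdim (convexHull ℝ (S : Set (ι → ℝ))) := by
    unfold pdim
    rw [h1]
    exact (Submodule.equivMapOfInjective _ LinearMap.inl_injective _).finrank_eq.symm
  have hW2 : ∀ x ∈ W, x.2 = 0 := by
    rintro _ ⟨y, -, rfl⟩; rfl
  have hspan : Submodule.span ℝ (homog S : Set ((ι → ℝ) × ℝ)) =
      W ⊔ Submodule.span ℝ {(s, (1 : ℝ))} := by
    apply le_antisymm
    · rw [Submodule.span_le]
      intro e he
      obtain ⟨y, hy, rfl⟩ := Finset.mem_image.mp (Finset.mem_coe.mp he)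
      have : (y, (1 : ℝ)) = (y - s, 0) + (s, 1) := by ext <;> simp
      rw [this]
      refine Submodule.add_mem_sup ⟨y - s, vsub_mem_vectorSpan ℝ hy hs, rfl⟩
        (Submodule.mem_span_singleton_self _)
    · refine sup_le ?_ ?_
      · rw [Submodule.map_le_iff_le_comap, vectorSpan_eq_span_vsub_set_right ℝ
          (show s ∈ (S : Set (ι → ℝ)) from hs), Submodule.span_le]
        rintro _ ⟨y, hy, rfl⟩
        have h2 : LinearMap.inl ℝ (ι → ℝ) ℝ (y -ᵥ s) = (y, (1 : ℝ)) - (s, 1) := by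
          ext <;> simp
        change LinearMap.inl ℝ (ι → ℝ) ℝ (y -ᵥ s) ∈
          Submodule.span ℝ (homog S : Set ((ι → ℝ) × ℝ))
        rw [h2]
        exact Submodule.sub_mem _
          (Submodule.subset_span (Finset.mem_coe.mpr (Finset.mem_image_of_mem _ hy)))
          (Submodule.subset_span (Finset.mem_coe.mpr (Finset.mem_image_of_mem _ hs)))
      · rw [Submodule.span_le, Set.singleton_subset_iff]
        exact Submodule.subset_span (Finset.mem_coe.mpr (Finset.mem_image_of_mem _ hs))
  have hinf : W ⊓ Submodule.span ℝ {(s, (1 : ℝ))} = ⊥ := by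
    rw [eq_bot_iff]
    rintro x ⟨hx1, hx2⟩
    obtain ⟨c, rfl⟩ := Submodule.mem_span_singleton.mp hx2
    have := hW2 _ hx1
    have hc : c = 0 := by simpa using this
    simp [hc]
  have hh := Submodule.finrank_sup_add_finrank_inf_eq W (Submodule.span ℝ {(s, (1 : ℝ))})
  rw [hinf, finrank_bot, finrank_span_singleton (by
    intro h
    have := congrArg Prod.snd h
    simp at this), hW] at hh
  rw [hspan]
  omega

lemma hs_homog (S : Finset (ι → ℝ)) (hS : S.Nonempty) :
    hs hgt Lat (homog S) = (1 - PowerSeries.X) ^ (pdim (convexHull ℝ (S : Set (ι → ℝ))) + 1) *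
      ehrSeries (convexHull ℝ (S : Set (ι → ℝ))) := by
  rw [hs, gen_ehr S hS, finrank_homog S hS]

lemma homog_union {d1 : DecidableEq (ι → ℝ)} {d2 : DecidableEq ((ι → ℝ) × ℝ)}
    (S S' : Finset (ι → ℝ)) : homog (S ∪ S') = homog S ∪ homog S' := by
  ext x
  simp only [homog, Finset.mem_image, Finset.mem_union, or_and_right, exists_or]

end Stan

/-- Stanley's monotonicity theorem: if `P ⊆ Q` are lattice polytopes,
then the `h^*`-polynomial of `P` is coefficientwise at most that of `Q`. -/
theorem stmt10 {ι : Type*} [Fintype ι] (SP SQ : Finset (ι → ℤ)) (P Q : Set (ι → ℝ))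
    (hPdef : P = convexHull ℝ ((fun z : ι → ℤ => fun i => (z i : ℝ)) '' ↑SP))
    (hQdef : Q = convexHull ℝ ((fun z : ι → ℤ => fun i => (z i : ℝ)) '' ↑SQ))
    (hPne : P.Nonempty) (hsub : P ⊆ Q)
    (p q : Polynomial ℤ) (hp : IsHStar P p) (hq : IsHStar Q q) :
    ∀ i, p.coeff i ≤ q.coeff i := by
  classical
  have hcP : (fun z : ι → ℤ => fun i => (z i : ℝ)) '' ↑SP =
      ((SP.image Stan.cst : Finset (ι → ℝ)) : Set (ι → ℝ)) := by
    rw [Finset.coe_image]; rfl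
  have hcQ : (fun z : ι → ℤ => fun i => (z i : ℝ)) '' ↑SQ =
      ((SQ.image Stan.cst : Finset (ι → ℝ)) : Set (ι → ℝ)) := by
    rw [Finset.coe_image]; rfl
  rw [hcP] at hPdef
  rw [hcQ] at hQdef
  have hne : (SP.image Stan.cst : Finset (ι → ℝ)).Nonempty := by
    rw [hPdef, convexHull_nonempty_iff] at hPne
    exact_mod_cast hPne
  have hQ' : Q = convexHull ℝ
      ((SP.image Stan.cst ∪ SQ.image Stan.cst : Finset (ι → ℝ)) : Set (ι → ℝ)) := by
    apply Set.Subset.antisymm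
    · rw [hQdef]
      apply convexHull_mono
      exact_mod_cast Finset.subset_union_right
    · rw [hQdef]
      apply convexHull_min _ (convex_convexHull ℝ _)
      rw [Finset.coe_union]
      refine Set.union_subset ?_ (subset_convexHull ℝ _)
      rw [← hQdef]
      refine Set.Subset.trans ?_ hsub
      rw [hPdef]
      exact subset_convexHull ℝ _
  have hne2 : (SP.image Stan.cst ∪ SQ.image Stan.cst : Finset (ι → ℝ)).Nonempty :=
    hne.mono Finset.subset_union_left
  intro i
  have hU := Stan.homog_union (d1 := inferInstance)
    (d2 := fun a b => Classical.propDecidable _) (SP.image Stan.cst) (SQ.image Stan.cst)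
  have key := Stan.hs_mono Stan.hgt Stan.Lat (Stan.homog (SP.image Stan.cst))
    (Stan.homog (SQ.image Stan.cst))
    (by
      rw [← hU]
      intro a ha
      obtain ⟨y, -, rfl⟩ := Finset.mem_image.mp ha
      rfl)
    (by
      rw [← hU]
      intro a ha
      obtain ⟨y, hy, rfl⟩ := Finset.mem_image.mp ha
      rcases Finset.mem_union.mp hy with hy | hy
      · obtain ⟨z, -, rfl⟩ := Finset.mem_image.mp hy
        exact ⟨z, 1, by simp⟩
      · obtain ⟨z, -, rfl⟩ := Finset.mem_image.mp hy
        exact ⟨z, 1, by simp⟩)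
    (by
      rw [← hU]
      exact Stan.fin_lev _ hne2) i
  rw [← hU, Stan.hs_homog _ hne, Stan.hs_homog _ hne2, ← hPdef, ← hQ'] at key
  unfold IsHStar at hp hq
  rw [hp, hq] at key
  simpa using key
end

section
/- Let D be a weakly connected directed graph and e any edge of D. Then the h*-polynomial of the extended root polytope Q̃_{D/e} of the contraction is coefficientwise less than or equal to the h*-polynomial of Q̃_D. -/
open Finset Pointwise

section Contraction

variable {V E : Type*} [Fintype V] [Fintype E] [DecidableEq V] [DecidableEq E]

/-- The vertex identification map of the contraction `D/e`: for a non-loop `e` the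
head of `e` is merged into the tail of `e`; contracting a loop does nothing. -/
def cmap' (t h : E → V) (e : E) : V → V :=
  fun v => if t e ≠ h e ∧ v = h e then t e else v


set_option linter.unusedSectionVars false

/-- `c` is supported on `T`. -/
def SuppOn (T : Finset E) (c : E → ℝ) : Prop := ∀ f, f ∉ T → c f = 0

/-- linear independence of the vectors indexed by `T` -/
def Ind (x : E → V → ℝ) (T : Finset E) : Prop :=
  ∀ c : E → ℝ, SuppOn T c → ∑ f, c f • x f = 0 → c = 0

/-- a basis of the configuration -/
def Bas (x : E → V → ℝ) (T : Finset E) : Prop :=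
  Ind x T ∧ ∀ f, ∃ c : E → ℝ, SuppOn T c ∧ x f = ∑ f', c f' • x f'

lemma Ind.uniq {x : E → V → ℝ} {T : Finset E} (hT : Ind x T) {c d : E → ℝ}
    (hc : SuppOn T c) (hd : SuppOn T d) (h : ∑ f, c f • x f = ∑ f, d f • x f) : c = d := by
  have := hT (c - d) (fun f hf => by simp [hc f hf, hd f hf]) (by
    simp [sub_smul, Finset.sum_sub_distrib, h])
  exact sub_eq_zero.mp this

lemma Ind.extend {x : E → V → ℝ} {S U : Finset E} (hS : Ind x S) (hSU : S ⊆ U) :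
    ∃ T, S ⊆ T ∧ T ⊆ U ∧ Ind x T ∧
      ∀ f ∈ U, ∃ c : E → ℝ, SuppOn T c ∧ x f = ∑ f', c f' • x f' := by
  classical
  obtain ⟨T, hT, hmax⟩ := Finset.exists_max_image
    ((Finset.univ : Finset (Finset E)).filter fun T => S ⊆ T ∧ T ⊆ U ∧ Ind x T)
    Finset.card ⟨S, by simp [hSU, hS]⟩
  simp only [Finset.mem_filter, Finset.mem_univ, true_and] at hT hmax
  refine ⟨T, hT.1, hT.2.1, hT.2.2, fun f hf => ?_⟩
  by_cases hfT : f ∈ T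
  · refine ⟨Pi.single f 1, fun g hg => ?_, ?_⟩
    · rw [Pi.single_apply, if_neg]; rintro rfl; exact hg hfT
    · simp [Pi.single_apply, ite_smul]
  · have hn : ¬ Ind x (insert f T) := by
      intro hI
      have := hmax (insert f T) ⟨hT.1.trans (Finset.subset_insert _ _),
        Finset.insert_subset hf hT.2.1, hI⟩
      rw [Finset.card_insert_of_notMem hfT] at this
      omega
    unfold Ind at hn
    push Not at hn
    obtain ⟨c, hc, hc0, hcne⟩ := hn
    have hcf : c f ≠ 0 := by
      intro h0
      apply hcne
      apply hT.2.2 c _ hc0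
      intro g hg
      by_cases hgf : g = f
      · rw [hgf, h0]
      · exact hc g (by simp [hgf, hg])
    refine ⟨fun g => if g = f then 0 else - (c f)⁻¹ * c g, fun g hg => ?_, ?_⟩
    · by_cases hgf : g = f
      · simp [hgf]
      · simp [hgf, hc g (by simp [hgf, hg])]
    · have h1 : ∑ g, (if g = f then 0 else - (c f)⁻¹ * c g) • x g
          = ∑ g, ((if g = f then x f else 0) + (- (c f)⁻¹) • (c g • x g)) := by
        refine Finset.sum_congr rfl fun g _ => ?_
        by_cases hgf : g = f
        · subst hgf
          simp [smul_smul, hcf]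
        · simp [hgf, smul_smul]
      rw [h1, Finset.sum_add_distrib, ← Finset.smul_sum, hc0]
      simp

lemma Bas.exists_extend {x : E → V → ℝ} {S : Finset E} (hS : Ind x S) :
    ∃ T, S ⊆ T ∧ Bas x T := by
  obtain ⟨T, h1, -, h2, h3⟩ := hS.extend (Finset.subset_univ S)
  exact ⟨T, h1, h2, fun f => h3 f (Finset.mem_univ f)⟩

lemma Ind.linInd {x : E → V → ℝ} {T : Finset E} (hT : Ind x T) :
    LinearIndependent ℝ (fun f : T => x f.1) := by
  rw [Fintype.linearIndependent_iff]
  intro g hg i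
  have := hT (fun f => if h : f ∈ T then g ⟨f, h⟩ else 0) (fun f hf => by simp [hf]) (by
    rw [← hg, ← Finset.sum_subset (Finset.subset_univ T)]
    · rw [← Finset.sum_coe_sort T]
      exact Finset.sum_congr rfl fun i _ => by simp
    · intro f _ hf; simp [hf])
  have := congrFun this i.1
  simpa using this

lemma Bas.card_eq {x : E → V → ℝ} {T : Finset E} (hT : Bas x T) :
    T.card = Module.finrank ℝ (Submodule.span ℝ (Set.range x)) := by
  have h1 := finrank_span_eq_card hT.1.linInd
  rw [Fintype.card_coe] at h1
  rw [← h1]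
  suffices hs : Submodule.span ℝ (Set.range fun f : T => x f.1)
      = Submodule.span ℝ (Set.range x) by rw [hs]
  apply le_antisymm
  · apply Submodule.span_mono
    rintro _ ⟨f, rfl⟩; exact ⟨f.1, rfl⟩
  · rw [Submodule.span_le]
    rintro _ ⟨f, rfl⟩
    obtain ⟨c, hc, he⟩ := hT.2 f
    rw [he]
    apply Submodule.sum_mem
    intro g _
    by_cases hg : g ∈ T
    · exact Submodule.smul_mem _ _ (Submodule.subset_span ⟨⟨g, hg⟩, rfl⟩)
    · rw [hc g hg, zero_smul]; exact Submodule.zero_mem _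

lemma Ind.dual {x : E → V → ℝ} {T : Finset E} (hT : Ind x T) {f : E} (hf : f ∈ T) :
    ∃ φ : (V → ℝ) →ₗ[ℝ] ℝ, ∀ g ∈ T, φ (x g) = if g = f then 1 else 0 := by
  have hl := hT.linInd
  obtain ⟨φ, hφ⟩ := LinearMap.exists_extend
    ((Finsupp.lapply (R := ℝ) (M := ℝ) (⟨f, hf⟩ : T)) ∘ₗ hl.repr)
  refine ⟨φ, fun g hg => ?_⟩
  have hm : x g ∈ Submodule.span ℝ (Set.range fun f : T => x f.1) :=
    Submodule.subset_span ⟨⟨g, hg⟩, rfl⟩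
  have h2 := LinearMap.congr_fun hφ ⟨x g, hm⟩
  have h3 := hl.repr_eq_single ⟨g, hg⟩ ⟨x g, hm⟩ rfl
  simp only [LinearMap.comp_apply, Submodule.subtype_apply, h3] at h2
  rw [h2]
  simp [Finsupp.single_apply]

/-- fundamental cut -/
lemma Ind.cut {t h : E → V} {T : Finset E} (hT : Ind (xvec t h) T) {f : E} (hf : f ∈ T) :
    ∃ q : V → ℤ, (∀ v, q v = 0 ∨ q v = 1) ∧
      ∀ g ∈ T, q (h g) - q (t g) = if g = f then 1 else 0 := by
  obtain ⟨φ, hφ⟩ := hT.dual hf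
  have hx : ∀ g, φ (xvec t h g) = φ (Pi.single (h g) 1) - φ (Pi.single (t g) 1) := by
    intro g
    rw [← map_sub]
    congr 1
    ext v
    simp [xvec, Pi.single_apply]
  set p : V → ℝ := fun v => φ (Pi.single v 1)
  refine ⟨fun v => if p (h f) ≤ p v then 1 else 0, fun v => by
    by_cases hv : p (h f) ≤ p v <;> simp [hv], fun g hg => ?_⟩
  have h1 : p (h g) - p (t g) = if g = f then 1 else 0 := by rw [← hφ g hg, hx]
  by_cases hgf : g = f
  · subst hgf
    simp only [if_true] at h1 ⊢
    rw [if_pos le_rfl, if_neg]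
    · rfl
    · linarith
  · rw [if_neg hgf] at h1 ⊢
    have : p (h g) = p (t g) := by linarith
    simp [this]

lemma xvec_dot (t h : E → V) (q : V → ℤ) (f : E) :
    ∑ v, (q v : ℝ) * xvec t h f v = (q (h f) : ℝ) - q (t f) := by
  simp [xvec, mul_sub, Finset.sum_sub_distrib]

lemma Ind.coord {t h : E → V} {T : Finset E} (hT : Ind (xvec t h) T) {f : E} (hf : f ∈ T) :
    ∃ q : V → ℤ, (∀ v, q v = 0 ∨ q v = 1) ∧ ∀ c : E → ℝ, SuppOn T c →
      c f = ∑ v, (q v : ℝ) * (∑ g, c g • xvec t h g) v := by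
  obtain ⟨q, hq, hqT⟩ := hT.cut hf
  refine ⟨q, hq, fun c hc => ?_⟩
  simp only [Finset.sum_apply, Pi.smul_apply, smul_eq_mul, Finset.mul_sum]
  rw [Finset.sum_comm]
  have : ∀ g, ∑ v, (q v : ℝ) * (c g * xvec t h g v) = if g = f then c f else 0 := by
    intro g
    have h1 : ∑ v, (q v : ℝ) * (c g * xvec t h g v) = c g * ((q (h g) : ℝ) - q (t g)) := by
      rw [← xvec_dot, Finset.mul_sum]
      exact Finset.sum_congr rfl fun v _ => by ring
    rw [h1]
    by_cases hg : g ∈ T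
    · have h2 := hqT g hg
      have h3 : ((q (h g) : ℝ) - q (t g)) = if g = f then 1 else 0 := by exact_mod_cast h2
      rw [h3]
      by_cases hgf : g = f <;> simp [hgf]
    · have : g ≠ f := by rintro rfl; exact hg hf
      simp [hc g hg, this]
  simp [this]

lemma Ind.coord_int {t h : E → V} {T : Finset E} (hT : Ind (xvec t h) T) {c : E → ℝ}
    (hc : SuppOn T c) {p : V → ℤ} (hp : ∑ g, c g • xvec t h g = fun v => (p v : ℝ)) (f : E) :
    ∃ n : ℤ, c f = n := by
  by_cases hf : f ∈ T
  · obtain ⟨q, -, hq⟩ := hT.coord hf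
    refine ⟨∑ v, q v * p v, ?_⟩
    rw [hq c hc, hp]; push_cast; rfl
  · exact ⟨0, by simp [hc f hf]⟩

lemma Ind.coord_pm {t h : E → V} {T : Finset E} (hT : Ind (xvec t h) T) {c : E → ℝ}
    (hc : SuppOn T c) {e : E} (hp : xvec t h e = ∑ g, c g • xvec t h g) (f : E) :
    c f = 0 ∨ c f = 1 ∨ c f = -1 := by
  by_cases hf : f ∈ T
  · obtain ⟨q, hq01, hq⟩ := hT.coord hf
    rw [hq c hc, ← hp, xvec_dot]
    rcases hq01 (h e) with h1 | h1 <;> rcases hq01 (t e) with h2 | h2 <;> simp [h1, h2]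
  · exact Or.inl (hc f hf)

open Classical in
/-- the coefficient matrix of a basis -/
noncomputable def cf (x : E → V → ℝ) (T : Finset E) (f : E) : E → ℝ :=
  if hT : Bas x T then Classical.choose (hT.2 f) else 0

lemma Bas.cf_supp {x : E → V → ℝ} {T : Finset E} (hT : Bas x T) (f : E) :
    SuppOn T (cf x T f) := by
  rw [cf, dif_pos hT]; exact (Classical.choose_spec (hT.2 f)).1

lemma Bas.cf_eq {x : E → V → ℝ} {T : Finset E} (hT : Bas x T) (f : E) :
    x f = ∑ f', cf x T f f' • x f' := by
  rw [cf, dif_pos hT]; exact (Classical.choose_spec (hT.2 f)).2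

lemma Bas.cf_self {x : E → V → ℝ} {T : Finset E} (hT : Bas x T) {f : E} (hf : f ∈ T) :
    cf x T f = Pi.single f 1 := by
  apply hT.1.uniq (hT.cf_supp f)
  · intro g hg
    rw [Pi.single_apply, if_neg]; rintro rfl; exact hg hf
  · rw [← hT.cf_eq]
    simp [Pi.single_apply, ite_smul]

/-- coordinates of `∑ b f • x f` in the basis `T` -/
noncomputable def crd (x : E → V → ℝ) (T : Finset E) (b : E → ℝ) : E → ℝ :=
  fun f' => ∑ f, b f * cf x T f f'

lemma Bas.crd_supp {x : E → V → ℝ} {T : Finset E} (hT : Bas x T) (b : E → ℝ) :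
    SuppOn T (crd x T b) := by
  intro f hf
  simp [crd, hT.cf_supp _ f hf]

lemma Bas.crd_eq {x : E → V → ℝ} {T : Finset E} (hT : Bas x T) (b : E → ℝ) :
    ∑ f, crd x T b f • x f = ∑ f, b f • x f := by
  have : ∀ f, b f • x f = ∑ f', (b f * cf x T f f') • x f' := by
    intro f
    conv_lhs => rw [hT.cf_eq f, Finset.smul_sum]
    simp [smul_smul]
  simp_rw [this, crd, Finset.sum_smul]
  rw [Finset.sum_comm]

lemma Bas.crd_uniq {x : E → V → ℝ} {T : Finset E} (hT : Bas x T) {a b : E → ℝ}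
    (ha : SuppOn T a) (h : ∑ f, a f • x f = ∑ f, b f • x f) : a = crd x T b :=
  hT.1.uniq ha (hT.crd_supp b) (by rw [h, hT.crd_eq])

lemma crd_add (x : E → V → ℝ) (T : Finset E) (a b : E → ℝ) (f : E) :
    crd x T (a + b) f = crd x T a f + crd x T b f := by
  simp [crd, add_mul, Finset.sum_add_distrib]

lemma crd_sum (x : E → V → ℝ) (T : Finset E) (b w : E → ℝ) :
    ∑ f', crd x T b f' * w f' = ∑ f, b f * ∑ f', cf x T f f' * w f' := by
  simp_rw [crd, Finset.sum_mul, Finset.mul_sum]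
  rw [Finset.sum_comm]
  simp_rw [mul_assoc]

lemma Bas.cf_pm {t h : E → V} {T : Finset E} (hT : Bas (xvec t h) T) (f f' : E) :
    cf (xvec t h) T f f' = 0 ∨ cf (xvec t h) T f f' = 1 ∨ cf (xvec t h) T f f' = -1 :=
  hT.1.coord_pm (hT.cf_supp f) (hT.cf_eq f) f'

lemma Bas.cf_abs {t h : E → V} {T : Finset E} (hT : Bas (xvec t h) T) (f f' : E) :
    |cf (xvec t h) T f f'| ≤ 1 := by
  rcases hT.cf_pm f f' with h | h | h <;> simp [h]

/-- optimality of a basis with respect to a cost vector -/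
def Opt (x : E → V → ℝ) (w : E → ℝ) (T : Finset E) : Prop :=
  Bas x T ∧ ∀ f, ∑ f', cf x T f f' * w f' ≤ w f

/-- genericity of a cost vector -/
def Gen (x : E → V → ℝ) (w : E → ℝ) : Prop :=
  ∀ T, Bas x T → ∀ f, f ∉ T → ∑ f', cf x T f f' * w f' ≠ w f

lemma Opt.unique {x : E → V → ℝ} {w : E → ℝ} (hg : Gen x w) {S T : Finset E}
    (hS : Opt x w S) (hT : Opt x w T) {a b : E → ℝ} (ha : SuppOn S a) (hb : SuppOn T b)
    (ha0 : ∀ f ∈ S, 0 < a f) (hb0 : ∀ f ∈ T, 0 < b f)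
    (h : ∑ f, a f • x f = ∑ f, b f • x f) : S = T := by
  have key : ∀ {S T : Finset E} {a b : E → ℝ}, Opt x w S → SuppOn S a → SuppOn T b →
      (∀ f ∈ T, 0 < b f) → ∑ f, a f • x f = ∑ f, b f • x f →
      ∑ f, a f * w f ≤ ∑ f, b f * w f ∧
      (∑ f, a f * w f = ∑ f, b f * w f → T ⊆ S) := by
    intro S T a b hS ha hb hb0 h
    have h1 : a = crd x S b := hS.1.crd_uniq ha h
    have h2 : ∑ f, a f * w f = ∑ f, b f * ∑ f', cf x S f f' * w f' := by
      rw [h1, crd_sum]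
    have hb' : ∀ f, 0 ≤ b f := fun f => by
      by_cases hf : f ∈ T
      · exact (hb0 f hf).le
      · exact (hb f hf).ge
    have h3 : ∀ f ∈ Finset.univ, b f * ∑ f', cf x S f f' * w f' ≤ b f * w f := fun f _ =>
      mul_le_mul_of_nonneg_left (hS.2 f) (hb' f)
    refine ⟨by rw [h2]; exact Finset.sum_le_sum h3, fun heq f hf => ?_⟩
    rw [h2, Finset.sum_eq_sum_iff_of_le h3] at heq
    by_contra hfS
    exact hg S hS.1 f hfS (mul_left_cancel₀ (hb0 f hf).ne' (heq f (Finset.mem_univ f)))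
  have k1 := key hS ha hb hb0 h
  have k2 := key hT hb ha ha0 h.symm
  have he := le_antisymm k1.1 k2.1
  exact (k2.2 he.symm).antisymm (k1.2 he)

lemma exists_min_flow (x : E → V → ℝ) {w : E → ℝ} (hw : ∀ f, 0 < w f) (α : E → ℝ)
    (hα : ∀ f, 0 ≤ α f) : ∃ φ : E → ℝ, (∀ f, 0 ≤ φ f) ∧
      ∑ f, φ f • x f = ∑ f, α f • x f ∧
      ∀ ψ : E → ℝ, (∀ f, 0 ≤ ψ f) → ∑ f, ψ f • x f = ∑ f, α f • x f →
        ∑ f, φ f * w f ≤ ∑ f, ψ f * w f := by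
  set M := ∑ f, α f * w f with hM
  let K : Set (E → ℝ) := {φ | (∀ f, 0 ≤ φ f) ∧ ∑ f, φ f • x f = ∑ f, α f • x f ∧
    ∑ f, φ f * w f ≤ M}
  have hK : IsCompact K := by
    apply (isCompact_Icc (a := (0 : E → ℝ)) (b := fun f => M / w f)).of_isClosed_subset
    · have h1 : IsClosed {φ : E → ℝ | ∀ f, 0 ≤ φ f} := by
        simp only [Set.ofPred_forall]
        exact isClosed_iInter fun f => isClosed_le continuous_const (continuous_apply f)
      have h2 : IsClosed {φ : E → ℝ | ∑ f, φ f • x f = ∑ f, α f • x f} :=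
        isClosed_eq (by fun_prop) continuous_const
      have h3 : IsClosed {φ : E → ℝ | ∑ f, φ f * w f ≤ M} :=
        isClosed_le (by fun_prop) continuous_const
      exact h1.inter (h2.inter h3)
    · rintro φ ⟨h1, -, h3⟩
      refine ⟨h1, fun f => ?_⟩
      rw [le_div_iff₀ (hw f)]
      exact (Finset.single_le_sum (f := fun f => φ f * w f)
        (fun g _ => mul_nonneg (h1 g) (hw g).le) (Finset.mem_univ f)).trans h3
  obtain ⟨φ, hφ, hmin⟩ := hK.exists_isMinOn ⟨α, hα, rfl, le_rfl⟩
    (f := fun φ : E → ℝ => ∑ f, φ f * w f) (by fun_prop)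
  refine ⟨φ, hφ.1, hφ.2.1, fun ψ h1 h2 => ?_⟩
  by_cases h3 : ∑ f, ψ f * w f ≤ M
  · exact hmin ⟨h1, h2, h3⟩
  · exact hφ.2.2.trans (not_le.mp h3).le

lemma min_flow_dir {x : E → V → ℝ} {w : E → ℝ} {φ : E → ℝ} (h0 : ∀ f, 0 ≤ φ f)
    (hmin : ∀ ψ : E → ℝ, (∀ f, 0 ≤ ψ f) → ∑ f, ψ f • x f = ∑ f, φ f • x f →
        ∑ f, φ f * w f ≤ ∑ f, ψ f * w f)
    (l : E → ℝ) (hl : ∀ f, φ f = 0 → 0 ≤ l f) (hl0 : ∑ f, l f • x f = 0) :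
    0 ≤ ∑ f, l f * w f := by
  have hev : ∀ᶠ s : ℝ in nhdsWithin 0 (Set.Ioi 0), ∀ f, 0 ≤ φ f + s * l f := by
    rw [Filter.eventually_all]
    intro f
    rcases (h0 f).eq_or_lt with h | h
    · filter_upwards [self_mem_nhdsWithin] with s hs
      rw [← h, zero_add]
      exact mul_nonneg (le_of_lt hs) (hl f h.symm)
    · have : Filter.Tendsto (fun s : ℝ => φ f + s * l f) (nhdsWithin 0 (Set.Ioi 0))
          (nhds (φ f + 0 * l f)) :=
        Filter.Tendsto.mono_left (Continuous.tendsto (by fun_prop) 0) nhdsWithin_le_nhds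
      rw [zero_mul, add_zero] at this
      filter_upwards [this.eventually (lt_mem_nhds h)] with s hs using hs.le
  obtain ⟨s, hs, hs0⟩ := (hev.and self_mem_nhdsWithin).exists
  have hs0 : 0 < s := hs0
  have := hmin (fun f => φ f + s * l f) hs (by
    simp only [add_smul, Finset.sum_add_distrib, mul_smul, ← Finset.smul_sum, hl0]
    simp)
  simp only [add_mul, Finset.sum_add_distrib, mul_assoc, ← Finset.mul_sum] at this
  have h2 : 0 ≤ s * ∑ f, l f * w f := by linarith
  exact nonneg_of_mul_nonneg_right h2 hs0

/-- the elementary relation attached to `f` -/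
lemma rel_sum {x : E → V → ℝ} {T : Finset E} (hT : Bas x T) (f : E) :
    ∑ g, ((Pi.single f 1 : E → ℝ) g - cf x T f g) • x g = 0 := by
  simp only [sub_smul, Finset.sum_sub_distrib]
  rw [← hT.cf_eq]
  simp [Pi.single_apply, ite_smul]

lemma rel_cost (x : E → V → ℝ) (T : Finset E) (f : E) (w : E → ℝ) :
    ∑ g, ((Pi.single f 1 : E → ℝ) g - cf x T f g) * w g = w f - ∑ g, cf x T f g * w g := by
  simp [sub_mul, Finset.sum_sub_distrib, Pi.single_apply]

lemma exists_opt {x : E → V → ℝ} {w : E → ℝ} (hw : ∀ f, 0 < w f) (hg : Gen x w)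
    (α : E → ℝ) (hα : ∀ f, 0 ≤ α f)
    (hnd : ∀ T, Bas x T → ∀ f ∈ T, crd x T α f ≠ 0) :
    ∃ T, Opt x w T ∧ ∀ f ∈ T, 0 < crd x T α f := by
  obtain ⟨φ, h0, hsum, hmin⟩ := exists_min_flow x hw α hα
  rw [← hsum] at hmin
  have hE : Ind x ∅ := fun c hc _ => funext fun f => hc f (by simp)
  set S : Finset E := Finset.univ.filter fun f => φ f ≠ 0 with hS
  obtain ⟨S0, -, hS0S, hS0, hspan⟩ := hE.extend (Finset.empty_subset S)
  obtain ⟨T, hS0T, hT⟩ := Bas.exists_extend hS0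
  have hSS : S ⊆ S0 := by
    intro f hf
    by_contra hfS
    obtain ⟨c, hc, hcf⟩ := hspan f hf
    have hcT : SuppOn T c := fun g hg => hc g fun h => hg (hS0T h)
    have hc' : c = cf x T f := hT.1.uniq hcT (hT.cf_supp f) (by rw [← hcf, ← hT.cf_eq])
    have hfT : f ∉ T := by
      intro hfT
      rw [hT.cf_self hfT] at hc'
      have h1 := hc f hfS
      rw [hc'] at h1
      simp at h1
    have hl : ∀ g, φ g = 0 → (Pi.single f 1 : E → ℝ) g - cf x T f g = 0 := by
      intro g hg
      have hgS : g ∉ S := by simp [hS, hg]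
      have hgf : g ≠ f := by rintro rfl; exact hgS hf
      rw [← hc', hc g (fun h => hgS (hS0S h))]
      simp [hgf]
    have h1 := min_flow_dir h0 hmin _ (fun g hg => (hl g hg).ge) (rel_sum hT f)
    have h2 := min_flow_dir h0 hmin (fun g => -((Pi.single f 1 : E → ℝ) g - cf x T f g))
      (fun g hg => by rw [hl g hg]; simp) (by
        simp only [neg_smul, Finset.sum_neg_distrib]; rw [rel_sum hT f, neg_zero])
    simp only [neg_mul, Finset.sum_neg_distrib] at h2
    rw [rel_cost] at h1 h2
    exact hg T hT f hfT (by linarith)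
  have hφT : SuppOn T φ := by
    intro f hf
    by_contra hne
    exact hf (hS0T (hSS (by simp [hS, hne])))
  have hφ : φ = crd x T α := hT.crd_uniq hφT hsum
  have hpos : ∀ f ∈ T, 0 < φ f := fun f hf =>
    lt_of_le_of_ne (h0 f) (by rw [hφ]; exact (hnd T hT f hf).symm)
  refine ⟨T, ⟨hT, fun f => ?_⟩, fun f hf => hφ ▸ hpos f hf⟩
  have := min_flow_dir h0 hmin _ (fun g hg => ?_) (rel_sum hT f)
  · rw [rel_cost] at this; linarith
  · have hgT : g ∉ T := fun h => (hpos g h).ne' hg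
    rw [hT.cf_supp f g hgT, Pi.single_apply]
    split_ifs <;> simp

lemma mem_rootPoly (t h : E → V) (k : ℕ) (z : V → ℝ) :
    z ∈ (k : ℝ) • rootPolyOn t h Set.univ ↔
      ∃ α : E → ℝ, (∀ f, 0 ≤ α f) ∧ ∑ f, α f ≤ k ∧ z = ∑ f, α f • xvec t h f := by
  constructor
  · rintro ⟨y, hy, rfl⟩
    have hsub : rootPolyOn t h Set.univ ⊆
        {y | ∃ α : E → ℝ, (∀ f, 0 ≤ α f) ∧ ∑ f, α f ≤ 1 ∧ y = ∑ f, α f • xvec t h f} := by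
      apply convexHull_min
      · rintro _ (rfl | ⟨f, -, rfl⟩)
        · exact ⟨0, by simp, by simp, by simp⟩
        · refine ⟨Pi.single f 1, fun g => ?_, by simp, by simp [Pi.single_apply, ite_smul]⟩
          rw [Pi.single_apply]; split_ifs <;> simp
      · rintro _ ⟨α, h1, h2, rfl⟩ _ ⟨β, h3, h4, rfl⟩ a b ha hb hab
        refine ⟨a • α + b • β, fun f => ?_, ?_, ?_⟩
        · exact add_nonneg (mul_nonneg ha (h1 f)) (mul_nonneg hb (h3 f))
        · simp only [Pi.add_apply, Pi.smul_apply, smul_eq_mul, Finset.sum_add_distrib,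
            ← Finset.mul_sum]
          nlinarith
        · simp only [Pi.add_apply, Pi.smul_apply, smul_eq_mul, add_smul, mul_smul,
            Finset.sum_add_distrib, ← Finset.smul_sum]
    obtain ⟨α, h1, h2, rfl⟩ := hsub hy
    refine ⟨fun f => k * α f, fun f => mul_nonneg (by positivity) (h1 f), ?_, ?_⟩
    · rw [← Finset.mul_sum]
      have : (0 : ℝ) ≤ k := by positivity
      nlinarith
    · simp [mul_smul, Finset.smul_sum]
  · rintro ⟨α, h1, h2, rfl⟩
    have hmem0 : (0 : V → ℝ) ∈ rootPolyOn t h Set.univ :=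
      subset_convexHull ℝ _ (Or.inl rfl)
    have hmem : ∀ f, xvec t h f ∈ rootPolyOn t h Set.univ := fun f =>
      subset_convexHull ℝ _ (Or.inr ⟨f, trivial, rfl⟩)
    have hconv : Convex ℝ (rootPolyOn t h Set.univ) := convex_convexHull ℝ _
    rcases Nat.eq_zero_or_pos k with rfl | hk
    · refine ⟨0, hmem0, ?_⟩
      have : ∀ f ∈ Finset.univ, α f = 0 := by
        rw [← Finset.sum_eq_zero_iff_of_nonneg fun f _ => h1 f]
        exact le_antisymm (by simpa using h2) (Finset.sum_nonneg fun f _ => h1 f)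
      simp [fun f => this f (Finset.mem_univ f)]
    · have hk' : (0 : ℝ) < k := by exact_mod_cast hk
      refine ⟨∑ f, (α f / k) • xvec t h f, ?_, ?_⟩
      · have := hconv.sum_mem (t := (Finset.univ : Finset (Option E)))
          (w := fun o => o.elim (1 - ∑ f, α f / k) fun f => α f / k)
          (z := fun o => o.elim 0 fun f => xvec t h f) ?_ ?_ ?_
        · simpa [Fintype.sum_option] using this
        · rintro (_ | f) -
          · simp only [Option.elim]
            rw [← Finset.sum_div, sub_nonneg, div_le_one hk']; exact h2
          · exact div_nonneg (h1 f) hk'.le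
        · simp [Fintype.sum_option]
        · rintro (_ | f) -
          · exact hmem0
          · exact hmem f
      · simp only [Finset.smul_sum, smul_smul]
        refine Finset.sum_congr rfl fun f _ => ?_
        rw [mul_div_cancel₀ _ hk'.ne']

lemma pdim_rootPoly (t h : E → V) :
    pdim (rootPolyOn t h Set.univ) =
      Module.finrank ℝ (Submodule.span ℝ (Set.range (xvec t h))) := by
  have : vectorSpan ℝ (rootPolyOn t h Set.univ) = Submodule.span ℝ (Set.range (xvec t h)) := by
    rw [rootPolyOn, ← direction_affineSpan, affineSpan_convexHull, direction_affineSpan,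
      vectorSpan_eq_span_vsub_set_right ℝ (p := 0) (by simp)]
    simp
  rw [pdim, this]

open Classical in
/-- the indices with negative coordinate -/
noncomputable def negs (x : E → V → ℝ) (β : E → ℝ) (T : Finset E) : Finset E :=
  T.filter fun f => crd x T β f < 0

open Classical in
/-- the optimal bases -/
noncomputable def opts (x : E → V → ℝ) (w : E → ℝ) : Finset (Finset E) :=
  Finset.univ.filter fun T => Opt x w T

lemma mem_opts {x : E → V → ℝ} {w : E → ℝ} {T : Finset E} : T ∈ opts x w ↔ Opt x w T := by
  simp [opts]

lemma mem_negs {x : E → V → ℝ} {β : E → ℝ} {T : Finset E} {f : E} :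
    f ∈ negs x β T ↔ f ∈ T ∧ crd x T β f < 0 := by
  simp [negs]

/-- the integral version of `xvec` -/
def xint (t h : E → V) (f : E) : V → ℤ :=
  fun v => (if v = h f then 1 else 0) - (if v = t f then 1 else 0)

lemma xint_cast (t h : E → V) (f : E) (v : V) : (xint t h f v : ℝ) = xvec t h f v := by
  simp [xint, xvec]

lemma card_piAnti {α : Type*} [Fintype α] [DecidableEq α] (s : Finset α) (n : ℕ) :
    (Finset.piAntidiag s n).card = (s.card + n - 1).choose n := by
  rw [← Finset.card_finsuppAntidiag_nat_eq_choose]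
  symm
  refine Finset.card_bij (fun f _ => ⇑f) (fun f hf => ?_) (fun f _ g _ h => DFunLike.coe_injective h)
    (fun b hb => ⟨Finsupp.equivFunOnFinite.symm b, ?_, rfl⟩)
  · rw [Finset.mem_finsuppAntidiag] at hf
    rw [Finset.mem_piAntidiag]
    exact ⟨hf.1, fun i hi => hf.2 (Finsupp.mem_support_iff.mpr hi)⟩
  · rw [Finset.mem_piAntidiag] at hb
    rw [Finset.mem_finsuppAntidiag]
    exact ⟨hb.1, fun i hi => hb.2 i (Finsupp.mem_support_iff.mp hi)⟩

/-- lattice points of the half-open decomposition -/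
noncomputable def pt (t h : E → V) (β : E → ℝ) (T : Finset E) (b : Option E → ℕ) (f : E) : ℕ :=
  b (some f) + if f ∈ negs (xvec t h) β T then 1 else 0

structure Good (t h : E → V) (w β : E → ℝ) : Prop where
  wpos : ∀ f, 0 < w f
  gen : Gen (xvec t h) w
  one : ∀ T, Opt (xvec t h) w T → ∀ f, ∑ f', cf (xvec t h) T f f' ≤ 1
  βpos : ∀ f, 0 ≤ β f
  nd : ∀ T, Bas (xvec t h) T → ∀ f ∈ T, crd (xvec t h) T β f ≠ 0
  lt : ∀ T, Bas (xvec t h) T → ∀ f ∈ T, |crd (xvec t h) T β f| < 1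

lemma pt_supp {t h : E → V} {β : E → ℝ} {T : Finset E} {b : Option E → ℕ} 
    (hb : ∀ i, b i ≠ 0 → i ∈ Finset.insertNone T) : 
    SuppOn T fun f => (pt t h β T b f : ℝ) := by
  intro f hf
  have h1 : b (some f) = 0 := by
    by_contra hne
    exact hf (by simpa using hb (some f) hne)
  have h2 : f ∉ negs (xvec t h) β T := fun hm => hf (Finset.mem_filter.mp hm).1
  simp [pt, h1, h2]

lemma pt_sum {t h : E → V} {β : E → ℝ} {T : Finset E} {b : Option E → ℕ} 
    (hb : ∀ i, b i ≠ 0 → i ∈ Finset.insertNone T) : 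
    ∑ f, pt t h β T b f + b none = (negs (xvec t h) β T).card + (Finset.insertNone T).sum b := by
  have h1 : (Finset.insertNone T).sum b = ∑ i, b i := by
    apply Finset.sum_subset (Finset.subset_univ _)
    intro i _ hi
    by_contra hne
    exact hi (hb i hne)
  rw [h1, Fintype.sum_option]
  simp only [pt, Finset.sum_add_distrib]
  simp
  ring

lemma Good.latCount {t h : E → V} {w β : E → ℝ} (G : Good t h w β) (k : ℕ) :
    latCount (rootPolyOn t h Set.univ) k =
      ∑ T ∈ opts (xvec t h) w, if (negs (xvec t h) β T).card ≤ k then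
        (T.card + (k - (negs (xvec t h) β T).card)).choose T.card else 0 := by
  classical
  set x := xvec t h with hx
  let I : Finset (Σ _ : Finset E, Option E → ℕ) :=
    ((opts x w).filter fun T => (negs x β T).card ≤ k).sigma fun T =>
      Finset.piAntidiag (Finset.insertNone T) (k - (negs x β T).card)
  have hI : ∀ T b, (⟨T, b⟩ : Σ _ : Finset E, Option E → ℕ) ∈ I ↔
      Opt x w T ∧ (negs x β T).card ≤ k ∧
        (Finset.insertNone T).sum b = k - (negs x β T).card ∧
        ∀ i, b i ≠ 0 → i ∈ Finset.insertNone T := by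
    intro T b
    simp only [I, Finset.mem_sigma, Finset.mem_filter, opts, Finset.mem_univ, true_and,
      Finset.mem_piAntidiag, and_assoc]
  have hcard : I.card = ∑ T ∈ opts x w, if (negs x β T).card ≤ k then
        (T.card + (k - (negs x β T).card)).choose T.card else 0 := by
    rw [Finset.card_sigma, Finset.sum_filter]
    refine Finset.sum_congr rfl fun T _ => ?_
    split_ifs
    · rw [card_piAnti, Finset.card_insertNone, add_right_comm, Nat.add_sub_cancel,
        Nat.choose_symm_add]
    · rfl
  rw [← hcard, ← Nat.card_eq_finsetCard, _root_.latCount]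
  symm
  have hcast : ∀ a : E → ℕ, (fun v => ((∑ f, (a f : ℤ) * xint t h f v : ℤ) : ℝ)) =
      ∑ f, (a f : ℝ) • x f := by
    intro a
    ext v
    simp [xint_cast, hx]
  have hsum : ∀ T b, (⟨T, b⟩ : Σ _ : Finset E, Option E → ℕ) ∈ I →
      ∑ f, pt t h β T b f + b none = k := by
    intro T b hm
    rw [hI] at hm
    rw [pt_sum hm.2.2.2, hm.2.2.1]
    have := hm.2.1
    rw [← hx]
    omega
  refine Nat.card_eq_of_bijective (fun s : I =>
    (⟨fun v => ∑ f, (pt t h β s.1.1 s.1.2 f : ℤ) * xint t h f v, ?_⟩ :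
      {p : V → ℤ // (fun i => (p i : ℝ)) ∈ (k : ℝ) • rootPolyOn t h Set.univ})) ⟨?_, ?_⟩
  · rw [hcast, mem_rootPoly]
    refine ⟨_, fun f => by positivity, ?_, rfl⟩
    have := hsum s.1.1 s.1.2 s.2
    have h2 : ∑ f, pt t h β s.1.1 s.1.2 f ≤ k := by omega
    exact_mod_cast h2
  · rintro ⟨⟨S, a⟩, hS⟩ ⟨⟨T, b⟩, hT⟩ heq
    have hS' := (hI S a).1 hS
    have hT' := (hI T b).1 hT
    simp only [Subtype.mk.injEq] at heq
    have heq' : ∑ f, (pt t h β S a f : ℝ) • x f = ∑ f, (pt t h β T b f : ℝ) • x f := by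
      rw [← hcast, ← hcast]
      ext v
      exact congrArg _ (congrFun heq v)
    have hpos : ∀ (T : Finset E) (b : Option E → ℕ), Opt x w T → ∀ f ∈ T,
        0 < (pt t h β T b f : ℝ) + crd x T β f := by
      intro T b hT f hf
      have h1 := abs_lt.mp (G.lt T hT.1 f hf)
      have h2 := G.nd T hT.1 f hf
      rw [← hx] at h1 h2
      by_cases hn : crd x T β f < 0
      · have h3 : f ∈ negs (xvec t h) β T := Finset.mem_filter.mpr ⟨hf, hn⟩
        simp only [pt, if_pos h3]
        push_cast
        have : (0 : ℝ) ≤ b (some f) := by positivity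
        linarith
      · have h4 : 0 < crd x T β f := lt_of_le_of_ne (not_lt.mp hn) h2.symm
        positivity
    have hST : S = T := by
      refine Opt.unique G.gen hS'.1 hT'.1
        (a := fun f => (pt t h β S a f : ℝ) + crd x S β f)
        (b := fun f => (pt t h β T b f : ℝ) + crd x T β f) ?_ ?_
        (hpos S a hS'.1) (hpos T b hT'.1) ?_
      · intro f hf
        have := pt_supp (t := t) (h := h) (β := β) hS'.2.2.2 f hf
        simp only at this ⊢
        rw [this, hS'.1.1.crd_supp β f hf, add_zero]
      · intro f hf
        have := pt_supp (t := t) (h := h) (β := β) hT'.2.2.2 f hf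
        simp only at this ⊢
        rw [this, hT'.1.1.crd_supp β f hf, add_zero]
      · simp only [add_smul, Finset.sum_add_distrib]
        rw [← hx, hS'.1.1.crd_eq, hT'.1.1.crd_eq, heq']
    subst hST
    have hpt := hS'.1.1.1.uniq (pt_supp (t := t) (h := h) (β := β) hS'.2.2.2)
      (pt_supp (t := t) (h := h) (β := β) hT'.2.2.2) heq'
    have hpt' : ∀ f, pt t h β S a f = pt t h β S b f := fun f => by
      exact_mod_cast congrFun hpt f
    have hab : a = b := by
      ext i
      rcases i with _ | f
      · have h1 := hsum S a hS
        have h2 := hsum S b hT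
        simp only [hpt'] at h1
        omega
      · have := hpt' f
        simpa [pt] using this
    subst hab
    rfl
  · rintro ⟨p, hp⟩
    obtain ⟨α, hα, hαk, hpα⟩ := (mem_rootPoly t h k _).1 hp
    have hcrdZ : ∀ T, Bas x T → ∀ f, ∃ n : ℤ, crd x T α f = n := by
      intro T hT f
      exact hT.1.coord_int (hT.crd_supp α) (p := p) (by rw [hpα, ← hx, hT.crd_eq]) f
    obtain ⟨T, hT, hTpos⟩ := exists_opt G.wpos G.gen (α + β)
      (fun f => add_nonneg (hα f) (G.βpos f)) (fun T hT f hf h0 => by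
        rw [crd_add] at h0
        obtain ⟨n, hn⟩ := hcrdZ T hT f
        have h1 := abs_lt.mp (G.lt T hT f hf)
        have h2 := G.nd T hT f hf
        rw [← hx] at h0 h1 h2
        rw [hn] at h0
        have h3 : (n : ℝ) < 1 := by linarith
        have h4 : (-1 : ℝ) < n := by linarith
        have h5 : n < 1 := by exact_mod_cast h3
        have h6 : -1 < n := by exact_mod_cast h4
        have h7 : n = 0 := by omega
        rw [h7] at h0
        simp at h0
        exact h2 h0)
    rw [← hx] at hT hTpos
    have hb : ∀ f, ∃ m : ℕ, crd x T α f = (m : ℝ) + if f ∈ negs x β T then 1 else 0 := by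
      intro f
      by_cases hf : f ∈ T
      · obtain ⟨n, hn⟩ := hcrdZ T hT.1 f
        have h1 := abs_lt.mp (G.lt T hT.1 f hf)
        have h2 := hTpos f hf
        rw [← hx] at h1
        rw [crd_add, hn] at h2
        by_cases hneg : crd x T β f < 0
        · have h3 : f ∈ negs x β T := Finset.mem_filter.mpr ⟨hf, hneg⟩
          have h4 : (0 : ℝ) < n := by linarith
          have h5 : 0 < n := by exact_mod_cast h4
          refine ⟨(n - 1).toNat, ?_⟩
          have h6 : (((n - 1).toNat : ℤ) : ℝ) = ((n - 1 : ℤ) : ℝ) := by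
            rw [Int.toNat_of_nonneg (by omega)]
          rw [if_pos h3, hn]
          push_cast at h6
          linarith
        · have h3 : f ∉ negs x β T := fun hm => hneg (Finset.mem_filter.mp hm).2
          have h4 : (-1 : ℝ) < n := by linarith
          have h5 : -1 < n := by exact_mod_cast h4
          refine ⟨n.toNat, ?_⟩
          have h6 : ((n.toNat : ℤ) : ℝ) = (n : ℝ) := by
            rw [Int.toNat_of_nonneg (by omega)]
          rw [if_neg h3, hn]
          push_cast at h6
          linarith
      · have h3 : f ∉ negs x β T := fun hm => hf (Finset.mem_filter.mp hm).1
        exact ⟨0, by rw [if_neg h3, hT.1.crd_supp α f hf]; simp⟩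
    choose m hm using hb
    have hsumle : ∑ f, crd x T α f ≤ k := by
      have h1 := crd_sum x T α (fun _ => 1)
      simp only [mul_one] at h1
      rw [h1]
      refine le_trans (Finset.sum_le_sum fun f _ => ?_) hαk
      have := G.one T hT f
      rw [← hx] at this
      nlinarith [hα f]
    have hsum2 : ∑ f, m f + (negs x β T).card ≤ k := by
      simp only [hm, Finset.sum_add_distrib] at hsumle
      simp at hsumle
      exact_mod_cast hsumle
    let b : Option E → ℕ := fun o => o.elim (k - (negs x β T).card - ∑ f, m f) m
    have hmT : ∀ f, f ∉ T → m f = 0 := by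
      intro f hf
      have h1 := hm f
      rw [hT.1.crd_supp α f hf] at h1
      have h2 : (0 : ℝ) ≤ if f ∈ negs x β T then 1 else 0 := by split_ifs <;> simp
      have h3 : (0 : ℝ) ≤ m f := by positivity
      have h4 : (m f : ℝ) = 0 := by linarith
      exact_mod_cast h4
    have hbI : (⟨T, b⟩ : Σ _ : Finset E, Option E → ℕ) ∈ I := by
      rw [hI]
      refine ⟨hT, by omega, ?_, ?_⟩
      · rw [Finset.sum_insertNone]
        have : ∑ f ∈ T, b (some f) = ∑ f, m f :=
          Finset.sum_subset (Finset.subset_univ T) fun f _ hf => hmT f hf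
        rw [this]
        simp only [Option.elim]
        omega
      · rintro (_ | f) hne
        · simp
        · simp only [Finset.some_mem_insertNone]
          by_contra hf
          exact hne (hmT f hf)
    refine ⟨⟨⟨T, b⟩, hbI⟩, ?_⟩
    apply Subtype.ext
    ext v
    have h1 := congrFun (hcast (pt t h β T b)) v
    have h2 : ∀ f, (pt t h β T b f : ℝ) = crd x T α f := by
      intro f
      rw [hm]
      simp [pt, b, hx]
    simp only [h2] at h1
    rw [hT.1.crd_eq, hx, ← hpα] at h1
    have h3 : ∑ f, (pt t h β T b f : ℤ) * xint t h f v = p v := by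
      beta_reduce at h1
      exact_mod_cast h1
    exact h3

lemma Good.series {t h : E → V} {w β : E → ℝ} (G : Good t h w β) :
    (1 - PowerSeries.X) ^ (pdim (rootPolyOn t h Set.univ) + 1) *
      ehrSeries (rootPolyOn t h Set.univ) =
      ∑ T ∈ opts (xvec t h) w, (PowerSeries.X : PowerSeries ℤ) ^ (negs (xvec t h) β T).card := by
  set d := pdim (rootPolyOn t h Set.univ) with hd
  have hser : ehrSeries (rootPolyOn t h Set.univ) =
      (∑ T ∈ opts (xvec t h) w, (PowerSeries.X : PowerSeries ℤ) ^ (negs (xvec t h) β T).card) *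
        (PowerSeries.mk fun n => ((d + n).choose d : ℤ)) := by
    ext k
    rw [ehrSeries, PowerSeries.coeff_mk, G.latCount, Finset.sum_mul, map_sum]
    push_cast
    refine Finset.sum_congr rfl fun T hT => ?_
    have hB : Bas (xvec t h) T := (mem_opts.1 hT).1
    rw [PowerSeries.coeff_X_pow_mul', hB.card_eq, ← pdim_rootPoly, PowerSeries.coeff_mk]
  rw [hser, mul_comm, mul_assoc]
  have := PowerSeries.mk_add_choose_mul_one_sub_pow_eq_one ℤ d
  rw [this, mul_one]

lemma Good.coeff {t h : E → V} {w β : E → ℝ} (G : Good t h w β) {q : Polynomial ℤ}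
    (hq : IsHStar (rootPolyOn t h Set.univ) q) (i : ℕ) :
    q.coeff i = (((opts (xvec t h) w).filter
      fun T => (negs (xvec t h) β T).card = i).card : ℤ) := by
  have h1 := congrArg (PowerSeries.coeff i) (G.series.symm.trans hq)
  rw [PowerSeries.coeff_mk] at h1
  rw [← h1, map_sum, Finset.card_filter]
  push_cast
  refine Finset.sum_congr rfl fun T _ => ?_
  rw [PowerSeries.coeff_X_pow]
  simp [eq_comm]

lemma exists_generic {κ : Type*} [Finite κ] (L : κ → E → ℝ) (hL : ∀ i, L i ≠ 0)
    {U : Set (E → ℝ)} (hU : IsOpen U) (hne : U.Nonempty) :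
    ∃ u ∈ U, ∀ i, ∑ f, L i f * u f ≠ 0 := by
  have hd : Dense (⋂ i, {u : E → ℝ | ∑ f, L i f * u f ≠ 0}) := by
    apply dense_iInter_of_isOpen
    · intro i
      exact isOpen_ne_fun (by fun_prop) continuous_const
    · intro i
      let φ : (E → ℝ) →ₗ[ℝ] ℝ :=
        { toFun := fun u => ∑ f, L i f * u f
          map_add' := fun u v => by simp [mul_add, Finset.sum_add_distrib]
          map_smul' := fun a u => by
            simp only [Pi.smul_apply, smul_eq_mul, RingHom.id_apply, Finset.mul_sum]
            exact Finset.sum_congr rfl fun f _ => by ring }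
      have hs : {u : E → ℝ | ∑ f, L i f * u f ≠ 0} = ((LinearMap.ker φ : Set (E → ℝ)))ᶜ := by
        ext u
        simp [φ]
      rw [hs, ← interior_eq_empty_iff_dense_compl]
      by_contra hi
      have htop := Submodule.eq_top_of_nonempty_interior' _ (Set.nonempty_iff_ne_empty.mpr hi)
      apply hL i
      ext f
      have hm : (Pi.single f 1 : E → ℝ) ∈ LinearMap.ker φ := by rw [htop]; trivial
      have hm2 : ∑ g, L i g * (Pi.single f 1 : E → ℝ) g = 0 := hm
      simpa [Pi.single_apply] using hm2
  obtain ⟨u, hu, hu2⟩ := hd.inter_open_nonempty U hU hne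
  exact ⟨u, hu, fun i => by simpa using Set.mem_iInter.mp hu2 i⟩

lemma exists_w (x : E → V → ℝ) (w0 : E → ℝ) {ρ : ℝ} (hρ : 0 < ρ) :
    ∃ w : E → ℝ, (∀ f, |w f - w0 f| < ρ) ∧ Gen x w := by
  classical
  obtain ⟨w, hw, hw2⟩ := exists_generic
    (κ := {p : Finset E × E // Bas x p.1 ∧ p.2 ∉ p.1})
    (fun p g => (Pi.single p.1.2 1 : E → ℝ) g - cf x p.1.1 p.1.2 g)
    (fun p h0 => by
      have h1 := congrFun h0 p.1.2
      simp [p.2.1.cf_supp _ _ p.2.2] at h1)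
    (U := {w | ∀ f, |w f - w0 f| < ρ})
    (by
      simp only [Set.ofPred_forall]
      exact isOpen_iInter_of_finite fun f => isOpen_lt (by fun_prop) continuous_const)
    ⟨w0, fun f => by simpa using hρ⟩
  refine ⟨w, hw, fun T hT f hf h0 => hw2 ⟨(T, f), hT, hf⟩ ?_⟩
  simp only
  rw [rel_cost, h0, sub_self]

lemma exists_beta (x : E → V → ℝ) (e : E) :
    ∃ β : E → ℝ, (∀ f, 0 < β f) ∧ ∑ f, β f < 1 ∧ ∑ f, β f < 2 * β e ∧
      ∀ T, Bas x T → ∀ f ∈ T, crd x T β f ≠ 0 := by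
  classical
  have hN : (0 : ℝ) < 4 * (Fintype.card E + 1) := by positivity
  obtain ⟨β, hβ, hβ2⟩ := exists_generic
    (κ := {p : Finset E × E // Bas x p.1 ∧ p.2 ∈ p.1})
    (fun p g => cf x p.1.1 g p.1.2)
    (fun p h0 => by
      have h1 := congrFun h0 p.1.2
      simp [p.2.1.cf_self p.2.2] at h1)
    (U := {β | (∀ f, 0 < β f) ∧ ∑ f, β f < 1 ∧ ∑ f, β f < 2 * β e})
    (by
      have h1 : IsOpen {β : E → ℝ | ∀ f, 0 < β f} := by
        simp only [Set.ofPred_forall]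
        exact isOpen_iInter_of_finite fun f => isOpen_lt continuous_const (by fun_prop)
      have h2 : IsOpen {β : E → ℝ | ∑ f, β f < 1} :=
        isOpen_lt (by fun_prop) continuous_const
      have h3 : IsOpen {β : E → ℝ | ∑ f, β f < 2 * β e} :=
        isOpen_lt (by fun_prop) (by fun_prop)
      exact h1.inter (h2.inter h3))
    ⟨fun f => 1 / (4 * (Fintype.card E + 1)) + if f = e then 1 / 4 else 0, by
      have hs : ∑ f : E, ((1 : ℝ) / (4 * (Fintype.card E + 1)) + if f = e then 1 / 4 else 0)
          < 1 / 2 := by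
        rw [Finset.sum_add_distrib]
        simp only [Finset.sum_const, Finset.card_univ, nsmul_eq_mul, Finset.sum_ite_eq',
          Finset.mem_univ, if_true]
        have : (Fintype.card E : ℝ) * (1 / (4 * (Fintype.card E + 1))) < 1 / 4 := by
          rw [mul_one_div, div_lt_iff₀ hN]; linarith
        linarith
      refine ⟨fun f => ?_, by linarith, ?_⟩
      · have : (0 : ℝ) ≤ if f = e then 1 / 4 else 0 := by split_ifs <;> norm_num
        positivity
      · refine hs.trans ?_
        have : (0 : ℝ) < 1 / (4 * (Fintype.card E + 1)) := by positivity
        simp only [if_true]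
        linarith⟩
  refine ⟨β, hβ.1, hβ.2.1, hβ.2.2, fun T hT f hf h0 => hβ2 ⟨(T, f), hT, hf⟩ ?_⟩
  simpa [crd, mul_comm] using h0

lemma crd_abs_le {t h : E → V} {T : Finset E} (hT : Bas (xvec t h) T) {β : E → ℝ}
    (hβ : ∀ f, 0 < β f) (f : E) : |crd (xvec t h) T β f| ≤ ∑ g, β g := by
  refine (Finset.abs_sum_le_sum_abs _ _).trans (Finset.sum_le_sum fun g _ => ?_)
  rw [abs_mul, abs_of_pos (hβ g)]
  nlinarith [hT.cf_abs g f, hβ g]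

lemma crd_e_pos {t h : E → V} {T : Finset E} (hT : Bas (xvec t h) T) {β : E → ℝ} {e : E}
    (he : e ∈ T) (hβ : ∀ f, 0 < β f) (hs : ∑ f, β f < 2 * β e) :
    0 < crd (xvec t h) T β e := by
  have h1 : ∀ g ∈ Finset.univ, (if g = e then 2 * β e else 0) - β g ≤
      β g * cf (xvec t h) T g e := by
    intro g _
    by_cases hg : g = e
    · subst hg
      rw [hT.cf_self he]
      simp only [if_true, Pi.single_eq_same]
      linarith
    · rw [if_neg hg]
      have := (abs_le.mp (hT.cf_abs g e)).1
      nlinarith [hβ g]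
  have h2 := Finset.sum_le_sum h1
  rw [Finset.sum_sub_distrib] at h2
  simp only [Finset.sum_ite_eq', Finset.mem_univ, if_true] at h2
  rw [crd]
  linarith

lemma cf_sum_int {t h : E → V} {T : Finset E} (hT : Bas (xvec t h) T) (f : E) :
    ∃ n : ℤ, ∑ g, cf (xvec t h) T f g = n := by
  have : ∀ g, ∃ n : ℤ, cf (xvec t h) T f g = n := by
    intro g
    rcases hT.cf_pm f g with h | h | h
    · exact ⟨0, by simp [h]⟩
    · exact ⟨1, by simp [h]⟩
    · exact ⟨-1, by simp [h]⟩
  choose n hn using this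
  exact ⟨∑ g, n g, by push_cast; exact Finset.sum_congr rfl fun g _ => hn g⟩

lemma one_opt {t h : E → V} {w : E → ℝ} {e : E} {δ ρ : ℝ} (hδ0 : 0 < δ) (hδ : δ ≤ 1 / 8)
    (hρ : (Fintype.card E + 1) * ρ = δ / 8)
    (hw : ∀ f, |w f - if f = e then δ else 1| < ρ) {T : Finset E}
    (hT : Opt (xvec t h) w T) (f : E) :
    ∑ g, cf (xvec t h) T f g ≤ 1 ∧
      (f ≠ e → ∑ g, cf (xvec t h) T f g - cf (xvec t h) T f e ≤ 1) := by
  set c := cf (xvec t h) T f with hc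
  have h1 : ∀ g ∈ Finset.univ, c g - (if g = e then c e * (1 - δ) else 0) - ρ ≤ c g * w g := by
    intro g _
    have ha := hT.1.cf_abs f g
    rw [← hc] at ha
    have hb := hw g
    have hprod : |c g * (w g - if g = e then δ else 1)| ≤ ρ := by
      rw [abs_mul]
      nlinarith [abs_nonneg (c g), abs_nonneg (w g - if g = e then δ else 1)]
    have hp := (abs_le.mp hprod).1
    by_cases hg : g = e
    · subst hg
      simp only [if_true] at hp ⊢
      nlinarith
    · simp only [if_neg hg] at hp ⊢
      nlinarith
  have h2 := Finset.sum_le_sum h1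
  rw [Finset.sum_sub_distrib, Finset.sum_sub_distrib] at h2
  simp only [Finset.sum_ite_eq', Finset.mem_univ, if_true, Finset.sum_const, Finset.card_univ,
    nsmul_eq_mul] at h2
  have h3 := h2.trans (hT.2 f)
  have h4 := (abs_lt.mp (hw f)).2
  obtain ⟨n, hn⟩ := cf_sum_int hT.1 f
  rw [← hc] at hn
  rw [hn] at h3 ⊢
  have hpm := hT.1.cf_pm f e
  rw [← hc] at hpm
  by_cases hf : f = e
  · rw [if_pos hf] at h4
    refine ⟨?_, fun h => absurd hf h⟩
    rcases hpm with hp | hp | hp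
    · rw [hp] at h3
      have : (n : ℝ) < 1 := by linarith
      exact this.le
    · rw [hp] at h3
      have : (n : ℝ) < 2 := by linarith
      have : n < 2 := by exact_mod_cast this
      have : n ≤ 1 := by omega
      exact_mod_cast this
    · rw [hp] at h3
      have : (n : ℝ) < 1 := by linarith
      exact this.le
  · rw [if_neg hf] at h4
    rcases hpm with hp | hp | hp
    · rw [hp] at h3
      have : (n : ℝ) < 2 := by linarith
      have : n < 2 := by exact_mod_cast this
      have : n ≤ 1 := by omega
      have : (n : ℝ) ≤ 1 := by exact_mod_cast this
      rw [hp]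
      exact ⟨this, fun _ => by linarith⟩
    · rw [hp] at h3
      have : (n : ℝ) < 2 := by linarith
      have : n < 2 := by exact_mod_cast this
      have : n ≤ 1 := by omega
      have : (n : ℝ) ≤ 1 := by exact_mod_cast this
      rw [hp]
      exact ⟨this, fun _ => by linarith⟩
    · rw [hp] at h3
      have : (n : ℝ) < 1 := by linarith
      have : n < 1 := by exact_mod_cast this
      have : n ≤ 0 := by omega
      have : (n : ℝ) ≤ 0 := by exact_mod_cast this
      rw [hp]
      exact ⟨by linarith, fun _ => by linarith⟩

/-- tails in the contraction -/
def ct (t h : E → V) (e : E) : {f : E // f ≠ e} → V := fun f => cmap' t h e (t f.1)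

/-- heads in the contraction -/
def ch (t h : E → V) (e : E) : {f : E // f ≠ e} → V := fun f => cmap' t h e (h f.1)

lemma xvec_contr {t h : E → V} {e : E} (he : t e ≠ h e) (f : {f : E // f ≠ e}) :
    xvec (ct t h e) (ch t h e) f = xvec t h f.1 - xvec t h f.1 (h e) • xvec t h e := by
  have key : ∀ a v : V, (if v = cmap' t h e a then (1 : ℝ) else 0) =
      (if v = a then 1 else 0) - (if h e = a then 1 else 0) *
        ((if v = h e then 1 else 0) - (if v = t e then 1 else 0)) := by
    intro a v
    unfold cmap'
    by_cases ha : a = h e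
    · subst ha; simp [he]
    · simp [ha, Ne.symm ha]
  ext v
  have h1 := key (h f.1) v
  have h2 := key (t f.1) v
  show (if v = cmap' t h e (h f.1) then (1 : ℝ) else 0) -
      (if v = cmap' t h e (t f.1) then (1 : ℝ) else 0) =
    ((if v = h f.1 then (1 : ℝ) else 0) - (if v = t f.1 then (1 : ℝ) else 0)) -
      ((if h e = h f.1 then (1 : ℝ) else 0) - (if h e = t f.1 then (1 : ℝ) else 0)) *
        ((if v = h e then (1 : ℝ) else 0) - (if v = t e then (1 : ℝ) else 0))
  rw [h1, h2]
  ring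

lemma xvec_self {t h : E → V} {e : E} (he : t e ≠ h e) : xvec t h e (h e) = 1 := by
  simp [xvec, he.symm]

/-- lift of an edge set of the contraction -/
def lft (e : E) (T : Finset {f : E // f ≠ e}) : Finset E :=
  insert e (T.map (Function.Embedding.subtype _))

lemma mem_lft {e : E} {T : Finset {f : E // f ≠ e}} (f : {f : E // f ≠ e}) :
    f.1 ∈ lft e T ↔ f ∈ T := by
  have := f.2
  simp [lft, this]

lemma self_mem_lft (e : E) (T : Finset {f : E // f ≠ e}) : e ∈ lft e T := by simp [lft]

lemma lft_inj (e : E) : Function.Injective (lft (E := E) e) := by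
  intro S T hST
  ext f
  rw [← mem_lft, hST, mem_lft]

/-- extension of a coefficient vector -/
def xt (e : E) (c : {f : E // f ≠ e} → ℝ) (s : ℝ) (f : E) : ℝ :=
  if hf : f ≠ e then c ⟨f, hf⟩ else s

@[simp] lemma xt_self (e : E) (c : {f : E // f ≠ e} → ℝ) (s : ℝ) : xt e c s e = s := by
  simp [xt]

@[simp] lemma xt_ne (e : E) (c : {f : E // f ≠ e} → ℝ) (s : ℝ) (f : {f : E // f ≠ e}) :
    xt e c s f.1 = c f := by
  simp [xt, f.2]

lemma xt_supp {e : E} {T : Finset {f : E // f ≠ e}} {c : {f : E // f ≠ e} → ℝ} {s : ℝ}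
    (hc : SuppOn T c) : SuppOn (lft e T) (xt e c s) := by
  intro f hf
  by_cases hfe : f = e
  · subst hfe; exact absurd (self_mem_lft _ T) hf
  · have h1 := mem_lft (T := T) ⟨f, hfe⟩
    have h2 := xt_ne e c s ⟨f, hfe⟩
    simp only at h1 h2
    rw [h2]
    exact hc _ fun h => hf (h1.2 h)

lemma contr_sum {t h : E → V} {e : E} (he : t e ≠ h e) (c : {f : E // f ≠ e} → ℝ) :
    ∑ f, c f • xvec (ct t h e) (ch t h e) f =
      ∑ f : {f : E // f ≠ e}, c f • xvec t h f.1 -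
        (∑ f : {f : E // f ≠ e}, c f * xvec t h f.1 (h e)) • xvec t h e := by
  simp only [xvec_contr he, smul_sub, Finset.sum_sub_distrib, smul_smul, Finset.sum_smul]

lemma lft_span {t h : E → V} {e : E} (he : t e ≠ h e) (c : {f : E // f ≠ e} → ℝ)
    (f : {f : E // f ≠ e})
    (hf : xvec (ct t h e) (ch t h e) f = ∑ g, c g • xvec (ct t h e) (ch t h e) g) :
    xvec t h f.1 = ∑ g, xt e c (xvec t h f.1 (h e) -
      ∑ g : {f : E // f ≠ e}, c g * xvec t h g.1 (h e)) g • xvec t h g := by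
  rw [contr_sum he, xvec_contr he, sub_eq_iff_eq_add] at hf
  rw [Fintype.sum_eq_add_sum_subtype_ne _ e]
  simp only [xt_self, xt_ne]
  conv_lhs => rw [hf]
  rw [sub_smul]
  abel

lemma Bas.lft {t h : E → V} {e : E} (he : t e ≠ h e) {T : Finset {f : E // f ≠ e}}
    (hT : Bas (xvec (ct t h e) (ch t h e)) T) : Bas (xvec t h) (lft e T) := by
  constructor
  · intro c hc h0
    rw [Fintype.sum_eq_add_sum_subtype_ne _ e] at h0
    have h1 := congrFun h0 (h e)
    simp only [Pi.add_apply, Pi.smul_apply, smul_eq_mul, Finset.sum_apply, xvec_self he,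
      mul_one, Pi.zero_apply] at h1
    have h2 : (fun f : {f : E // f ≠ e} => c f.1) = 0 := by
      apply hT.1
      · intro f hf
        exact hc f.1 fun hm => hf ((mem_lft f).1 hm)
      · rw [contr_sum he]
        have h3 : ∑ f : {f : E // f ≠ e}, c f.1 * xvec t h f.1 (h e) = - c e := by linarith
        rw [h3, neg_smul, sub_neg_eq_add, add_comm, h0]
    have h4 : ∀ f : {f : E // f ≠ e}, c f.1 = 0 := fun f => congrFun h2 f
    simp only [h4] at h1
    ext f
    by_cases hfe : f = e
    · subst hfe; simpa using h1
    · exact h4 ⟨f, hfe⟩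
  · intro f
    by_cases hfe : f = e
    · subst hfe
      refine ⟨Pi.single f 1, fun g hg => ?_, by simp [Pi.single_apply, ite_smul]⟩
      rw [Pi.single_apply, if_neg]; rintro rfl; exact hg (self_mem_lft _ T)
    · obtain ⟨c, hc, hcf⟩ := hT.2 ⟨f, hfe⟩
      exact ⟨_, xt_supp hc, lft_span he c ⟨f, hfe⟩ hcf⟩

lemma cf_lft {t h : E → V} {e : E} (he : t e ≠ h e) {T : Finset {f : E // f ≠ e}}
    (hT : Bas (xvec (ct t h e) (ch t h e)) T) (f : {f : E // f ≠ e}) :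
    cf (xvec t h) (lft e T) f.1 = xt e (cf (xvec (ct t h e) (ch t h e)) T f)
      (xvec t h f.1 (h e) - ∑ g : {f : E // f ≠ e},
        cf (xvec (ct t h e) (ch t h e)) T f g * xvec t h g.1 (h e)) := by
  have hB := Bas.lft he hT
  refine hB.1.uniq (hB.cf_supp _) (xt_supp (hT.cf_supp f)) ?_
  rw [← hB.cf_eq, ← lft_span he _ f (hT.cf_eq f)]

/-- cost vector of the contraction -/
def wc (t h : E → V) (e : E) (w : E → ℝ) : {f : E // f ≠ e} → ℝ :=
  fun f => w f.1 - w e * xvec t h f.1 (h e)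

lemma cost_lft {t h : E → V} {e : E} (he : t e ≠ h e) {T : Finset {f : E // f ≠ e}}
    (hT : Bas (xvec (ct t h e) (ch t h e)) T) (w : E → ℝ) (f : {f : E // f ≠ e}) :
    ∑ g, cf (xvec t h) (lft e T) f.1 g * w g - w f.1 =
      ∑ g, cf (xvec (ct t h e) (ch t h e)) T f g * wc t h e w g - wc t h e w f := by
  rw [cf_lft he hT, Fintype.sum_eq_add_sum_subtype_ne _ e]
  simp only [xt_self, xt_ne, wc, mul_sub, Finset.sum_sub_distrib]
  have : ∑ g : {f : E // f ≠ e}, cf (xvec (ct t h e) (ch t h e)) T f g *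
      (w e * xvec t h g.1 (h e)) = w e * ∑ g : {f : E // f ≠ e},
        cf (xvec (ct t h e) (ch t h e)) T f g * xvec t h g.1 (h e) := by
    rw [Finset.mul_sum]
    exact Finset.sum_congr rfl fun g _ => by ring
  rw [this]
  ring

lemma Opt.lft {t h : E → V} {e : E} (he : t e ≠ h e) {T : Finset {f : E // f ≠ e}} {w : E → ℝ}
    (hT : Opt (xvec (ct t h e) (ch t h e)) (wc t h e w) T) : Opt (xvec t h) w (lft e T) := by
  refine ⟨Bas.lft he hT.1, fun f => ?_⟩
  by_cases hfe : f = e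
  · subst hfe
    rw [(Bas.lft he hT.1).cf_self (self_mem_lft _ T)]
    simp [Pi.single_apply]
  · have h1 := cost_lft he hT.1 w ⟨f, hfe⟩
    have h2 := hT.2 ⟨f, hfe⟩
    simp only at h1
    linarith

lemma crd_lft {t h : E → V} {e : E} (he : t e ≠ h e) {T : Finset {f : E // f ≠ e}}
    (hT : Bas (xvec (ct t h e) (ch t h e)) T) (β : E → ℝ) (f : {f : E // f ≠ e}) :
    crd (xvec t h) (lft e T) β f.1 =
      crd (xvec (ct t h e) (ch t h e)) T (fun g => β g.1) f := by
  rw [crd, crd, Fintype.sum_eq_add_sum_subtype_ne _ e,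
    (Bas.lft he hT).cf_self (self_mem_lft _ T)]
  simp [cf_lft he hT, f.2]

lemma negs_lft {t h : E → V} {e : E} (he : t e ≠ h e) {T : Finset {f : E // f ≠ e}}
    (hT : Bas (xvec (ct t h e) (ch t h e)) T) {β : E → ℝ}
    (hβ : ∀ f, 0 < β f) (hs : ∑ f, β f < 2 * β e) :
    (negs (xvec t h) β (lft e T)).card =
      (negs (xvec (ct t h e) (ch t h e)) (fun g => β g.1) T).card := by
  rw [← Finset.card_map (Function.Embedding.subtype _)]
  congr 1
  ext f
  by_cases hfe : f = e
  · subst hfe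
    have := crd_e_pos (Bas.lft he hT) (self_mem_lft _ T) hβ hs
    simp [mem_negs, this.le]
  · have h1 := crd_lft he hT β ⟨f, hfe⟩
    have h2 := mem_lft (T := T) ⟨f, hfe⟩
    simp only at h1 h2
    simp [mem_negs, h1, h2, hfe]

lemma nonloop_case (t h : E → V) (e : E) (he : t e ≠ h e) (p q : Polynomial ℤ)
    (hp : IsHStar (rootPolyOn (ct t h e) (ch t h e) Set.univ) p)
    (hq : IsHStar (rootPolyOn t h Set.univ) q) (i : ℕ) : p.coeff i ≤ q.coeff i := by
  classical
  obtain ⟨β, hβ, hβ1, hβe, hnd⟩ := exists_beta (xvec t h) e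
  set δ : ℝ := 1 / 8 with hδ
  set ρ : ℝ := δ / 8 / (Fintype.card E + 1) with hρ
  have hN : (0 : ℝ) < Fintype.card E + 1 := by positivity
  have hρ0 : 0 < ρ := by positivity
  have hρ1 : (Fintype.card E + 1) * ρ = δ / 8 := by rw [hρ]; field_simp
  have hρ2 : ρ ≤ 1 / 64 := by
    have : ρ ≤ δ / 8 := div_le_self (by positivity) (by
      have : (0 : ℝ) ≤ Fintype.card E := by positivity
      linarith)
    linarith
  clear_value ρ δ
  obtain ⟨w, hw, hgen⟩ := exists_w (xvec t h) (fun f => if f = e then δ else 1) hρ0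
  have hwe := abs_lt.mp (hw e)
  simp only [if_true] at hwe
  obtain ⟨hwe1, hwe2⟩ := hwe
  have hwe0 : 0 < w e := by linarith
  have hwf : ∀ f, f ≠ e → 1 - ρ < w f := fun f hf => by
    have := (abs_lt.mp (hw f)).1
    simp only [if_neg hf] at this
    linarith
  have hone := fun T (hT : Opt (xvec t h) w T) =>
    one_opt (e := e) (δ := δ) (ρ := ρ) (by norm_num [hδ]) hδ.le hρ1 hw hT
  have G : Good t h w β :=
    { wpos := fun f => by
        by_cases hf : f = e
        · rw [hf]; exact hwe0
        · have := hwf f hf; linarith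
      gen := hgen
      one := fun T hT f => (hone T hT f).1
      βpos := fun f => (hβ f).le
      nd := hnd
      lt := fun T hT f _ => (crd_abs_le hT hβ f).trans_lt hβ1 }
  have G' : Good (ct t h e) (ch t h e) (wc t h e w) (fun f => β f.1) :=
    { wpos := fun f => by
        have h1 := hwf f.1 f.2
        have h2 : xvec t h f.1 (h e) ≤ 1 := by
          unfold xvec; split_ifs <;> norm_num
        have h3 : w e * xvec t h f.1 (h e) ≤ w e * 1 := mul_le_mul_of_nonneg_left h2 hwe0.le
        unfold wc
        linarith
      gen := fun T hT f hf h0 => by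
        refine hgen _ (Bas.lft he hT) f.1 (fun hm => hf ((mem_lft f).1 hm)) ?_
        have := cost_lft he hT w f
        linarith
      one := fun T hT f => by
        have h1 := (hone _ (Opt.lft he hT) f.1).2 f.2
        rw [cf_lft he hT.1, Fintype.sum_eq_add_sum_subtype_ne _ e] at h1
        simpa using h1
      βpos := fun f => (hβ f.1).le
      nd := fun T hT f hf => by
        rw [← crd_lft he hT]
        exact hnd _ (Bas.lft he hT) _ ((mem_lft f).2 hf)
      lt := fun T hT f hf => by
        rw [← crd_lft he hT]
        exact (crd_abs_le (Bas.lft he hT) hβ _).trans_lt hβ1 }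
  rw [G.coeff hq, G'.coeff hp]
  norm_cast
  apply Finset.card_le_card_of_injOn (lft e)
  · intro T hT
    simp only [Finset.coe_filter, Set.mem_ofPred_eq, mem_opts] at hT ⊢
    exact ⟨Opt.lft he hT.1, by rw [negs_lft he hT.1.1 hβ hβe]; exact hT.2⟩
  · exact (lft_inj e).injOn

lemma loop_case (t h : E → V) (e : E) (he : t e = h e) :
    rootPolyOn (ct t h e) (ch t h e) Set.univ = rootPolyOn t h Set.univ := by
  have hc : ∀ v, cmap' t h e v = v := fun v => by simp [cmap', he]
  have hx : ∀ f, xvec (ct t h e) (ch t h e) f = xvec t h f.1 := fun f => by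
    have h1 : ct t h e f = t f.1 := hc _
    have h2 : ch t h e f = h f.1 := hc _
    ext v
    simp only [xvec, h1, h2]
  have h0 : xvec t h e = 0 := by ext v; simp [xvec, he]
  unfold rootPolyOn
  congr 1
  ext z
  constructor
  · rintro (hz | ⟨f, -, rfl⟩)
    · exact Or.inl hz
    · exact Or.inr ⟨f.1, trivial, (hx f).symm⟩
  · rintro (hz | ⟨f, -, rfl⟩)
    · exact Or.inl hz
    · by_cases hf : f = e
      · subst hf; exact Or.inl h0
      · exact Or.inr ⟨⟨f, hf⟩, trivial, hx _⟩
/-- the `h^*`-polynomial of `Q̃_{D/e}` is coefficientwise at most that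
of `Q̃_D`.  The contraction `D/e` has edge set `E - e` and endpoint maps composed
with the vertex identification `cmap'`; its extended root polytope is realized in
`ℝ^V` inside the coordinate subspace of the merged vertex set, which changes neither
the lattice-point counts nor the dimension. -/
theorem stmt11 (t h : E → V) (hconn : (underlyingOn t h Set.univ).Connected) (e : E)
    (p q : Polynomial ℤ)
    (hp : IsHStar (rootPolyOn (fun f : {f : E // f ≠ e} => cmap' t h e (t f.1))
      (fun f : {f : E // f ≠ e} => cmap' t h e (h f.1)) Set.univ) p)
    (hq : IsHStar (rootPolyOn t h Set.univ) q) :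
    ∀ i, p.coeff i ≤ q.coeff i := by
  intro i
  by_cases he : t e = h e
  · have hp' : IsHStar (rootPolyOn (ct t h e) (ch t h e) Set.univ) p := hp
    rw [loop_case t h e he] at hp'
    have h1 := congrArg (PowerSeries.coeff i) (hp'.symm.trans hq)
    rw [PowerSeries.coeff_mk, PowerSeries.coeff_mk] at h1
    exact h1.le
  · exact nonloop_case t h e he p q hp hq i

end Contraction
end
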